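/- arXiv:2006.11420 — 7 statements merged into one kernel-verified Lean document; each statement's English description precedes it below -/
import Mathlib

section
/- Let φ : ℝ → ℝ be a bi-Lipschitz homeomorphism such that g ∘ φ = f for some nonconstant real polynomial functions f, g : ℝ → ℝ. Then φ is differentiable on ℝ and the function t ↦ φ(t) − t·φ′(t) is bounded on ℝ; moreover the limit of φ(t) − t·φ′(t) as |t| → +∞ exists and is finite. -/
open Filter Topology

lemma aux_deg {l : Filter ℝ} [l.NeBot] {x y A B : ℝ → ℝ} {a b K : ℝ} {m k : ℕ}
    (hK : 0 < K) (hx : Tendsto x l (𝓝 0)) 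
    (hy0 : ∀ᶠ t in l, y t ≠ 0) (hxy : ∀ᶠ t in l, |x t| ≤ K * |y t|)
    (hA : Tendsto A l (𝓝 a)) (hB : Tendsto B l (𝓝 b)) (hb : b ≠ 0)
    (h : ∀ᶠ t in l, x t ^ m * A t = y t ^ k * B t) : m ≤ k := by
  by_contra! hlt
  obtain ⟨j, rfl⟩ := Nat.exists_eq_add_of_lt hlt
  have h1 : Tendsto (fun t => K ^ k * (|x t| ^ (j+1) * |A t|)) l (𝓝 (K ^ k * (|0| ^ (j+1) * |a|))) :=
    ((hx.abs.pow (j+1)).mul hA.abs).const_mul _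
  have h2 : |b| ≤ K ^ k * (|0| ^ (j+1) * |a|) := by
    refine le_of_tendsto_of_tendsto hB.abs h1 ?_
    filter_upwards [hy0, hxy, h] with t h0 h1 h2
    have hyp : 0 < |y t| ^ k := by positivity
    have h3 : |y t| ^ k * |B t| = |x t| ^ k * (|x t| ^ (j+1) * |A t|) := by
      rw [← abs_pow, ← abs_mul, ← h2, abs_mul, abs_pow]; ring
    have h4 : |x t| ^ k ≤ K ^ k * |y t| ^ k := by
      rw [← mul_pow]; gcongr
    have h5 : |y t| ^ k * |B t| ≤ |y t| ^ k * (K ^ k * (|x t| ^ (j+1) * |A t|)) := by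
      rw [h3]
      calc _ ≤ (K ^ k * |y t| ^ k) * (|x t| ^ (j+1) * |A t|) := by gcongr
        _ = _ := by ring
    exact le_of_mul_le_mul_left h5 hyp
  have : |b| ≤ 0 := by simpa using h2
  exact hb (abs_nonpos_iff.mp this)

lemma aux_lim {l : Filter ℝ} [l.NeBot] {x y A B : ℝ → ℝ} {a b K : ℝ} {m k : ℕ}
    (hK : 0 < K) (hx : Tendsto x l (𝓝 0)) (hy : Tendsto y l (𝓝 0))
    (hx0 : ∀ᶠ t in l, x t ≠ 0)
    (hy0 : ∀ᶠ t in l, y t ≠ 0) (hxy : ∀ᶠ t in l, |x t| ≤ K * |y t|)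
    (hyx : ∀ᶠ t in l, |y t| ≤ K * |x t|)
    (hpos : ∀ᶠ t in l, 0 ≤ y t / x t)
    (hA : Tendsto A l (𝓝 a)) (ha : a ≠ 0) (hB : Tendsto B l (𝓝 b)) (hb : b ≠ 0)
    (hk : k ≠ 0)
    (h : ∀ᶠ t in l, x t ^ m * A t = y t ^ k * B t) :
    m = k ∧ ∃ c, Tendsto (fun t => y t / x t) l (𝓝 c) := by
  have e1 : m ≤ k := aux_deg hK hx hy0 hxy hA hB hb h
  have e2 : k ≤ m := aux_deg hK hy hx0 hyx hB hA ha (h.mono fun t ht => ht.symm)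
  obtain rfl : m = k := le_antisymm e1 e2
  refine ⟨rfl, (a / b) ^ ((m : ℝ)⁻¹), ?_⟩
  have h1 := (hA.div hB hb).rpow_const (p := (m : ℝ)⁻¹) (Or.inr (by positivity))
  refine h1.congr' ?_
  filter_upwards [hx0, hy0, hpos, h, hB.eventually_ne hb] with t h0 h1 h2 h3 h4
  have : A t / B t = (y t / x t) ^ m := by
    rw [div_pow, div_eq_div_iff h4 (pow_ne_zero _ h0)]; linarith
  simp only [Pi.div_apply]
  rw [this, Real.pow_rpow_inv_natCast h2 hk]

lemma aux_poly (P : Polynomial ℝ) (n : ℕ) (h : P.natDegree ≤ n) :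
    Tendsto (fun t => P.eval t / t ^ n) (Bornology.cobounded ℝ) (𝓝 (P.coeff n)) := by
  have h1 : Tendsto (fun t : ℝ => (P.reflect n).eval t⁻¹) (Bornology.cobounded ℝ)
      (𝓝 ((P.reflect n).eval 0)) :=
    ((P.reflect n).continuous.tendsto 0).comp tendsto_inv₀_cobounded
  have h2 : (P.reflect n).eval 0 = P.coeff n := by
    rw [← Polynomial.coeff_zero_eq_eval_zero, Polynomial.coeff_reflect]
    simp [Polynomial.revAt_le]
  rw [h2] at h1
  refine h1.congr' ?_
  filter_upwards [Bornology.eventually_ne_cobounded (0:ℝ)] with t ht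
  letI := invertibleOfNonzero ht
  have := Polynomial.eval₂_reflect_mul_pow (RingHom.id ℝ) t n P h
  simp only [invOf_eq_inv] at this
  rw [eq_div_iff (pow_ne_zero _ ht)]
  exact this

lemma aux_fac (P : Polynomial ℝ) (hP : 1 ≤ P.natDegree) (a : ℝ) :
    ∃ (m : ℕ) (Q : Polynomial ℝ), m ≠ 0 ∧ Q.eval a ≠ 0 ∧
      ∀ t, P.eval t - P.eval a = (t - a) ^ m * Q.eval t := by
  have hne : P - Polynomial.C (P.eval a) ≠ 0 := by
    intro h
    have : P.natDegree = 0 := by rw [sub_eq_zero.mp h]; simp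
    omega
  obtain ⟨Q, h1, h2⟩ := Polynomial.exists_eq_pow_rootMultiplicity_mul_and_not_dvd _ hne a
  refine ⟨Polynomial.rootMultiplicity a (P - Polynomial.C (Polynomial.eval a P)), Q, ?_, ?_, ?_⟩
  · exact ((Polynomial.rootMultiplicity_pos hne).mpr (by simp)).ne'
  · intro h; exact h2 (Polynomial.dvd_iff_isRoot.mpr h)
  · intro t
    have := congrArg (Polynomial.eval t) h1
    simpa using this

lemma aux_R (P : Polynomial ℝ) (n : ℕ) (h : P.natDegree = n + 1) :
    (Polynomial.C ((n:ℝ)+1) * P - Polynomial.X * P.derivative).natDegree ≤ n := by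
  rw [Polynomial.natDegree_le_iff_coeff_eq_zero]
  intro N hN
  obtain ⟨j, rfl⟩ := Nat.exists_eq_add_of_lt hN
  rw [Polynomial.coeff_sub, Polynomial.coeff_C_mul, Polynomial.coeff_X_mul,
    Polynomial.coeff_derivative]
  rcases Nat.eq_zero_or_pos j with rfl | hj
  · push_cast; ring_nf
  · rw [Polynomial.coeff_eq_zero_of_natDegree_lt (by omega)]; ring

lemma aux_main (φ : ℝ → ℝ) (K : ℝ) (hK : 0 < K)
    (h1 : ∀ s t, s < t → φ t - φ s ≤ K * (t - s))
    (h2 : ∀ s t, s < t → t - s ≤ K * (φ t - φ s))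
    (p q : Polynomial ℝ) (hp : 1 ≤ p.natDegree) (hq : 1 ≤ q.natDegree)
    (heq : ∀ t : ℝ, q.eval (φ t) = p.eval t) :
    Differentiable ℝ φ ∧
    (∃ M : ℝ, ∀ t : ℝ, |φ t - t * deriv φ t| ≤ M) ∧
    ∃ L : ℝ, Tendsto (fun t => φ t - t * deriv φ t) (Bornology.cobounded ℝ) (𝓝 L) := by
  have hmono : StrictMono φ := by
    intro s t hst
    have := h2 s t hst
    by_contra! hc
    nlinarith
  have a1 : ∀ s t, |φ t - φ s| ≤ K * |t - s| := by
    intro s t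
    rcases lt_trichotomy s t with h | rfl | h
    · rw [abs_of_pos (sub_pos.2 h), abs_of_pos (sub_pos.2 (hmono h))]; exact h1 _ _ h
    · simp
    · rw [abs_of_neg (sub_neg.2 h), abs_of_neg (sub_neg.2 (hmono h))]
      have := h1 _ _ h; linarith
  have a2 : ∀ s t, |t - s| ≤ K * |φ t - φ s| := by
    intro s t
    rcases lt_trichotomy s t with h | rfl | h
    · rw [abs_of_pos (sub_pos.2 h), abs_of_pos (sub_pos.2 (hmono h))]; exact h2 _ _ h
    · simp
    · rw [abs_of_neg (sub_neg.2 h), abs_of_neg (sub_neg.2 (hmono h))]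
      have := h2 _ _ h; linarith
  have hLip : LipschitzWith ⟨K, hK.le⟩ φ :=
    LipschitzWith.of_dist_le_mul fun s t => by
      rw [Real.dist_eq, Real.dist_eq]; exact a1 t s
  have hcont := hLip.continuous
  have hdiff : Differentiable ℝ φ := by
    intro t0
    obtain ⟨m, P, hm, hP, hpf⟩ := aux_fac p hp t0
    obtain ⟨k, Q, hk, hQ, hqf⟩ := aux_fac q hq (φ t0)
    have hid : Tendsto (fun t : ℝ => t) (𝓝[≠] t0) (𝓝 t0) := tendsto_nhdsWithin_of_tendsto_nhds tendsto_id
    have hphi : Tendsto φ (𝓝[≠] t0) (𝓝 (φ t0)) := (hcont.tendsto t0).comp hid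
    have hne : ∀ᶠ t in 𝓝[≠] t0, t ≠ t0 := eventually_mem_nhdsWithin
    obtain ⟨-, c, hc⟩ := aux_lim (l := 𝓝[≠] t0) (x := fun t => t - t0) (y := fun t => φ t - φ t0)
      (A := fun t => P.eval t) (B := fun t => Q.eval (φ t)) (a := P.eval t0) (b := Q.eval (φ t0))
      (m := m) (k := k) hK (by simpa using hid.sub_const t0) (by simpa using hphi.sub_const (φ t0))
      (hne.mono fun t ht => sub_ne_zero.2 ht)
      (hne.mono fun t ht => sub_ne_zero.2 (hmono.injective.ne ht))
      (Eventually.of_forall fun t => a2 _ _) (Eventually.of_forall fun t => a1 _ _)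
      (hne.mono fun t ht => by
        rcases lt_or_gt_of_ne ht with h | h
        · exact div_nonneg_of_nonpos (sub_neg.2 (hmono h)).le (sub_neg.2 h).le
        · exact div_nonneg (sub_pos.2 (hmono h)).le (sub_pos.2 h).le)
      ((P.continuous.tendsto t0).comp hid) hP ((Q.continuous.tendsto _).comp hphi) hQ hk
      (Eventually.of_forall fun t => by
        show (t - t0) ^ m * P.eval t = (φ t - φ t0) ^ k * Q.eval (φ t)
        rw [← hpf, ← hqf, heq, heq])
    have : HasDerivAt φ c t0 := by
      rw [hasDerivAt_iff_tendsto_slope]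
      refine hc.congr fun t => ?_
      rw [slope_def_field]
    exact this.differentiableAt
  have hlim : ∃ L : ℝ, Tendsto (fun t => φ t - t * deriv φ t) (Bornology.cobounded ℝ) (𝓝 L) := by
    have hbig : ∀ C : ℝ, ∀ᶠ t : ℝ in Bornology.cobounded ℝ, C ≤ |t| := fun C =>
      (tendsto_norm_cobounded_atTop (E := ℝ)).eventually_ge_atTop C
    have hphi : Tendsto φ (Bornology.cobounded ℝ) (Bornology.cobounded ℝ) := by
      rw [← tendsto_norm_atTop_iff_cobounded, tendsto_atTop]
      intro C
      filter_upwards [hbig (K * (C + |φ 0|))] with t ht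
      have := a2 0 t
      have h3 := abs_sub (φ t) (φ 0)
      rw [sub_zero] at this
      have h4 : K * (C + |φ 0|) ≤ K * (|φ t| + |φ 0|) := by nlinarith
      have := le_of_mul_le_mul_left h4 hK
      rw [Real.norm_eq_abs]; linarith
    have ht0 := Bornology.eventually_ne_cobounded (0:ℝ)
    have hphi0 := hphi.eventually ht0
    have hp0 : p.leadingCoeff ≠ 0 := by
      rw [Polynomial.leadingCoeff_ne_zero]; rintro rfl; simp at hp
    have hq0 : q.leadingCoeff ≠ 0 := by
      rw [Polynomial.leadingCoeff_ne_zero]; rintro rfl; simp at hq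
    have b1 : ∀ᶠ t in Bornology.cobounded ℝ, |φ t| ≤ (K + 1) * |t| := by
      filter_upwards [hbig |φ 0|] with t ht
      have := a1 0 t
      have h3 := abs_sub_abs_le_abs_sub (φ t) (φ 0)
      rw [sub_zero] at this
      linarith
    have b2 : ∀ᶠ t in Bornology.cobounded ℝ, |t| ≤ (2 * K + 1) * |φ t| := by
      filter_upwards [hphi.eventually (hbig |φ 0|)] with t ht
      have := a2 0 t
      have h3 := abs_sub (φ t) (φ 0)
      rw [sub_zero] at this
      have := abs_nonneg (φ t)
      nlinarith
    have b3 : ∀ᶠ t in Bornology.cobounded ℝ, 0 ≤ t / φ t := by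
      filter_upwards [hbig (K * |φ 0|), ht0] with t ht h0
      rcases lt_or_gt_of_ne h0 with h | h
      · apply div_nonneg_of_nonpos h.le
        have h3 := h2 _ _ h
        rw [abs_of_neg h] at ht
        have : K * |φ 0| ≤ K * (φ 0 - φ t) := by linarith
        have := le_of_mul_le_mul_left this hK
        have := le_abs_self (φ 0)
        linarith
      · apply div_nonneg h.le
        have h3 := h2 _ _ h
        rw [abs_of_pos h] at ht
        have : K * |φ 0| ≤ K * (φ t - φ 0) := by linarith
        have := le_of_mul_le_mul_left this hK
        have := neg_abs_le (φ 0)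
        linarith
    have hqlim : Tendsto (fun t => q.eval (φ t) / φ t ^ q.natDegree) (Bornology.cobounded ℝ)
      (𝓝 q.leadingCoeff) := (aux_poly q _ le_rfl).comp hphi
    obtain ⟨hdeg, c, hc⟩ := aux_lim (l := Bornology.cobounded ℝ) (x := fun t => t⁻¹)
      (y := fun t => (φ t)⁻¹) (K := 2 * K + 1) (m := p.natDegree) (k := q.natDegree)
      (by positivity)
      tendsto_inv₀_cobounded (tendsto_inv₀_cobounded.comp hphi)
      (ht0.mono fun t ht => inv_ne_zero ht) (hphi0.mono fun t ht => inv_ne_zero ht)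
      (by
        filter_upwards [b1, ht0, hphi0] with t h h0 h0'
        have : 0 < |t| := abs_pos.2 h0
        have : 0 < |φ t| := abs_pos.2 h0'
        rw [abs_inv, abs_inv, ← div_eq_mul_inv, inv_eq_one_div, div_le_div_iff₀ (by positivity) (by positivity)]
        nlinarith)
      (by
        filter_upwards [b2, ht0, hphi0] with t h h0 h0'
        have : 0 < |t| := abs_pos.2 h0
        have : 0 < |φ t| := abs_pos.2 h0'
        rw [abs_inv, abs_inv, ← div_eq_mul_inv, inv_eq_one_div, div_le_div_iff₀ (by positivity) (by positivity)]
        nlinarith)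
      (b3.mono fun t ht => by
        have : (φ t)⁻¹ / t⁻¹ = t / φ t := by rw [div_inv_eq_mul]; ring
        rw [this]; exact ht)
      hqlim hq0 (aux_poly p _ le_rfl) hp0 (by omega)
      (by
        filter_upwards with t
        rw [heq]; simp only [div_eq_mul_inv, inv_pow]; ring)
    obtain ⟨n, hn⟩ : ∃ n, q.natDegree = n + 1 := ⟨q.natDegree - 1, by omega⟩
    rw [hn] at hdeg
    have c1 := aux_poly _ _ (aux_R p n hdeg)
    have c2 := (aux_poly _ _ (aux_R q n hn)).comp hphi
    have c3 := (aux_poly q.derivative n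
      ((Polynomial.natDegree_derivative_le q).trans (by omega))).comp hphi
    have hne : q.derivative.coeff n ≠ 0 := by
      rw [Polynomial.coeff_derivative]
      rw [Polynomial.leadingCoeff, hn] at hq0
      exact mul_ne_zero hq0 (by positivity)
    have c4 := ((c1.mul (hc.pow n)).sub c2).div c3 hne
    refine ⟨_, c4.congr' ?_⟩
    filter_upwards [ht0, hphi0, c3.eventually_ne hne] with t h0 h0' hd
    have hd' : q.derivative.eval (φ t) ≠ 0 := by
      intro h; apply hd; simp [h]
    have hder : q.derivative.eval (φ t) * deriv φ t = p.derivative.eval t := by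
      have e1 : HasDerivAt (fun t => q.eval (φ t)) (q.derivative.eval (φ t) * deriv φ t) t :=
        (q.hasDerivAt (φ t)).comp t (hdiff t).hasDerivAt
      have e2 : (fun t => q.eval (φ t)) = fun t => p.eval t := funext heq
      rw [e2] at e1
      exact e1.unique (p.hasDerivAt t)
    have hq' := heq t
    simp only [Pi.div_apply, Function.comp_apply, Polynomial.eval_sub, Polynomial.eval_mul,
      Polynomial.eval_C, Polynomial.eval_X]
    rw [← hder, ← hq']
    have hs : (φ t)⁻¹ / t⁻¹ = t / φ t := by rw [div_inv_eq_mul]; ring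
    rw [hs, div_pow]
    field_simp
    ring
  refine ⟨hdiff, ?_, hlim⟩
  obtain ⟨L, hL⟩ := hlim
  have hb : ∀ᶠ t in Bornology.cobounded ℝ, |φ t - t * deriv φ t| < |L| + 1 :=
    hL.abs.eventually_lt_const (by linarith)
  obtain ⟨r, -, hr⟩ := (Metric.hasBasis_cobounded_compl_closedBall (0:ℝ)).eventually_iff.mp hb
  refine ⟨|L| + 1 + |φ 0| + 2 * (K * |r|), fun t => ?_⟩
  have n1 := abs_nonneg L
  have n2 := abs_nonneg (φ 0)
  have n3 : 0 ≤ K * |r| := by positivity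
  by_cases ht : |t| ≤ r
  · have ht' : |t| ≤ |r| := ht.trans (le_abs_self r)
    have d1 : |deriv φ t| ≤ K := norm_deriv_le_of_lipschitz hLip
    have d2 := a1 0 t
    rw [sub_zero] at d2
    have d3 := abs_sub_abs_le_abs_sub (φ t) (φ 0)
    have d4 := abs_sub (φ t) (t * deriv φ t)
    have d5 : |t * deriv φ t| ≤ K * |r| := by
      rw [abs_mul, mul_comm]; gcongr
    have d6 : K * |t| ≤ K * |r| := by gcongr
    linarith
  · have := hr (x := t) (by simpa using ht)
    linarith

/-- If `φ` is a bi-Lipschitz homeomorphism of `ℝ` with `g ∘ φ = f` for nonconstant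
polynomial functions `f, g`, then `φ` is differentiable, `φ(t) − t·φ′(t)` is bounded,
and `φ(t) − t·φ′(t)` has a finite limit as `|t| → +∞`. -/
theorem stmt_12 (φ : ℝ → ℝ) (hφbij : Function.Bijective φ)
    (hφlip : ∃ K : NNReal, LipschitzWith K φ)
    (hφinv : ∃ K : NNReal, LipschitzWith K (Function.invFun φ))
    (p q : Polynomial ℝ) (hp : 1 ≤ p.natDegree) (hq : 1 ≤ q.natDegree)
    (heq : ∀ t : ℝ, q.eval (φ t) = p.eval t) :
    Differentiable ℝ φ ∧
    (∃ M : ℝ, ∀ t : ℝ, |φ t - t * deriv φ t| ≤ M) ∧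
    ∃ L : ℝ, Tendsto (fun t => φ t - t * deriv φ t) atTop (𝓝 L) ∧
      Tendsto (fun t => φ t - t * deriv φ t) atBot (𝓝 L) := by
  obtain ⟨K1, hK1⟩ := hφlip
  obtain ⟨K2, hK2⟩ := hφinv
  set K : ℝ := (K1 : ℝ) + K2 + 1 with hKdef
  have n1 : (0:ℝ) ≤ K1 := K1.2
  have n2 : (0:ℝ) ≤ K2 := K2.2
  have hK : 0 < K := by positivity
  have a1 : ∀ s t, |φ t - φ s| ≤ K * |t - s| := by
    intro s t
    have := hK1.dist_le_mul t s
    rw [Real.dist_eq, Real.dist_eq] at this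
    refine this.trans ?_
    gcongr
    linarith
  have a2 : ∀ s t, |t - s| ≤ K * |φ t - φ s| := by
    intro s t
    have := hK2.dist_le_mul (φ t) (φ s)
    rw [Function.leftInverse_invFun hφbij.1, Function.leftInverse_invFun hφbij.1,
      Real.dist_eq, Real.dist_eq] at this
    refine this.trans ?_
    gcongr
    linarith
  rcases hK1.continuous.strictMono_of_inj hφbij.1 with hm | hm
  · obtain ⟨r1, r2, L, hL⟩ := aux_main φ K hK
      (fun s t h => by
        have := a1 s t
        rwa [abs_of_pos (sub_pos.2 h), abs_of_pos (sub_pos.2 (hm h))] at this)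
      (fun s t h => by
        have := a2 s t
        rwa [abs_of_pos (sub_pos.2 h), abs_of_pos (sub_pos.2 (hm h))] at this)
      p q hp hq heq
    rw [Real.cobounded_eq, tendsto_sup] at hL
    exact ⟨r1, r2, L, hL.2, hL.1⟩
  · obtain ⟨r1, ⟨M, r2⟩, L, hL⟩ := aux_main (fun t => -φ t) K hK
      (fun s t h => by
        have := a1 s t
        rw [abs_of_pos (sub_pos.2 h), abs_of_neg (sub_neg.2 (hm h))] at this
        linarith)
      (fun s t h => by
        have := a2 s t
        rw [abs_of_pos (sub_pos.2 h), abs_of_neg (sub_neg.2 (hm h))] at this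
        linarith)
      p (q.comp (-Polynomial.X)) hp (by rw [Polynomial.natDegree_comp]; simpa using hq)
      (fun t => by simpa using heq t)
    have hd : ∀ t, deriv (fun t => -φ t) t = - deriv φ t := fun t => deriv.fun_neg
    have he : (fun t => -φ t - t * deriv (fun t => -φ t) t) = fun t => -(φ t - t * deriv φ t) := by
      funext t; rw [hd]; ring
    rw [he, Real.cobounded_eq, tendsto_sup] at hL
    refine ⟨by simpa using r1.neg, ⟨M, fun t => ?_⟩, -L, ?_, ?_⟩
    · have := r2 t
      rw [hd] at this
      rw [← abs_neg]
      convert this using 2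
      ring
    · simpa using hL.2.neg
    · simpa using hL.1.neg
end

section
/- Let φ : ℝ → ℝ be a bi-Lipschitz homeomorphism such that g ∘ φ = f for some nonconstant real polynomial functions f, g : ℝ → ℝ. Then there exists a nonzero real number l with φ(t)/t → l as |t| → +∞, and the function ψ : ℝ → ℝ defined by ψ(t) := t·φ(1/t) for t ≠ 0 and ψ(0) := l is real-analytic on all of ℝ (in particular, analytic at 0). -/
open Filter Topology

lemma aux_le {A B : ℝ → ℝ} {a b : ℝ} {k m : ℕ} (hkm : k < m)
    (hA : Tendsto A (𝓝[≠] 0) (𝓝 a)) (hB : Tendsto B (𝓝[≠] 0) (𝓝 b))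
    (h : ∀ᶠ u in 𝓝[≠] (0:ℝ), |u| ^ k * A u ≤ |u| ^ m * B u) : a ≤ 0 := by
  have h1 : Tendsto (fun u : ℝ => |u| ^ (m - k) * B u) (𝓝[≠] 0) (𝓝 (|0| ^ (m - k) * b)) := by
    refine Tendsto.mul ?_ hB
    have : Continuous fun u : ℝ => |u| ^ (m - k) := by fun_prop
    exact (this.tendsto 0).mono_left nhdsWithin_le_nhds
  have h0 : |(0:ℝ)| ^ (m - k) * b = 0 := by
    rw [abs_zero, zero_pow (by omega), zero_mul]
  rw [h0] at h1
  refine le_of_tendsto_of_tendsto hA h1 ?_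
  filter_upwards [h, self_mem_nhdsWithin] with u hu hu0
  have hpos : 0 < |u| ^ k := pow_pos (abs_pos.mpr hu0) _
  have : |u| ^ m = |u| ^ k * |u| ^ (m - k) := by rw [← pow_add]; congr 1; omega
  rw [this, mul_assoc] at hu
  exact le_of_mul_le_mul_left hu hpos

lemma aux_root {F : ℝ → ℝ} (hF : AnalyticAt ℝ F 0) (hF0 : F 0 ≠ 0) {m : ℕ} (hm : m ≠ 0) :
    ∃ R : ℝ → ℝ, AnalyticAt ℝ R 0 ∧ (∀ x, 0 < R x) ∧ ∀ᶠ x in 𝓝 (0:ℝ), R x ^ m = |F x| := by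
  refine ⟨fun x => Real.exp ((2 * m : ℝ)⁻¹ * Real.log (F x ^ 2)), ?_, fun x => Real.exp_pos _, ?_⟩
  · exact (analyticAt_const.mul ((hF.pow 2).log (by simpa only [Pi.pow_apply] using (sq_pos_iff.mpr hF0)))).rexp'
  · filter_upwards [hF.continuousAt.eventually_ne hF0] with x hx
    rw [← Real.exp_nat_mul, ← sq_abs, Real.log_pow]
    have hm' : (m:ℝ) ≠ 0 := by exact_mod_cast hm
    have : (m:ℝ) * ((2 * m : ℝ)⁻¹ * (((2:ℕ):ℝ) * Real.log |F x|)) = Real.log |F x| := by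
      push_cast; field_simp
    rw [this, Real.exp_log (abs_pos.mpr hx)]

lemma aux_core {F G χ : ℝ → ℝ} (hF : AnalyticAt ℝ F 0) (hG : AnalyticAt ℝ G 0)
    (hF0 : F 0 ≠ 0) (hG0 : G 0 ≠ 0) (hχ0 : χ 0 = 0) {c C : ℝ} (hc : 0 < c) {k m : ℕ}
    (hk : k ≠ 0)
    (hlow : ∀ᶠ u in 𝓝 (0:ℝ), c * |u| ≤ |χ u|) (hup : ∀ᶠ u in 𝓝 (0:ℝ), |χ u| ≤ C * |u|)
    {σ : ℝ} (hσ : |σ| = 1) (hsgn : ∀ᶠ u in 𝓝 (0:ℝ), 0 ≤ σ * (χ u * u))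
    (heq : ∀ᶠ u in 𝓝 (0:ℝ), χ u ^ k * F (χ u) = u ^ m * G u) : AnalyticAt ℝ χ 0 := by
  have hcont : Tendsto χ (𝓝 0) (𝓝 0) := by
    rw [tendsto_zero_iff_abs_tendsto_zero]
    refine tendsto_of_tendsto_of_tendsto_of_le_of_le' tendsto_const_nhds
      (h := fun u => C * |u|) ?_ (Eventually.of_forall fun u => abs_nonneg _) hup
    have : Continuous fun u : ℝ => C * |u| := by fun_prop
    simpa using this.tendsto 0
  have hFχ : Tendsto (fun u => |F (χ u)|) (𝓝 0) (𝓝 |F 0|) :=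
    (hF.continuousAt.tendsto.comp hcont).abs
  have hGt : Tendsto (fun u => |G u|) (𝓝 0) (𝓝 |G 0|) := hG.continuousAt.tendsto.abs
  have habs : ∀ᶠ u in 𝓝 (0:ℝ), |χ u| ^ k * |F (χ u)| = |u| ^ m * |G u| := by
    filter_upwards [heq] with u hu
    rw [← abs_pow, ← abs_mul, hu, abs_mul, abs_pow]
  have hkm : k = m := by
    rcases lt_trichotomy k m with h | h | h
    · exfalso
      have := aux_le h (A := fun u => c ^ k * |F (χ u)|) (B := fun u => |G u|)
        ((hFχ.const_mul _).mono_left nhdsWithin_le_nhds) (hGt.mono_left nhdsWithin_le_nhds) ?_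
      · have h2 : 0 < c ^ k * |F 0| := by positivity
        linarith
      · refine Eventually.filter_mono nhdsWithin_le_nhds ?_
        filter_upwards [habs, hlow] with u h1 h2
        rw [← h1]
        calc |u| ^ k * (c ^ k * |F (χ u)|) = (c * |u|) ^ k * |F (χ u)| := by ring
          _ ≤ _ := by gcongr
    · exact h
    · exfalso
      have := aux_le h (B := fun u => C ^ k * |F (χ u)|) (A := fun u => |G u|)
        (hGt.mono_left nhdsWithin_le_nhds) ((hFχ.const_mul _).mono_left nhdsWithin_le_nhds) ?_
      · have h2 : 0 < |G 0| := by positivity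
        linarith
      · refine Eventually.filter_mono nhdsWithin_le_nhds ?_
        filter_upwards [habs, hup] with u h1 h2
        rw [← h1]
        calc _ ≤ (C * |u|) ^ k * |F (χ u)| := by gcongr
          _ = _ := by ring
  subst hkm
  obtain ⟨R, hRa, hRp, hR⟩ := aux_root hF hF0 hk
  obtain ⟨S, hSa, hSp, hS⟩ := aux_root hG hG0 hk
  have hkey : ∀ᶠ u in 𝓝 (0:ℝ), χ u * R (χ u) = σ * (u * S u) := by
    filter_upwards [habs, hcont.eventually hR, hS, hsgn] with u h1 h2 h3 h4
    rw [← h2, ← h3, ← mul_pow, ← mul_pow] at h1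
    have hr := hRp (χ u)
    have hs := hSp u
    have h5 : |χ u| * R (χ u) = |u| * S u :=
      (pow_left_inj₀ (by positivity) (by positivity) hk).mp h1
    rcases eq_or_eq_neg_of_abs_eq hσ with rfl | rfl
    · rcases le_total 0 u with hu | hu <;> rcases le_total 0 (χ u) with hx | hx
      · rw [abs_of_nonneg hu, abs_of_nonneg hx] at h5; linarith
      · have : χ u * u = 0 := le_antisymm (mul_nonpos_of_nonpos_of_nonneg hx hu) (by linarith)
        rcases mul_eq_zero.mp this with h | h <;> simp [h] at h5 ⊢ <;> grind
      · have : χ u * u = 0 := le_antisymm (mul_nonpos_of_nonneg_of_nonpos hx hu) (by linarith)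
        rcases mul_eq_zero.mp this with h | h <;> simp [h] at h5 ⊢ <;> grind
      · rw [abs_of_nonpos hu, abs_of_nonpos hx] at h5; linarith
    · rcases le_total 0 u with hu | hu <;> rcases le_total 0 (χ u) with hx | hx
      · have : χ u * u = 0 := le_antisymm (by linarith) (mul_nonneg hx hu)
        rcases mul_eq_zero.mp this with h | h <;> simp [h] at h5 ⊢ <;> grind
      · rw [abs_of_nonneg hu, abs_of_nonpos hx] at h5; linarith
      · rw [abs_of_nonpos hu, abs_of_nonneg hx] at h5; linarith
      · have : χ u * u = 0 := le_antisymm (by linarith) (mul_nonneg_of_nonpos_of_nonpos hx hu)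
        rcases mul_eq_zero.mp this with h | h <;> simp [h] at h5 ⊢ <;> grind
  have hAa : AnalyticAt ℝ (fun x => x * R x) 0 := analyticAt_id.mul hRa
  have hAd : deriv (fun x => x * R x) 0 ≠ 0 := by
    have := (hasDerivAt_id (0:ℝ)).mul hRa.differentiableAt.hasDerivAt
    have h2 : deriv (fun x => x * R x) 0 = R 0 := by
      refine HasDerivAt.deriv ?_
      have h3 : (1:ℝ) * R 0 + id 0 * deriv R 0 = R 0 := by simp
      rw [h3] at this
      exact this
    rw [h2]; exact (hRp 0).ne'
  have hinv := hAa.analyticAt_localInverse hAd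
  have hleft := hAa.hasStrictDerivAt.eventually_left_inverse hAd
  set I := hAa.hasStrictDerivAt.localInverse _ _ _ hAd with hI
  have hBa : AnalyticAt ℝ (fun u => σ * (u * S u)) 0 :=
    analyticAt_const.mul (analyticAt_id.mul hSa)
  have hcomp : AnalyticAt ℝ (fun u => I (σ * (u * S u))) 0 := by
    refine AnalyticAt.fun_comp (f := fun u => σ * (u * S u)) ?_ hBa
    simpa using hinv
  refine hcomp.congr ?_
  filter_upwards [hkey, hcont.eventually hleft] with u h1 h2
  rw [← h1]
  exact h2

lemma aux_factor (p : Polynomial ℝ) (hp : 1 ≤ p.natDegree) (a : ℝ) :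
    ∃ (k : ℕ) (g : Polynomial ℝ), k ≠ 0 ∧ g.eval a ≠ 0 ∧
      ∀ x, p.eval x - p.eval a = (x - a) ^ k * g.eval x := by
  have hne : p - Polynomial.C (p.eval a) ≠ 0 := by
    intro h
    rw [sub_eq_zero] at h
    rw [h, Polynomial.natDegree_C] at hp
    omega
  obtain ⟨g, hg, hnd⟩ := Polynomial.exists_eq_pow_rootMultiplicity_mul_and_not_dvd _ hne a
  have hroot : (p - Polynomial.C (p.eval a)).IsRoot a := by simp
  refine ⟨_, g, ((Polynomial.rootMultiplicity_pos hne).mpr hroot).ne', ?_, fun x => ?_⟩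
  · intro h
    exact hnd (Polynomial.dvd_iff_isRoot.mpr h)
  · have := congrArg (Polynomial.eval x) hg
    simpa using this

lemma aux_poly_analytic (p : Polynomial ℝ) (x : ℝ) : AnalyticAt ℝ (fun y => p.eval y) x := by
  simpa using AnalyticOnNhd.aeval_polynomial (fun y _ => analyticAt_id (𝕜 := ℝ)) p x (Set.mem_univ x)

lemma aux_rev (p : Polynomial ℝ) {x : ℝ} (hx : x ≠ 0) :
    p.reverse.eval x⁻¹ * x ^ p.natDegree = p.eval x := by
  letI := invertibleOfNonzero hx
  have := Polynomial.eval₂_reverse_mul_pow (RingHom.id ℝ) x p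
  simpa [Polynomial.eval₂_id, invOf_eq_inv] using this

theorem stmt_13 (φ : ℝ → ℝ) (hφbij : Function.Bijective φ)
    (hφlip : ∃ K : NNReal, LipschitzWith K φ)
    (hφinv : ∃ K : NNReal, LipschitzWith K (Function.invFun φ))
    (p q : Polynomial ℝ) (hp : 1 ≤ p.natDegree) (hq : 1 ≤ q.natDegree)
    (heq : ∀ t : ℝ, q.eval (φ t) = p.eval t) :
    ∃ l : ℝ, l ≠ 0 ∧
      Tendsto (fun t => φ t / t) atTop (𝓝 l) ∧
      Tendsto (fun t => φ t / t) atBot (𝓝 l) ∧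
      ∀ t : ℝ, AnalyticAt ℝ (fun u : ℝ => if u = 0 then l else u * φ u⁻¹) t := by
  obtain ⟨K, hK⟩ := hφlip
  obtain ⟨K', hK'⟩ := hφinv
  obtain ⟨C, hC0, hC⟩ : ∃ C : ℝ, 0 < C ∧ ∀ x y, |φ x - φ y| ≤ C * |x - y| := by
    refine ⟨K + 1, by positivity, fun x y => ?_⟩
    have := hK.dist_le_mul x y
    rw [Real.dist_eq, Real.dist_eq] at this
    nlinarith [abs_nonneg (x - y)]
  obtain ⟨c, hc0, hc⟩ : ∃ c : ℝ, 0 < c ∧ ∀ x y, c * |x - y| ≤ |φ x - φ y| := by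
    refine ⟨((K':ℝ) + 1)⁻¹, by positivity, fun x y => ?_⟩
    have := hK'.dist_le_mul (φ x) (φ y)
    rw [Function.leftInverse_invFun hφbij.1, Function.leftInverse_invFun hφbij.1,
      Real.dist_eq, Real.dist_eq] at this
    rw [inv_mul_le_iff₀ (by positivity)]
    nlinarith [abs_nonneg (φ x - φ y)]
  obtain ⟨σ, hσ, hmono⟩ : ∃ σ : ℝ, |σ| = 1 ∧ ∀ x y, 0 ≤ σ * ((φ x - φ y) * (x - y)) := by
    rcases hK.continuous.strictMono_of_inj hφbij.1 with h | h
    · refine ⟨1, by simp, fun x y => ?_⟩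
      rw [one_mul]
      rcases le_total x y with hxy | hxy
      · have := h.monotone hxy
        exact mul_nonneg_of_nonpos_of_nonpos (by linarith) (by linarith)
      · have := h.monotone hxy
        exact mul_nonneg (by linarith) (by linarith)
    · refine ⟨-1, by simp, fun x y => ?_⟩
      rcases le_total x y with hxy | hxy
      · have := h.antitone hxy
        nlinarith [mul_nonneg (sub_nonneg.2 this) (sub_nonneg.2 hxy)]
      · have := h.antitone hxy
        nlinarith [mul_nonneg (sub_nonneg.2 this) (sub_nonneg.2 hxy)]
  -- analyticity of φ at finite points
  have hφa : ∀ t, AnalyticAt ℝ φ t := by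
    intro t
    obtain ⟨k, F, hk, hF, hqF⟩ := aux_factor q hq (φ t)
    obtain ⟨m, G, hm, hG, hpG⟩ := aux_factor p hp t
    have hsh : ∀ a : ℝ, AnalyticAt ℝ (fun u : ℝ => u + a) 0 := fun a =>
      analyticAt_id.add analyticAt_const
    have key : AnalyticAt ℝ (fun u => φ (u + t) - φ t) 0 := by
      refine aux_core (F := fun w => F.eval (w + φ t)) (G := fun u => G.eval (u + t))
        ((aux_poly_analytic F _).fun_comp (hsh _)) ((aux_poly_analytic G _).fun_comp (hsh _))
        (by simpa using hF) (by simpa using hG) (by simp) hc0 (C := C) (k := k) (m := m) hk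
        (Eventually.of_forall fun u => ?_) (Eventually.of_forall fun u => ?_) hσ
        (Eventually.of_forall fun u => ?_) (Eventually.of_forall fun u => ?_)
      · simpa using hc (u + t) t
      · simpa using hC (u + t) t
      · simpa using hmono (u + t) t
      · have h1 := hqF (φ (u + t))
        have h2 := hpG (u + t)
        rw [heq, heq, h2] at h1
        simpa using h1.symm
    have h2 : AnalyticAt ℝ (fun x => (fun u => φ (u + t) - φ t) (x - t) + φ t) t := by
      refine AnalyticAt.add ?_ analyticAt_const
      have h3 : AnalyticAt ℝ (fun x : ℝ => x - t) t := analyticAt_id.sub analyticAt_const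
      refine AnalyticAt.fun_comp (g := fun u => φ (u + t) - φ t) (f := fun x : ℝ => x - t) ?_ h3
      simpa using key
    simpa using h2
  -- behaviour at infinity
  set χ : ℝ → ℝ := fun u => if u = 0 then 0 else (φ u⁻¹)⁻¹ with hχ
  have hχ0 : χ 0 = 0 := by simp [hχ]
  have hχne : ∀ u, u ≠ 0 → χ u = (φ u⁻¹)⁻¹ := fun u hu => by simp [hχ, hu]
  have hsmall : ∀ M : ℝ, ∀ᶠ u in 𝓝 (0:ℝ), u ≠ 0 → M < |u⁻¹| := by
    intro M
    have : Tendsto (fun u : ℝ => |u|⁻¹) (𝓝[≠] 0) atTop := by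
      refine tendsto_inv_nhdsGT_zero.comp ?_
      exact tendsto_abs_nhdsNE_zero
    have h := this.eventually_gt_atTop M
    rw [eventually_nhdsWithin_iff] at h
    filter_upwards [h] with u hu h0
    rw [abs_inv]; exact hu h0
  have hφlow : ∀ t, c * |t| - |φ 0| ≤ |φ t| := by
    intro t
    have h1 := hc t 0
    have h2 := abs_sub (φ t) (φ 0)
    rw [sub_zero] at h1
    linarith
  have hφup : ∀ t, |φ t| ≤ C * |t| + |φ 0| := by
    intro t
    have h1 := hC t 0
    have h2 := abs_sub_abs_le_abs_sub (φ t) (φ 0)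
    rw [sub_zero] at h1
    linarith
  have hχlow : ∀ᶠ u in 𝓝 (0:ℝ), (C + |φ 0|)⁻¹ * |u| ≤ |χ u| := by
    filter_upwards [hsmall 1, hsmall (|φ 0| / c)] with u h1 h2
    by_cases hu : u = 0
    · simp [hu]
    have h1 := h1 hu
    have h2 := h2 hu
    rw [div_lt_iff₀ hc0] at h2
    rw [hχne u hu, abs_inv]
    have hu' : |u| = |u⁻¹|⁻¹ := by rw [abs_inv, inv_inv]
    rw [hu', ← mul_inv]
    refine inv_anti₀ ?_ ?_
    · have := hφlow u⁻¹; linarith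
    · have := hφup u⁻¹; nlinarith [abs_nonneg (φ 0)]
  have hχup : ∀ᶠ u in 𝓝 (0:ℝ), |χ u| ≤ (c / 2)⁻¹ * |u| := by
    filter_upwards [hsmall (2 * |φ 0| / c)] with u h2
    by_cases hu : u = 0
    · simp [hu, hχ0]
    have h2 := h2 hu
    rw [div_lt_iff₀ hc0] at h2
    rw [hχne u hu, abs_inv]
    have hu' : |u| = |u⁻¹|⁻¹ := by rw [abs_inv, inv_inv]
    rw [hu', ← mul_inv]
    refine inv_anti₀ ?_ ?_
    · have : 0 < |u⁻¹| := abs_pos.mpr (inv_ne_zero hu)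
      positivity
    · have := hφlow u⁻¹; nlinarith [abs_nonneg (φ 0)]
  have hbig : ∀ᶠ u in 𝓝 (0:ℝ), u ≠ 0 → |φ 0| < |φ u⁻¹| := by
    filter_upwards [hsmall (2 * |φ 0| / c)] with u h2 hu
    have h2 := h2 hu
    rw [div_lt_iff₀ hc0] at h2
    have := hφlow u⁻¹
    linarith
  have hχsgn : ∀ᶠ u in 𝓝 (0:ℝ), 0 ≤ σ * (χ u * u) := by
    filter_upwards [hbig] with u hb
    by_cases hu : u = 0
    · simp [hu]
    have hb := hb hu
    have h1 := hmono u⁻¹ 0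
    rw [sub_zero] at h1
    have h2 : 0 ≤ σ * (φ u⁻¹ * u⁻¹) := by
      -- the sign of `φ t - φ 0` is the sign of `φ t`
      have h3 : 0 < φ u⁻¹ * (φ u⁻¹ - φ 0) := by
        have h4 : φ u⁻¹ * φ 0 ≤ |φ u⁻¹| * |φ 0| := by rw [← abs_mul]; exact le_abs_self _
        have h5 : φ u⁻¹ * φ u⁻¹ = |φ u⁻¹| * |φ u⁻¹| := (abs_mul_abs_self _).symm
        nlinarith [abs_nonneg (φ 0)]
      have h6 : φ u⁻¹ - φ 0 ≠ 0 := right_ne_zero_of_mul h3.ne'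
      have h7 : σ * (φ u⁻¹ * u⁻¹) * (φ u⁻¹ - φ 0) ^ 2
          = (σ * ((φ u⁻¹ - φ 0) * u⁻¹)) * (φ u⁻¹ * (φ u⁻¹ - φ 0)) := by ring
      have h8 : 0 ≤ σ * (φ u⁻¹ * u⁻¹) * (φ u⁻¹ - φ 0) ^ 2 := by
        rw [h7]; exact mul_nonneg h1 h3.le
      exact nonneg_of_mul_nonneg_left h8 (by positivity)
    rw [hχne u hu]
    have h9 : φ u⁻¹ ≠ 0 := by
      intro h; rw [h, abs_zero] at hb; exact absurd hb (not_lt.mpr (abs_nonneg _))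
    have : σ * ((φ u⁻¹)⁻¹ * u) = (σ * (φ u⁻¹ * u⁻¹)) * (((φ u⁻¹)⁻¹) ^ 2 * u ^ 2) := by
      field_simp
    rw [this]
    positivity
  have hrev0 : ∀ r : Polynomial ℝ, 1 ≤ r.natDegree → r.reverse.eval 0 ≠ 0 := by
    intro r hr
    rw [← Polynomial.coeff_zero_eq_eval_zero, Polynomial.coeff_zero_reverse]
    intro h
    rw [Polynomial.leadingCoeff_eq_zero] at h
    rw [h] at hr
    simp at hr
  have hχtend : Tendsto χ (𝓝 0) (𝓝 0) := by
    rw [tendsto_zero_iff_abs_tendsto_zero]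
    refine tendsto_of_tendsto_of_tendsto_of_le_of_le' tendsto_const_nhds
      (h := fun u => (c / 2)⁻¹ * |u|) ?_ (Eventually.of_forall fun u => abs_nonneg _) hχup
    have : Continuous fun u : ℝ => (c / 2)⁻¹ * |u| := by fun_prop
    simpa using this.tendsto 0
  have hχa : AnalyticAt ℝ χ 0 := by
    refine aux_core (F := fun w => (q.reverse.eval w)⁻¹) (G := fun u => (p.reverse.eval u)⁻¹)
      (k := q.natDegree) (m := p.natDegree)
      ((aux_poly_analytic _ _).inv (hrev0 q hq)) ((aux_poly_analytic _ _).inv (hrev0 p hp))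
      (inv_ne_zero (hrev0 q hq)) (inv_ne_zero (hrev0 p hp)) hχ0
      (c := (C + |φ 0|)⁻¹) (by positivity) (by omega) hχlow hχup hσ hχsgn ?_
    filter_upwards [hbig] with u hb
    by_cases hu : u = 0
    · simp [hu, hχ0, show q.natDegree ≠ 0 by omega, show p.natDegree ≠ 0 by omega]
    have hb := hb hu
    have h9 : φ u⁻¹ ≠ 0 := by
      intro h; rw [h, abs_zero] at hb; exact absurd hb (not_lt.mpr (abs_nonneg _))
    have e1 := aux_rev q h9
    have e2 := aux_rev p (inv_ne_zero hu)
    rw [inv_inv] at e2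
    rw [heq, ← e2, ← hχne u hu] at e1
    have := congrArg (·⁻¹) e1
    simp only [mul_inv, inv_pow, inv_inv] at this
    rw [← inv_pow, ← hχne u hu] at this
    linarith
  -- the quotient
  have hda : AnalyticAt ℝ (dslope χ 0) 0 := by
    obtain ⟨s, hs⟩ := hχa
    exact ⟨_, hs.has_fpower_series_dslope_fslope⟩
  have hdne : ∀ u, u ≠ 0 → dslope χ 0 u = χ u / u := by
    intro u hu
    rw [dslope_of_ne _ hu, slope_def_field, hχ0, sub_zero, sub_zero]
  have hd0 : dslope χ 0 0 ≠ 0 := by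
    have h1 : Tendsto (fun u => |dslope χ 0 u|) (𝓝[≠] 0) (𝓝 |dslope χ 0 0|) :=
      (hda.continuousAt.tendsto.mono_left nhdsWithin_le_nhds).abs
    have h2 : (C + |φ 0|)⁻¹ ≤ |dslope χ 0 0| := by
      refine ge_of_tendsto h1 ?_
      filter_upwards [hχlow.filter_mono nhdsWithin_le_nhds, self_mem_nhdsWithin] with u hu hu0
      rw [hdne u hu0, abs_div, le_div_iff₀ (abs_pos.mpr hu0)]
      exact hu
    have h3 : 0 < (C + |φ 0|)⁻¹ := by positivity
    exact abs_pos.mp (h3.trans_le h2)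
  set l := (dslope χ 0 0)⁻¹ with hl
  have hψ : (fun u : ℝ => if u = 0 then l else u * φ u⁻¹) = fun u => (dslope χ 0 u)⁻¹ := by
    funext u
    by_cases hu : u = 0
    · simp [hu, hl]
    · simp only [hu, if_false]
      rw [hdne u hu, hχne u hu, inv_div, div_inv_eq_mul]
  have hψa : AnalyticAt ℝ (fun u : ℝ => if u = 0 then l else u * φ u⁻¹) 0 := by
    rw [hψ]; exact hda.inv hd0
  have hψt : Tendsto (fun u : ℝ => if u = 0 then l else u * φ u⁻¹) (𝓝 0) (𝓝 l) := by
    simpa using hψa.continuousAt.tendsto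
  refine ⟨l, inv_ne_zero hd0, ?_, ?_, ?_⟩
  · refine (hψt.comp tendsto_inv_atTop_zero).congr' ?_
    filter_upwards [eventually_ne_atTop 0] with t ht
    simp [ht]; field_simp
  · refine (hψt.comp tendsto_inv_atBot_zero).congr' ?_
    filter_upwards [eventually_ne_atBot 0] with t ht
    simp [ht]; field_simp
  · intro t
    by_cases ht : t = 0
    · rw [ht]; exact hψa
    · have h1 : AnalyticAt ℝ (fun u : ℝ => u * φ u⁻¹) t :=
        analyticAt_id.mul ((hφa t⁻¹).fun_comp (analyticAt_id.inv ht))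
      refine h1.congr ?_
      filter_upwards [isOpen_ne.mem_nhds ht] with u hu
      rw [if_neg hu]
end

section
/- Let β = r/s be a rational number with r > s > 0 and gcd(r, s) = 1, and let F, G ∈ ℝ[X, Y] be β-quasihomogeneous polynomials of degree d ≥ 1 with height functions f₊, f₋ and g₊, g₋ respectively. Suppose there exist nonzero real numbers λ₁, λ₂ with λ₁λ₂ > 0 and bi-Lipschitz homeomorphisms φ₁, φ₂ : ℝ → ℝ such that: if λ₁ > 0 and λ₂ > 0 then |λ₁|^d·(g₊ ∘ φ₁) = f₊ and |λ₂|^d·(g₋ ∘ φ₂) = f₋, while if λ₁ < 0 and λ₂ < 0 then |λ₁|^d·(g₋ ∘ φ₁) = f₊ and |λ₂|^d·(g₊ ∘ φ₂) = f₋. Then the multiplicity of X as a factor of F equals the multiplicity of X as a factor of G. -/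
open Filter Topology

/-- Evaluation of a polynomial in two variables at the point `(x, y)`. -/
noncomputable def eval2 (F : MvPolynomial (Fin 2) ℝ) (x y : ℝ) : ℝ :=
  MvPolynomial.eval ![x, y] F

lemma aux_cmp (p q c C T0 : ℝ) (hc : 0 < c)
    (h : ∀ T : ℝ, T0 ≤ T → 1 ≤ T → c * T ^ p ≤ C * T ^ q) : p ≤ q := by
  by_contra hpq
  push Not at hpq
  have h1 := tendsto_rpow_atTop (show 0 < p - q by linarith)
  have h2 := h1.eventually_gt_atTop (C / c)
  obtain ⟨T, hT1, hT2, hT3⟩ :=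
    (h2.and ((eventually_ge_atTop T0).and (eventually_ge_atTop 1))).exists
  have hT : 0 < T := by linarith
  have h3 := h T hT2 hT3
  rw [Real.rpow_sub hT, div_lt_div_iff₀ hc (by positivity)] at hT1
  linarith

lemma aux_dvd (H : MvPolynomial (Fin 2) ℝ) (h : ∀ y, eval2 H 0 y = 0) :
    (MvPolynomial.X 0 : MvPolynomial (Fin 2) ℝ) ∣ H := by
  set ψ : MvPolynomial (Fin 2) ℝ →ₐ[ℝ] MvPolynomial (Fin 2) ℝ :=
    MvPolynomial.aeval ![0, MvPolynomial.X 1] with hψ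
  have h0 : ψ H = 0 := by
    apply MvPolynomial.funext
    intro v
    have : ((MvPolynomial.aeval v).comp ψ : MvPolynomial (Fin 2) ℝ →ₐ[ℝ] ℝ) =
        MvPolynomial.aeval ![0, v 1] := by
      apply MvPolynomial.algHom_ext
      intro i
      fin_cases i <;> simp [hψ]
    have h2 := congrArg (fun f => f H) this
    simp only [AlgHom.comp_apply] at h2
    rw [map_zero]
    have h3 := h (v 1)
    unfold eval2 at h3
    rw [← MvPolynomial.aeval_eq_eval] at h3 ⊢
    exact h2.trans h3
  have h1 : ((Ideal.Quotient.mkₐ ℝ (Ideal.span {(MvPolynomial.X 0 : MvPolynomial (Fin 2) ℝ)})).comp ψ)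
      = Ideal.Quotient.mkₐ ℝ _ := by
    apply MvPolynomial.algHom_ext
    intro i
    fin_cases i
    · simp [hψ]
    · simp [hψ]
  have h2 := congrArg (fun f => f H) h1
  simp only [AlgHom.comp_apply, h0, map_zero] at h2
  rw [← Ideal.mem_span_singleton, ← Ideal.Quotient.eq_zero_iff_mem]
  exact h2.symm

lemma aux_cont (H : MvPolynomial (Fin 2) ℝ) : Continuous (fun p : ℝ × ℝ => eval2 H p.1 p.2) := by
  unfold eval2
  have : Continuous (fun p : ℝ × ℝ => (![p.1, p.2] : Fin 2 → ℝ)) := by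
    apply continuous_pi
    intro i
    fin_cases i <;> simp <;> fun_prop
  exact (MvPolynomial.continuous_eval H).comp this

lemma aux_bdd (H : MvPolynomial (Fin 2) ℝ) :
    ∃ B : ℝ, 0 ≤ B ∧ ∀ x y, |x| ≤ 1 → |y| ≤ 1 → |eval2 H x y| ≤ B := by
  have hK : IsCompact (Set.Icc (-1:ℝ) 1 ×ˢ Set.Icc (-1:ℝ) 1) := isCompact_Icc.prod isCompact_Icc
  obtain ⟨B, hB⟩ := hK.exists_bound_of_continuousOn (aux_cont H).continuousOn
  refine ⟨|B|, abs_nonneg _, fun x y hx hy => ?_⟩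
  exact (hB (x, y) ⟨abs_le.1 hx, abs_le.1 hy⟩).trans (le_abs_self _)

lemma aux_sgn (u : ℝ) : ∃ ε : ℝ, |ε| = 1 ∧ u = ε * |u| := by
  rcases le_total 0 u with h | h
  · exact ⟨1, by simp, by simp [abs_of_nonneg h]⟩
  · exact ⟨-1, by simp, by simp [abs_of_nonpos h]⟩

lemma aux_growth (d e : ℕ) (β : ℝ) (hβ : 0 < β) (F : MvPolynomial (Fin 2) ℝ)
    (hF : ∀ t x y : ℝ, 0 < t → eval2 F (t * x) (t ^ β * y) = t ^ d * eval2 F x y)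
    (he : (MvPolynomial.X 0 : MvPolynomial (Fin 2) ℝ) ^ e ∣ F ∧
      ¬ (MvPolynomial.X 0 : MvPolynomial (Fin 2) ℝ) ^ (e + 1) ∣ F) :
    0 ≤ ((d:ℝ) - e) / β ∧
    (∃ C : ℝ, 0 ≤ C ∧ ∀ σ u : ℝ, |σ| = 1 → |eval2 F σ u| ≤ C * (max 1 |u|) ^ (((d:ℝ) - e) / β)) ∧
    (∀ σ : ℝ, |σ| = 1 → ∃ ε c T0 : ℝ, |ε| = 1 ∧ 0 < c ∧
      ∀ T : ℝ, T0 ≤ T → 1 ≤ T → c * T ^ (((d:ℝ) - e) / β) ≤ |eval2 F σ (ε * T)|) := by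
  obtain ⟨⟨H, rfl⟩, hnd⟩ := he
  have hev : ∀ x y, eval2 (MvPolynomial.X 0 ^ e * H) x y = x ^ e * eval2 H x y := by
    intro x y; simp [eval2]
  have hH0 : ∀ t y : ℝ, 0 < t → ∀ x, eval2 H (t * x) (t ^ β * y) = t ^ ((d:ℝ) - e) * eval2 H x y := by
    intro t y ht
    have hd : Dense ({0}ᶜ : Set ℝ) := dense_compl_singleton 0
    have hEq : Set.EqOn (fun x => eval2 H (t * x) (t ^ β * y))
        (fun x => t ^ ((d:ℝ) - e) * eval2 H x y) ({0}ᶜ : Set ℝ) := by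
      intro x hx
      have hx : x ≠ 0 := hx
      have h := hF t x y ht
      rw [hev, hev] at h
      simp only
      rw [Real.rpow_sub ht, Real.rpow_natCast, Real.rpow_natCast]
      field_simp
      have hx' : x ^ e ≠ 0 := pow_ne_zero _ hx
      apply mul_left_cancel₀ hx'
      rw [mul_pow] at h
      linarith
    have := Continuous.ext_on hd
      ((aux_cont H).comp (by fun_prop : Continuous fun x : ℝ => (t * x, t ^ β * y)))
      (continuous_const.mul ((aux_cont H).comp (by fun_prop : Continuous fun x : ℝ => (x, y)))) hEq
    exact fun x => congrFun this x
  -- value formula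
  have key : ∀ σ ε T : ℝ, |σ| = 1 → 0 < T →
      |eval2 (MvPolynomial.X 0 ^ e * H) σ (ε * T)| =
        T ^ (((d:ℝ) - e) / β) * |eval2 H (σ * T ^ (-(1/β))) ε| := by
    intro σ ε T hσ hT
    have h := hH0 (T ^ (1/β)) ε (by positivity) (σ * T ^ (-(1/β)))
    have h1 : (T ^ (1/β)) ^ β = T := by
      rw [← Real.rpow_mul hT.le, one_div, inv_mul_cancel₀ hβ.ne', Real.rpow_one]
    have h2 : T ^ (1/β) * (σ * T ^ (-(1/β))) = σ := by
      rw [mul_left_comm, ← Real.rpow_add hT]; simp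
    rw [h1, h2, ← Real.rpow_mul hT.le] at h
    rw [hev, abs_mul, abs_pow, hσ, one_pow, one_mul, mul_comm ε T, h, abs_mul,
      abs_of_pos (by positivity)]
    congr 2
    ring
  have hnz : ∃ ε : ℝ, |ε| = 1 ∧ eval2 H 0 ε ≠ 0 := by
    by_contra hcon
    push Not at hcon
    apply hnd
    rw [pow_succ]
    apply mul_dvd_mul_left
    apply aux_dvd
    have hpos : ∀ y, y ≠ 0 → eval2 H 0 y = 0 := by
      intro y hy
      obtain ⟨ε, hε, hy2⟩ := aux_sgn y
      have hT : 0 < |y| := abs_pos.2 hy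
      have h := hH0 (|y| ^ (1/β)) ε (by positivity) 0
      rw [← Real.rpow_mul hT.le, one_div, inv_mul_cancel₀ hβ.ne', Real.rpow_one, mul_zero,
        hcon ε hε, mul_zero, mul_comm, ← hy2] at h
      exact h
    have := Continuous.ext_on (dense_compl_singleton (0:ℝ))
      ((aux_cont H).comp (by fun_prop : Continuous fun y : ℝ => ((0:ℝ), y)))
      (continuous_const (y := (0:ℝ))) (fun y hy => hpos y hy)
    exact fun y => congrFun this y
  obtain ⟨ε, hε, hne⟩ := hnz
  obtain ⟨B, hB0, hB⟩ := aux_bdd H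
  refine ⟨?_, ⟨B, hB0, ?_⟩, ?_⟩
  · have h : -((d:ℝ) - e) ≤ 0 := by
      apply aux_cmp _ _ |eval2 H 0 ε| B 1 (abs_pos.2 hne)
      intro T hT _
      have hT0 : 0 < T := by linarith
      have h := hH0 T⁻¹ ε (by positivity) 0
      have h2 : |T⁻¹ ^ β * ε| ≤ 1 := by
        rw [abs_mul, hε, mul_one, abs_of_pos (by positivity)]
        exact Real.rpow_le_one (by positivity) (inv_le_one_of_one_le₀ hT) hβ.le
      have h3 := hB 0 _ (by simp) h2
      rw [mul_zero] at h
      rw [h, abs_mul, abs_of_pos (by positivity), Real.inv_rpow hT0.le, ← Real.rpow_neg hT0.le] at h3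
      rw [Real.rpow_zero]
      linarith
    exact div_nonneg (by linarith) hβ.le
  · intro σ u hσ
    rcases le_total |u| 1 with hu | hu
    · rw [max_eq_left hu, Real.one_rpow, mul_one, hev, abs_mul, abs_pow, hσ, one_pow, one_mul]
      exact hB _ _ hσ.le hu
    · obtain ⟨δ, hδ, hu2⟩ := aux_sgn u
      have hu0 : 0 < |u| := by linarith
      have h := key σ δ |u| hσ hu0
      rw [← hu2] at h
      rw [max_eq_right hu, h, mul_comm]
      apply mul_le_mul_of_nonneg_right _ (by positivity)
      apply hB _ _ _ hδ.le
      rw [abs_mul, hσ, one_mul, abs_of_pos (by positivity)]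
      apply Real.rpow_le_one_of_one_le_of_nonpos hu
      have : 0 < 1 / β := by positivity
      linarith
  · intro σ hσ
    have ht : Tendsto (fun T : ℝ => |eval2 H (σ * T ^ (-(1/β))) ε|) atTop (𝓝 |eval2 H 0 ε|) := by
      have h1 : Tendsto (fun T : ℝ => σ * T ^ (-(1/β))) atTop (𝓝 0) := by
        simpa using (tendsto_rpow_neg_atTop (show 0 < 1/β by positivity)).const_mul σ
      have h2 : Continuous (fun x : ℝ => |eval2 H x ε|) :=
        ((aux_cont H).comp (by fun_prop : Continuous fun x : ℝ => (x, ε))).abs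
      exact (h2.tendsto 0).comp h1
    have hpos := abs_pos.2 hne
    have hev2 := ht.eventually (lt_mem_nhds (half_lt_self hpos))
    obtain ⟨T0, hT0⟩ := eventually_atTop.1 hev2
    refine ⟨ε, |eval2 H 0 ε| / 2, T0, hε, by positivity, fun T h1 h2 => ?_⟩
    have hT : 0 < T := by linarith
    rw [key σ ε T hσ hT, mul_comm]
    exact mul_le_mul_of_nonneg_left (hT0 T h1).le (by positivity)

lemma aux_main_s14 (d eF eG : ℕ) (β : ℝ) (hβ : 0 < β) (F G : MvPolynomial (Fin 2) ℝ)
    (hF : ∀ t x y : ℝ, 0 < t → eval2 F (t * x) (t ^ β * y) = t ^ d * eval2 F x y)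
    (hG : ∀ t x y : ℝ, 0 < t → eval2 G (t * x) (t ^ β * y) = t ^ d * eval2 G x y)
    (heF : (MvPolynomial.X 0 : MvPolynomial (Fin 2) ℝ) ^ eF ∣ F ∧
      ¬ (MvPolynomial.X 0 : MvPolynomial (Fin 2) ℝ) ^ (eF + 1) ∣ F)
    (heG : (MvPolynomial.X 0 : MvPolynomial (Fin 2) ℝ) ^ eG ∣ G ∧
      ¬ (MvPolynomial.X 0 : MvPolynomial (Fin 2) ℝ) ^ (eG + 1) ∣ G)
    (k σ τ : ℝ) (hσ : |σ| = 1) (hτ : |τ| = 1) (φ : ℝ → ℝ)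
    (hφ : ∃ K : NNReal, LipschitzWith K φ)
    (h : ∀ t, k * eval2 G τ (φ t) = eval2 F σ t) : eG ≤ eF := by
  obtain ⟨_, _, hl⟩ := aux_growth d eF β hβ F hF heF
  obtain ⟨ha, ⟨C, hC, hu⟩, _⟩ := aux_growth d eG β hβ G hG heG
  obtain ⟨ε, c, T0, hε, hc, hl⟩ := hl σ hσ
  obtain ⟨K, hK⟩ := hφ
  have hp : ((d:ℝ) - eF) / β ≤ ((d:ℝ) - eG) / β := by
    apply aux_cmp _ _ c (|k| * (C * (1 + |φ 0| + K) ^ (((d:ℝ) - eG) / β))) T0 hc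
    intro T h1 h2
    refine (hl T h1 h2).trans ?_
    rw [← h, abs_mul, mul_assoc]
    apply mul_le_mul_of_nonneg_left _ (abs_nonneg _)
    refine (hu τ _ hτ).trans ?_
    have hK0 : (0:ℝ) ≤ K := K.2
    rw [mul_assoc, ← Real.mul_rpow (by positivity) (by linarith)]
    apply mul_le_mul_of_nonneg_left _ hC
    apply Real.rpow_le_rpow (by positivity) _ ha
    have h3 := hK.dist_le_mul (ε * T) 0
    rw [Real.dist_eq, Real.dist_eq, sub_zero, abs_mul, hε, one_mul,
      abs_of_nonneg (by linarith : 0 ≤ T)] at h3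
    have h4 : |φ (ε * T)| ≤ |φ (ε * T) - φ 0| + |φ 0| := by
      simpa using abs_add_le (φ (ε * T) - φ 0) (φ 0)
    have h5 := abs_nonneg (φ 0)
    have h6 : |φ 0| ≤ |φ 0| * T := le_mul_of_one_le_right h5 h2
    have h7 : 0 ≤ K * T := by positivity
    apply max_le <;> nlinarith
  rw [div_le_div_iff_of_pos_right hβ] at hp
  have : (eG:ℝ) ≤ eF := by linarith
  exact_mod_cast this

lemma aux_both (d eF eG : ℕ) (β : ℝ) (hβ : 0 < β) (F G : MvPolynomial (Fin 2) ℝ)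
    (hF : ∀ t x y : ℝ, 0 < t → eval2 F (t * x) (t ^ β * y) = t ^ d * eval2 F x y)
    (hG : ∀ t x y : ℝ, 0 < t → eval2 G (t * x) (t ^ β * y) = t ^ d * eval2 G x y)
    (heF : (MvPolynomial.X 0 : MvPolynomial (Fin 2) ℝ) ^ eF ∣ F ∧
      ¬ (MvPolynomial.X 0 : MvPolynomial (Fin 2) ℝ) ^ (eF + 1) ∣ F)
    (heG : (MvPolynomial.X 0 : MvPolynomial (Fin 2) ℝ) ^ eG ∣ G ∧
      ¬ (MvPolynomial.X 0 : MvPolynomial (Fin 2) ℝ) ^ (eG + 1) ∣ G)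
    (k σ τ : ℝ) (hk : k ≠ 0) (hσ : |σ| = 1) (hτ : |τ| = 1) (φ : ℝ → ℝ)
    (hb : Function.Bijective φ)
    (hφ : ∃ K : NNReal, LipschitzWith K φ)
    (hφi : ∃ K : NNReal, LipschitzWith K (Function.invFun φ))
    (h : ∀ t, k * eval2 G τ (φ t) = eval2 F σ t) : eF = eG := by
  apply le_antisymm
  · apply aux_main_s14 d eG eF β hβ G F hG hF heG heF k⁻¹ τ σ hτ hσ _ hφi
    intro t
    rw [← h, Function.rightInverse_invFun hb.2 t, inv_mul_cancel_left₀ hk]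
  · exact aux_main_s14 d eF eG β hβ F G hF hG heF heG k σ τ hσ hτ φ hφ h

/-- If the height functions of two β-quasihomogeneous polynomials `F, G` of degree
`d ≥ 1` can be arranged in pairs related by a proto-transition, then the multiplicity
of `X` as a factor of `F` equals the multiplicity of `X` as a factor of `G`. -/
theorem stmt_14 (r s d : ℕ) (hrs : s < r) (hs : 0 < s) (hgcd : Nat.gcd r s = 1)
    (hd : 1 ≤ d) (β : ℝ) (hβ : β = (r : ℝ) / (s : ℝ))
    (F G : MvPolynomial (Fin 2) ℝ)
    (hF : ∀ t x y : ℝ, 0 < t → eval2 F (t * x) (t ^ β * y) = t ^ d * eval2 F x y)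
    (hG : ∀ t x y : ℝ, 0 < t → eval2 G (t * x) (t ^ β * y) = t ^ d * eval2 G x y)
    (eF eG : ℕ)
    (heF : (MvPolynomial.X 0 : MvPolynomial (Fin 2) ℝ) ^ eF ∣ F ∧
      ¬ (MvPolynomial.X 0 : MvPolynomial (Fin 2) ℝ) ^ (eF + 1) ∣ F)
    (heG : (MvPolynomial.X 0 : MvPolynomial (Fin 2) ℝ) ^ eG ∣ G ∧
      ¬ (MvPolynomial.X 0 : MvPolynomial (Fin 2) ℝ) ^ (eG + 1) ∣ G)
    (l1 l2 : ℝ) (hl1 : l1 ≠ 0) (hl2 : l2 ≠ 0) (hll : 0 < l1 * l2)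
    (φ1 φ2 : ℝ → ℝ)
    (hφ1bij : Function.Bijective φ1) (hφ1lip : ∃ K : NNReal, LipschitzWith K φ1)
    (hφ1inv : ∃ K : NNReal, LipschitzWith K (Function.invFun φ1))
    (hφ2bij : Function.Bijective φ2) (hφ2lip : ∃ K : NNReal, LipschitzWith K φ2)
    (hφ2inv : ∃ K : NNReal, LipschitzWith K (Function.invFun φ2))
    (hpos : 0 < l1 → 0 < l2 →
      (∀ t : ℝ, |l1| ^ d * eval2 G 1 (φ1 t) = eval2 F 1 t) ∧
      (∀ t : ℝ, |l2| ^ d * eval2 G (-1) (φ2 t) = eval2 F (-1) t))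
    (hneg : l1 < 0 → l2 < 0 →
      (∀ t : ℝ, |l1| ^ d * eval2 G (-1) (φ1 t) = eval2 F 1 t) ∧
      (∀ t : ℝ, |l2| ^ d * eval2 G 1 (φ2 t) = eval2 F (-1) t)) :
    eF = eG := by
  have hβ0 : 0 < β := by
    rw [hβ]
    have : 0 < r := by omega
    positivity
  have hk : |l1| ^ d ≠ 0 := by positivity
  rcases lt_or_gt_of_ne hl1 with h | h
  · have h2 : l2 < 0 := by
      by_contra hc
      nlinarith
    exact aux_both d eF eG β hβ0 F G hF hG heF heG _ 1 (-1) hk (by simp) (by simp) φ1 hφ1bij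
      hφ1lip hφ1inv (hneg h h2).1
  · have h2 : 0 < l2 := by
      by_contra hc
      nlinarith
    exact aux_both d eF eG β hβ0 F G hF hG heF heG _ 1 1 hk (by simp) (by simp) φ1 hφ1bij
      hφ1lip hφ1inv (hpos h h2).1
end

section
/- Let F(X, Y) = a·X^d and G(X, Y) = b·X^d, where a, b are nonzero real numbers and d ≥ 1. (i) If d is even, then there exist a neighborhood U of the origin in ℝ² and an injective map Φ : U → ℝ² with Φ(0) = 0 that is bi-Lipschitz onto its image and satisfies G(Φ(x, y)) = F(x, y) for all (x, y) ∈ U, if and only if a and b have the same sign (a·b > 0). (ii) If d is odd, then such U and Φ always exist. -/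
open Filter Topology

/-- `F` and `G` are (ℛ-)Lipschitz equivalent near the origin: there is a neighborhood
`U` of `0 ∈ ℝ²` and an injective map `Φ : U → ℝ²` fixing the origin, bi-Lipschitz onto
its image, with `G ∘ Φ = F` on `U`. -/
def LocalLipEquiv (F G : ℝ × ℝ → ℝ) : Prop :=
  ∃ U ∈ nhds (0 : ℝ × ℝ), ∃ Φ : ℝ × ℝ → ℝ × ℝ,
    Set.InjOn Φ U ∧ Φ 0 = 0 ∧ (∃ K : NNReal, LipschitzOnWith K Φ U) ∧
    (∃ A : ℝ, 0 < A ∧ ∀ p ∈ U, ∀ q ∈ U, A * dist p q ≤ dist (Φ p) (Φ q)) ∧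
    ∀ p ∈ U, G (Φ p) = F p

theorem aux_equiv (a b c : ℝ) (d : ℕ) (hc : c ≠ 0) (h : b * c ^ d = a) :
    LocalLipEquiv (fun p => a * p.1 ^ d) (fun p => b * p.1 ^ d) := by
  have hc' : 0 < |c| := abs_pos.mpr hc
  have key : ∀ p q : ℝ × ℝ, dist ((c * p.1, p.2) : ℝ × ℝ) (c * q.1, q.2)
      = max (|c| * dist p.1 q.1) (dist p.2 q.2) := by
    intro p q
    rw [Prod.dist_eq]
    simp only [Real.dist_eq]
    rw [← mul_sub, abs_mul]
  have hA : ∀ p q : ℝ × ℝ, min |c| 1 * dist p q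
      ≤ dist ((c * p.1, p.2) : ℝ × ℝ) (c * q.1, q.2) := by
    intro p q
    rw [key, Prod.dist_eq, mul_max_of_nonneg _ _ (by positivity)]
    apply max_le_max
    · exact mul_le_mul_of_nonneg_right (min_le_left _ _) dist_nonneg
    · exact mul_le_of_le_one_left dist_nonneg (min_le_right _ _)
  have hm : 0 < min |c| 1 := lt_min hc' one_pos
  refine ⟨Set.univ, univ_mem, fun p => (c * p.1, p.2), ?_, by simp, ⟨Real.toNNReal (max |c| 1), ?_⟩,
    ⟨min |c| 1, hm, fun p _ q _ => hA p q⟩, ?_⟩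
  · intro p _ q _ hpq
    have h1 := hA p q
    simp only at hpq
    rw [hpq, dist_self] at h1
    have h2 : dist p q ≤ 0 := by
      by_contra h3
      push Not at h3
      have := mul_pos hm h3
      linarith
    exact dist_le_zero.mp h2
  · apply LipschitzOnWith.of_dist_le_mul
    intro p _ q _
    have h0 : (0:ℝ) ≤ max |c| 1 := le_max_of_le_right zero_le_one
    rw [key, Real.coe_toNNReal _ h0, Prod.dist_eq, mul_max_of_nonneg _ _ h0]
    apply max_le_max
    · exact mul_le_mul_of_nonneg_right (le_max_left _ _) dist_nonneg
    · exact le_mul_of_one_le_left dist_nonneg (le_max_right _ _)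
  · intro p _
    simp only
    rw [mul_pow, ← mul_assoc, h]

theorem aux_root_s16 (r : ℝ) (hr : 0 < r) (d : ℕ) (hd : 1 ≤ d) : ∃ c : ℝ, c ≠ 0 ∧ c ^ d = r :=
  ⟨r ^ ((d : ℝ)⁻¹), (Real.rpow_pos_of_pos hr _).ne',
    Real.rpow_inv_natCast_pow hr.le (by omega)⟩

/-- For `F = a·X^d` and `G = b·X^d` with `a, b ≠ 0`: if `d` is even, `F` and `G` are
Lipschitz equivalent near the origin iff `a` and `b` have the same sign; if `d` is odd,
they always are. -/
theorem stmt_16 (a b : ℝ) (ha : a ≠ 0) (hb : b ≠ 0) (d : ℕ) (hd : 1 ≤ d) :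
    (Even d →
      (LocalLipEquiv (fun p => a * p.1 ^ d) (fun p => b * p.1 ^ d) ↔ 0 < a * b)) ∧
    (Odd d → LocalLipEquiv (fun p => a * p.1 ^ d) (fun p => b * p.1 ^ d)) := by
  have pos : 0 < a * b → LocalLipEquiv (fun p => a * p.1 ^ d) (fun p => b * p.1 ^ d) := by
    intro hab
    obtain ⟨c, hc, h⟩ := aux_root_s16 (a / b) (by
      have : a / b = a * b / b ^ 2 := by field_simp
      rw [this]; positivity) d hd
    exact aux_equiv a b c d hc (by rw [h]; field_simp)
  refine ⟨fun he => ⟨?_, pos⟩, fun ho => ?_⟩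
  · rintro ⟨U, hU, Φ, -, -, -, -, h⟩
    obtain ⟨ε, hε, hb'⟩ := Metric.mem_nhds_iff.mp hU
    have hmem : ((ε / 2, 0) : ℝ × ℝ) ∈ U := by
      apply hb'
      rw [Metric.mem_ball, Prod.dist_eq]
      simp [abs_of_pos hε, hε]
    have h1 := h _ hmem
    simp only at h1
    have h2 : 0 < (ε / 2) ^ d := by positivity
    have h3 : 0 ≤ (Φ (ε / 2, 0)).1 ^ d := he.pow_nonneg _
    have h4 : 0 ≤ (a * b) * (ε / 2) ^ d := by
      have : (a * b) * (ε / 2) ^ d = b ^ 2 * (Φ (ε / 2, 0)).1 ^ d := by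
        linear_combination (-b) * h1
      rw [this]; positivity
    exact lt_of_le_of_ne (nonneg_of_mul_nonneg_left h4 h2) (mul_ne_zero ha hb).symm
  · rcases lt_or_gt_of_ne (mul_ne_zero ha hb) with hab | hab
    · obtain ⟨c, hc, h⟩ := aux_root_s16 (-(a / b)) (by
        have : -(a / b) = -(a * b) / b ^ 2 := by field_simp
        rw [this]
        have : 0 < -(a * b) := by linarith
        positivity) d hd
      exact aux_equiv a b (-c) d (neg_ne_zero.mpr hc) (by rw [ho.neg_pow, h]; field_simp)
    · exact pos hab
end

section
/- Let β = r/s be a rational number with r > s > 0 and gcd(r, s) = 1, and let F, G ∈ ℝ[X, Y] be β-quasihomogeneous polynomials of degree d ≥ 1, neither of which is a scalar multiple of X^d. Let f₊, f₋ and g₊, g₋ be the height functions of F and G. Let λ₁, λ₂ be nonzero real numbers with λ₁λ₂ > 0 and φ₁, φ₂ : ℝ → ℝ bi-Lipschitz homeomorphisms such that: if λ₁ > 0 and λ₂ > 0 then |λ₁|^d·(g₊ ∘ φ₁) = f₊ and |λ₂|^d·(g₋ ∘ φ₂) = f₋, while if λ₁ < 0 and λ₂ < 0 then |λ₁|^d·(g₋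 ∘ φ₁) = f₊ and |λ₂|^d·(g₊ ∘ φ₂) = f₋; and let L₁, L₂ be real numbers with φᵢ(t)/t → Lᵢ as |t| → +∞ (i = 1, 2). Then |λ₁|^β·L₁ = |λ₂|^β·L₂ holds if and only if both of the following hold: (i) φ₁ and φ₂ are coherent (either both increasing or both decreasing), and (ii) either X divides neither F nor G, or λ₁ = λ₂. -/
open Filter Topology

lemma aux_support (r s d : ℕ) (hs : 0 < s) (β : ℝ) (hβ : β = (r : ℝ) / (s : ℝ))
    (F : MvPolynomial (Fin 2) ℝ)
    (hF : ∀ t x y : ℝ, 0 < t → eval2 F (t * x) (t ^ β * y) = t ^ d * eval2 F x y)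
    (m : Fin 2 →₀ ℕ) (hm : m ∈ F.support) : s * m 0 + r * m 1 = s * d := by
  set H : MvPolynomial (Fin 2) ℝ := ∑ n ∈ F.support,
    MvPolynomial.monomial n (((2:ℝ)^s)^(n 0) * ((2:ℝ)^r)^(n 1) * F.coeff n) with hH
  have hpow : ((2:ℝ)^s) ^ β = 2 ^ r := by
    rw [hβ, ← Real.rpow_natCast, ← Real.rpow_mul (by norm_num), ← Real.rpow_natCast]
    congr 1
    field_simp
  have key : H = MvPolynomial.C (((2:ℝ)^s)^d) * F := by
    apply MvPolynomial.funext
    intro z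
    have h := hF (2^s) (z 0) (z 1) (by positivity)
    rw [hpow] at h
    have hz : ![z 0, z 1] = z := by ext i; fin_cases i <;> rfl
    unfold eval2 at h
    rw [hz] at h
    rw [map_mul, MvPolynomial.eval_C, ← h, hH, map_sum, MvPolynomial.eval_eq']
    refine Finset.sum_congr rfl fun n _ => ?_
    rw [MvPolynomial.eval_monomial, Finsupp.prod_fintype _ _ (by simp)]
    simp [Fin.prod_univ_two]
    ring
  have hc := congrArg (MvPolynomial.coeff m) key
  rw [hH, MvPolynomial.coeff_sum, MvPolynomial.coeff_C_mul] at hc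
  simp only [MvPolynomial.coeff_monomial] at hc
  rw [Finset.sum_ite_eq' F.support m, if_pos hm] at hc
  have h0 : F.coeff m ≠ 0 := MvPolynomial.mem_support_iff.mp hm
  have h1 := mul_right_cancel₀ h0 hc
  rw [← pow_mul, ← pow_mul, ← pow_mul, ← pow_add] at h1
  exact Nat.pow_right_injective (le_refl 2) (by exact_mod_cast h1)

lemma aux_pow {m e : ℕ} (h : m < e) :
    Tendsto (fun t : ℝ => t ^ m / t ^ e) (Bornology.cobounded ℝ) (𝓝 0) := by
  have h1 : Tendsto (fun t : ℝ => (t⁻¹) ^ (e - m)) (Bornology.cobounded ℝ) (𝓝 (0 ^ (e - m))) :=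
    (Filter.tendsto_inv₀_cobounded).pow _
  rw [zero_pow (by omega)] at h1
  refine h1.congr' ?_
  filter_upwards [Bornology.eventually_ne_cobounded (0:ℝ)] with t ht
  obtain ⟨k, rfl⟩ := Nat.exists_eq_add_of_lt h
  have : m + k + 1 - m = k + 1 := by omega
  rw [this, inv_pow, add_assoc, pow_add]
  field_simp
  ring

lemma aux_A (r s d : ℕ) (hrs : s < r) (hs : 0 < s) (β : ℝ) (hβ : β = (r : ℝ) / (s : ℝ))
    (F : MvPolynomial (Fin 2) ℝ)
    (hF : ∀ t x y : ℝ, 0 < t → eval2 F (t * x) (t ^ β * y) = t ^ d * eval2 F x y)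
    (hFX : ∀ c : ℝ, F ≠ MvPolynomial.C c * (MvPolynomial.X 0 : MvPolynomial (Fin 2) ℝ) ^ d) :
    ∃ (e n : ℕ) (c : ℝ), 1 ≤ e ∧ c ≠ 0 ∧ s * n + r * e = s * d ∧
      ((MvPolynomial.X 0 : MvPolynomial (Fin 2) ℝ) ∣ F ↔ n ≠ 0) ∧
      ∀ x : ℝ, Tendsto (fun t => eval2 F x t / t ^ e) (Bornology.cobounded ℝ) (𝓝 (c * x ^ n)) := by
  have hsup := aux_support r s d hs β hβ F hF
  have hne : F.support.Nonempty := by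
    rw [Finset.nonempty_iff_ne_empty]
    intro h
    rw [MvPolynomial.support_eq_empty] at h
    exact hFX 0 (by simp [h])
  obtain ⟨M, hM, hmax⟩ := Finset.exists_max_image F.support (fun m => m 1) hne
  have huniq : ∀ m ∈ F.support, m 1 = M 1 → m = M := by
    intro m hm h
    have h1 := hsup m hm
    have h2 := hsup M hM
    rw [h] at h1
    have : s * m 0 = s * M 0 := by omega
    have := Nat.eq_of_mul_eq_mul_left hs this
    ext i
    fin_cases i <;> simpa
  refine ⟨M 1, M 0, F.coeff M, ?_, MvPolynomial.mem_support_iff.mp hM, hsup M hM, ?_, ?_⟩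
  · by_contra hcon
    have hM1 : M 1 = 0 := by omega
    have hM0 : M 0 = d := by
      have := hsup M hM
      rw [hM1] at this
      exact Nat.eq_of_mul_eq_mul_left hs (by omega)
    have hMs : M = Finsupp.single 0 d := by
      ext i
      fin_cases i <;> simp [hM1, hM0]
    apply hFX (F.coeff M)
    rw [MvPolynomial.C_mul_X_pow_eq_monomial, ← hMs]
    ext m
    rw [MvPolynomial.coeff_monomial]
    split_ifs with h
    · rw [h]
    · by_contra hm
      have hm' : m ∈ F.support := MvPolynomial.mem_support_iff.mpr hm
      have := hmax m hm'
      exact h (huniq m hm' (by omega)).symm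
  · rw [MvPolynomial.X_dvd_iff_modMonomial_eq_zero]
    constructor
    · intro h h0
      have h2 := congrArg (MvPolynomial.coeff M) h
      rw [MvPolynomial.coeff_modMonomial_of_not_le] at h2
      · exact MvPolynomial.mem_support_iff.mp hM (by simpa using h2)
      · intro hle
        have := hle 0
        simp [h0] at this
    · intro h0
      ext m
      by_cases hle : Finsupp.single 0 1 ≤ m
      · rw [MvPolynomial.coeff_modMonomial_of_le _ hle]; simp
      · rw [MvPolynomial.coeff_modMonomial_of_not_le _ hle]
        by_contra hm
        have hm' : m ∈ F.support := MvPolynomial.mem_support_iff.mpr (by simpa using hm)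
        have hm0 : m 0 = 0 := by
          by_contra h
          apply hle
          rw [Finsupp.single_le_iff]; omega
        have h1 := hsup m hm'
        have h2 := hsup M hM
        have h3 := hmax m hm'
        rw [hm0] at h1
        have h4 : r * m 1 ≤ r * M 1 := Nat.mul_le_mul_left _ h3
        have h5 : 0 < s * M 0 := Nat.mul_pos hs (by omega)
        omega
  · intro x
    have h1 : ∀ t : ℝ, eval2 F x t / t ^ (M 1) =
        ∑ m ∈ F.support, F.coeff m * x ^ (m 0) * (t ^ (m 1) / t ^ (M 1)) := by
      intro t
      unfold eval2
      rw [MvPolynomial.eval_eq', Finset.sum_div]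
      refine Finset.sum_congr rfl fun m _ => ?_
      simp [Fin.prod_univ_two]
      ring
    simp_rw [h1]
    have h2 : F.coeff M * x ^ (M 0) =
        ∑ m ∈ F.support, F.coeff m * x ^ (m 0) * (if m = M then 1 else 0) := by
      simp only [mul_ite, mul_one, mul_zero]
      rw [Finset.sum_ite_eq' F.support M, if_pos hM]
    rw [h2]
    refine tendsto_finsetSum _ fun m hm => ?_
    refine Tendsto.const_mul _ ?_
    split_ifs with h
    · subst h
      refine tendsto_const_nhds.congr' ?_
      filter_upwards [Bornology.eventually_ne_cobounded (0:ℝ)] with t ht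
      field_simp
    · refine aux_pow ?_
      have h3 := hmax m hm
      have : m 1 ≠ M 1 := fun h' => h (huniq m hm h')
      omega

lemma aux_B (F G : MvPolynomial (Fin 2) ℝ) (x x' k a b L : ℝ) (e e' n n' : ℕ)
    (hx : |x| = 1) (hx' : |x'| = 1) (ha : a ≠ 0) (hb : b ≠ 0) (hk : k ≠ 0) (hL : L ≠ 0)
    (φ : ℝ → ℝ)
    (hFt : Tendsto (fun t => eval2 F x t / t ^ e) (Bornology.cobounded ℝ) (𝓝 (a * x ^ n)))
    (hGt : Tendsto (fun t => eval2 G x' t / t ^ e') (Bornology.cobounded ℝ) (𝓝 (b * x' ^ n')))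
    (hφ : Tendsto (fun t => φ t / t) atTop (𝓝 L))
    (h : ∀ t, k * eval2 G x' (φ t) = eval2 F x t) :
    e = e' ∧ |k| * |b| * |L| ^ e' = |a| := by
  have hx0 : x ≠ 0 := by intro h; simp [h] at hx
  have hx0' : x' ≠ 0 := by intro h; simp [h] at hx'
  have hcob : (atTop : Filter ℝ) ≤ Bornology.cobounded ℝ := by
    rw [← tendsto_id', ← tendsto_norm_atTop_iff_cobounded]
    exact tendsto_abs_atTop_atTop
  have hφc : Tendsto φ atTop (Bornology.cobounded ℝ) := by
    rw [← tendsto_norm_atTop_iff_cobounded]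
    have h1 : Tendsto (fun t => |φ t / t| * |t|) atTop atTop :=
      Tendsto.pos_mul_atTop (abs_pos.mpr hL) hφ.abs tendsto_abs_atTop_atTop
    refine h1.congr' ?_
    filter_upwards [eventually_ne_atTop 0] with t ht
    rw [← abs_mul, div_mul_cancel₀ _ ht]; rfl
  have hF' := hFt.mono_left hcob
  have hB : Tendsto (fun t => eval2 F x t / t ^ e') atTop (𝓝 (k * (b * x' ^ n') * L ^ e')) := by
    have h1 := ((hGt.comp hφc).const_mul k).mul (hφ.pow e')
    refine h1.congr' ?_
    have h2 := hφc.eventually (Bornology.eventually_ne_cobounded (0:ℝ))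
    filter_upwards [eventually_ne_atTop 0, h2] with t ht ht2
    rw [← h t]
    simp only [Function.comp, div_pow]
    field_simp
  have hA0 : a * x ^ n ≠ 0 := mul_ne_zero ha (pow_ne_zero _ hx0)
  have hB0 : k * (b * x' ^ n') * L ^ e' ≠ 0 :=
    mul_ne_zero (mul_ne_zero hk (mul_ne_zero hb (pow_ne_zero _ hx0'))) (pow_ne_zero _ hL)
  have gen : ∀ (p q : ℕ) (A B : ℝ), p < q →
      Tendsto (fun t => eval2 F x t / t ^ p) atTop (𝓝 A) →
      Tendsto (fun t => eval2 F x t / t ^ q) atTop (𝓝 B) → B = 0 := by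
    intro p q A B hpq h1 h2
    have h3 := h1.mul ((aux_pow hpq).mono_left hcob)
    rw [mul_zero] at h3
    refine tendsto_nhds_unique h2 (h3.congr' ?_)
    filter_upwards [eventually_ne_atTop 0] with t ht
    field_simp
  have hee : e = e' := by
    rcases lt_trichotomy e e' with hlt | heq | hlt
    · exact absurd (gen _ _ _ _ hlt hF' hB) hB0
    · exact heq
    · exact absurd (gen _ _ _ _ hlt hB hF') hA0
  refine ⟨hee, ?_⟩
  subst hee
  have := congrArg abs (tendsto_nhds_unique hB hF')
  simpa [abs_mul, abs_pow, hx, hx'] using this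

lemma aux_L (φ : ℝ → ℝ) (hb : Function.Bijective φ) (hl : ∃ K : NNReal, LipschitzWith K φ)
    (hi : ∃ K : NNReal, LipschitzWith K (Function.invFun φ)) (L : ℝ)
    (hL : Tendsto (fun t => φ t / t) atTop (𝓝 L)) :
    (StrictMono φ ∧ 0 < L) ∨ (StrictAnti φ ∧ L < 0) := by
  obtain ⟨K, hK⟩ := hl
  obtain ⟨K', hK'⟩ := hi
  have h0 : Tendsto (fun t => (φ t - φ 0) / t) atTop (𝓝 L) := by
    have h1 : Tendsto (fun t : ℝ => φ 0 / t) atTop (𝓝 0) :=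
      tendsto_const_nhds.div_atTop tendsto_id
    have := hL.sub h1
    simpa [sub_div] using this
  have hne : L ≠ 0 := by
    rintro rfl
    have h1 : Tendsto (fun t => (K':ℝ) * |(φ t - φ 0) / t|) atTop (𝓝 (K' * |0|)) :=
      h0.abs.const_mul _
    simp only [abs_zero, mul_zero] at h1
    have : (1:ℝ) ≤ 0 := by
      refine ge_of_tendsto h1 ?_
      filter_upwards [eventually_gt_atTop 0] with t ht
      have h2 := hK'.dist_le_mul (φ t) (φ 0)
      rw [Function.leftInverse_invFun hb.1, Function.leftInverse_invFun hb.1, Real.dist_eq,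
        Real.dist_eq, sub_zero, abs_of_pos ht] at h2
      rw [abs_div, abs_of_pos ht, ← mul_div_assoc, le_div_iff₀ ht]
      linarith
    linarith
  rcases hK.continuous.strictMono_of_inj hb.1 with hm | hm
  · left
    refine ⟨hm, lt_of_le_of_ne ?_ hne.symm⟩
    refine ge_of_tendsto h0 ?_
    filter_upwards [eventually_gt_atTop 0] with t ht
    have := hm ht
    exact div_nonneg (by linarith) ht.le
  · right
    refine ⟨hm, lt_of_le_of_ne ?_ hne⟩
    refine le_of_tendsto h0 ?_
    filter_upwards [eventually_gt_atTop 0] with t ht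
    have := hm ht
    exact div_nonpos_of_nonpos_of_nonneg (by linarith) ht.le

lemma aux_num (r s d n e : ℕ) (hs : 0 < s) (β : ℝ) (hβ : β = (r : ℝ) / (s : ℝ))
    (he : 1 ≤ e) (hne : s * n + r * e = s * d) (a b u v : ℝ) (ha : 0 < a) (hb : 0 < b)
    (hu : 0 < u) (hv : 0 < v) (h : a ^ d * u ^ e = b ^ d * v ^ e) :
    a ^ β * u = b ^ β * v ↔ (n = 0 ∨ a = b) := by
  have hd : (d:ℝ) = n + β * e := by
    have h1 : (s:ℝ) * n + r * e = s * d := by exact_mod_cast hne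
    rw [hβ]; field_simp; linarith
  have key : ∀ c w : ℝ, 0 < c → c ^ d * w ^ e = c ^ n * (c ^ β * w) ^ e := by
    intro c w hc
    rw [← Real.rpow_natCast c d, hd, Real.rpow_add hc, Real.rpow_natCast, Real.rpow_mul hc.le,
      Real.rpow_natCast, mul_pow]
    ring
  rw [key a u ha, key b v hb] at h
  have hA : 0 < a ^ β * u := by positivity
  have hB : 0 < b ^ β * v := by positivity
  constructor
  · intro heq
    rw [heq] at h
    have h1 := mul_right_cancel₀ (pow_ne_zero e hB.ne') h
    by_cases hn : n = 0
    · exact Or.inl hn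
    · exact Or.inr ((pow_left_inj₀ ha.le hb.le hn).mp h1)
  · intro hor
    have hab : a ^ n = b ^ n := by
      rcases hor with h0 | h0
      · simp [h0]
      · rw [h0]
    rw [hab] at h
    exact (pow_left_inj₀ hA.le hB.le (by omega)).mp (mul_left_cancel₀ (pow_ne_zero n hb.ne') h)

/-- Characterization of β-transitions: given β-quasihomogeneous polynomials `F, G` of
degree `d ≥ 1`, neither a scalar multiple of `X^d`, whose height functions are related
by a proto-transition `(λ, φ)` with limits `φᵢ(t)/t → Lᵢ`, the identity
`|λ₁|^β·L₁ = |λ₂|^β·L₂` holds iff (i) `φ₁, φ₂` are coherent and (ii) `X` divides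
neither `F` nor `G`, or `λ₁ = λ₂`. -/
theorem stmt_17 (r s d : ℕ) (hrs : s < r) (hs : 0 < s) (hgcd : Nat.gcd r s = 1)
    (hd : 1 ≤ d) (β : ℝ) (hβ : β = (r : ℝ) / (s : ℝ))
    (F G : MvPolynomial (Fin 2) ℝ)
    (hF : ∀ t x y : ℝ, 0 < t → eval2 F (t * x) (t ^ β * y) = t ^ d * eval2 F x y)
    (hG : ∀ t x y : ℝ, 0 < t → eval2 G (t * x) (t ^ β * y) = t ^ d * eval2 G x y)
    (hFX : ∀ c : ℝ, F ≠ MvPolynomial.C c * (MvPolynomial.X 0 : MvPolynomial (Fin 2) ℝ) ^ d)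
    (hGX : ∀ c : ℝ, G ≠ MvPolynomial.C c * (MvPolynomial.X 0 : MvPolynomial (Fin 2) ℝ) ^ d)
    (l1 l2 : ℝ) (hl1 : l1 ≠ 0) (hl2 : l2 ≠ 0) (hll : 0 < l1 * l2)
    (φ1 φ2 : ℝ → ℝ)
    (hφ1bij : Function.Bijective φ1) (hφ1lip : ∃ K : NNReal, LipschitzWith K φ1)
    (hφ1inv : ∃ K : NNReal, LipschitzWith K (Function.invFun φ1))
    (hφ2bij : Function.Bijective φ2) (hφ2lip : ∃ K : NNReal, LipschitzWith K φ2)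
    (hφ2inv : ∃ K : NNReal, LipschitzWith K (Function.invFun φ2))
    (hpos : 0 < l1 → 0 < l2 →
      (∀ t : ℝ, |l1| ^ d * eval2 G 1 (φ1 t) = eval2 F 1 t) ∧
      (∀ t : ℝ, |l2| ^ d * eval2 G (-1) (φ2 t) = eval2 F (-1) t))
    (hneg : l1 < 0 → l2 < 0 →
      (∀ t : ℝ, |l1| ^ d * eval2 G (-1) (φ1 t) = eval2 F 1 t) ∧
      (∀ t : ℝ, |l2| ^ d * eval2 G 1 (φ2 t) = eval2 F (-1) t))
    (L1 L2 : ℝ)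
    (hL1top : Tendsto (fun t => φ1 t / t) atTop (𝓝 L1))
    (hL1bot : Tendsto (fun t => φ1 t / t) atBot (𝓝 L1))
    (hL2top : Tendsto (fun t => φ2 t / t) atTop (𝓝 L2))
    (hL2bot : Tendsto (fun t => φ2 t / t) atBot (𝓝 L2)) :
    |l1| ^ β * L1 = |l2| ^ β * L2 ↔
      ((StrictMono φ1 ∧ StrictMono φ2) ∨ (StrictAnti φ1 ∧ StrictAnti φ2)) ∧
      ((¬ (MvPolynomial.X 0 : MvPolynomial (Fin 2) ℝ) ∣ F ∧
        ¬ (MvPolynomial.X 0 : MvPolynomial (Fin 2) ℝ) ∣ G) ∨ l1 = l2) := by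
  obtain ⟨e, n, a, he, ha, hen, hXF, hFt⟩ := aux_A r s d hrs hs β hβ F hF hFX
  obtain ⟨e', n', b, he', hb, hen', hXG, hGt⟩ := aux_A r s d hrs hs β hβ G hG hGX
  have hm1 := aux_L φ1 hφ1bij hφ1lip hφ1inv L1 hL1top
  have hm2 := aux_L φ2 hφ2bij hφ2lip hφ2inv L2 hL2top
  have hL1 : L1 ≠ 0 := by rcases hm1 with h | h <;> [exact h.2.ne'; exact h.2.ne]
  have hL2 : L2 ≠ 0 := by rcases hm2 with h | h <;> [exact h.2.ne'; exact h.2.ne]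
  have hk1 : |l1| ^ d ≠ 0 := pow_ne_zero _ (abs_ne_zero.mpr hl1)
  have hk2 : |l2| ^ d ≠ 0 := pow_ne_zero _ (abs_ne_zero.mpr hl2)
  have hsign : (0 < l1 ∧ 0 < l2) ∨ (l1 < 0 ∧ l2 < 0) := by
    rcases lt_or_gt_of_ne hl1 with h | h
    · exact Or.inr ⟨h, by nlinarith⟩
    · exact Or.inl ⟨h, by nlinarith⟩
  have hmain : e = e' ∧ |l1| ^ d * |b| * |L1| ^ e' = |a| ∧ |l2| ^ d * |b| * |L2| ^ e' = |a| := by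
    rcases hsign with ⟨h1, h2⟩ | ⟨h1, h2⟩
    · obtain ⟨p1, p2⟩ := hpos h1 h2
      have q1 := aux_B F G 1 1 _ a b L1 e e' n n' (by simp) (by simp) ha hb hk1 hL1 φ1
        (hFt 1) (hGt 1) hL1top p1
      have q2 := aux_B F G (-1) (-1) _ a b L2 e e' n n' (by simp) (by simp) ha hb hk2 hL2 φ2
        (hFt (-1)) (hGt (-1)) hL2top p2
      exact ⟨q1.1, by simpa using q1.2, by simpa using q2.2⟩
    · obtain ⟨p1, p2⟩ := hneg h1 h2
      have q1 := aux_B F G 1 (-1) _ a b L1 e e' n n' (by simp) (by simp) ha hb hk1 hL1 φ1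
        (hFt 1) (hGt (-1)) hL1top p1
      have q2 := aux_B F G (-1) 1 _ a b L2 e e' n n' (by simp) (by simp) ha hb hk2 hL2 φ2
        (hFt (-1)) (hGt 1) hL2top p2
      exact ⟨q1.1, by simpa using q1.2, by simpa using q2.2⟩
  obtain ⟨rfl, hq1, hq2⟩ := hmain
  have hnn : n = n' := Nat.eq_of_mul_eq_mul_left hs (by omega)
  subst hnn
  have hq : |l1| ^ d * |L1| ^ e = |l2| ^ d * |L2| ^ e := by
    apply mul_left_cancel₀ (abs_ne_zero.mpr hb)
    linarith
  have hnum := aux_num r s d n e hs β hβ he hen |l1| |l2| |L1| |L2| (abs_pos.mpr hl1)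
    (abs_pos.mpr hl2) (abs_pos.mpr hL1) (abs_pos.mpr hL2) hq
  have hll' : |l1| = |l2| ↔ l1 = l2 := by
    rcases hsign with ⟨h1, h2⟩ | ⟨h1, h2⟩
    · rw [abs_of_pos h1, abs_of_pos h2]
    · rw [abs_of_neg h1, abs_of_neg h2, neg_inj]
  rw [hll'] at hnum
  have hr : ((¬ (MvPolynomial.X 0 : MvPolynomial (Fin 2) ℝ) ∣ F ∧
        ¬ (MvPolynomial.X 0 : MvPolynomial (Fin 2) ℝ) ∣ G) ∨ l1 = l2) ↔ (n = 0 ∨ l1 = l2) := by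
    rw [hXF, hXG, not_not, and_self]
  rw [hr, ← hnum]
  have hA : 0 < |l1| ^ β := Real.rpow_pos_of_pos (abs_pos.mpr hl1) _
  have hB : 0 < |l2| ^ β := Real.rpow_pos_of_pos (abs_pos.mpr hl2) _
  have hno : ∀ φ : ℝ → ℝ, StrictMono φ → StrictAnti φ → False := fun φ h1 h2 =>
    lt_asymm (h1 zero_lt_one) (h2 zero_lt_one)
  rcases hm1 with ⟨m1, p1⟩ | ⟨m1, p1⟩ <;> rcases hm2 with ⟨m2, p2⟩ | ⟨m2, p2⟩
  · rw [abs_of_pos p1, abs_of_pos p2]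
    exact ⟨fun h => ⟨Or.inl ⟨m1, m2⟩, h⟩, fun h => h.2⟩
  · constructor
    · intro h
      have := mul_pos hA p1
      have := mul_neg_of_pos_of_neg hB p2
      linarith
    · rintro ⟨⟨_, h⟩ | ⟨h, _⟩, _⟩
      · exact (hno _ h m2).elim
      · exact (hno _ m1 h).elim
  · constructor
    · intro h
      have := mul_pos hB p2
      have := mul_neg_of_pos_of_neg hA p1
      linarith
    · rintro ⟨⟨h, _⟩ | ⟨_, h⟩, _⟩
      · exact (hno _ h m1).elim
      · exact (hno _ m2 h).elim
  · rw [abs_of_neg p1, abs_of_neg p2, mul_neg, mul_neg, neg_inj]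
    exact ⟨fun h => ⟨Or.inr ⟨m1, m2⟩, h⟩, fun h => h.2⟩
end

section
/- Let β = r/s be a rational number with r > s > 0 and gcd(r, s) = 1, and let F, G ∈ ℝ[X, Y] be β-quasihomogeneous polynomials of degree d ≥ 1, neither of which is a scalar multiple of X^d, with height functions f₊, f₋ and g₊, g₋. Suppose there exist nonzero real numbers λ₁, λ₂ with λ₁λ₂ > 0 and bi-Lipschitz homeomorphisms φ₁, φ₂ : ℝ → ℝ such that: if λ₁ > 0 and λ₂ > 0 then |λ₁|^d·(g₊ ∘ φ₁) = f₊ and |λ₂|^d·(g₋ ∘ φ₂) = f₋, while if λ₁ < 0 and λ₂ < 0 then |λ₁|^d·(g₋ ∘ φ₁) = f₊ and |λ₂|^d·(g₊ ∘ φ₂) = f₋. If r is even or s is odd, then there exist nonzero real numbers λ̃₁, λ̃₂ with λ̃₁λ̃₂ > 0, bi-Lipschitz homeomorphisms φ̃₁, φ̃₂ : ℝ → ℝ satisfying the same sign-dependent height-function equations (with λ̃ᵢ, φ̃ᵢ in place of λᵢ, φᵢ), and real numbers L̃₁, L̃₂ with φ̃ᵢ(t)/t → L̃ᵢ as |t|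 → +∞ and |λ̃₁|^β·L̃₁ = |λ̃₂|^β·L̃₂. -/
open Filter Topology

noncomputable def p2 (F : MvPolynomial (Fin 2) ℝ) (A B : Polynomial ℝ) : Polynomial ℝ :=
  MvPolynomial.aeval ![A, B] F

lemma p2_eval (F : MvPolynomial (Fin 2) ℝ) (A B : Polynomial ℝ) (t : ℝ) :
    (p2 F A B).eval t = eval2 F (A.eval t) (B.eval t) := by
  unfold p2 eval2
  rw [MvPolynomial.aeval_def, MvPolynomial.polynomial_eval_eval₂, ← MvPolynomial.eval₂_id]
  congr 1
  · ext x; simp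
  · ext i; fin_cases i <;> simp

lemma qh_neg (r s d : ℕ) (hs : 0 < s) (β : ℝ) (hβ : β = (r : ℝ) / (s : ℝ)) (hso : Odd s)
    (F : MvPolynomial (Fin 2) ℝ)
    (hF : ∀ t x y : ℝ, 0 < t → eval2 F (t * x) (t ^ β * y) = t ^ d * eval2 F x y) (x y : ℝ) :
    eval2 F (-x) ((-1) ^ r * y) = (-1) ^ d * eval2 F x y := by
  have key : p2 F (Polynomial.X ^ s * Polynomial.C x) (Polynomial.X ^ r * Polynomial.C y)
      = (Polynomial.X ^ s) ^ d * Polynomial.C (eval2 F x y) := by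
    apply Polynomial.eq_of_infinite_eval_eq
    apply (Set.Ioi_infinite (0 : ℝ)).mono
    intro t ht
    have ht : 0 < t := ht
    have h := hF (t ^ s) x y (by positivity)
    have e : ((t ^ s : ℝ)) ^ β = t ^ r := by
      rw [← Real.rpow_natCast t s, ← Real.rpow_mul ht.le, hβ,
        mul_div_cancel₀ _ (by positivity), Real.rpow_natCast]
    rw [e] at h
    simp only [Set.mem_ofPred_eq, p2_eval]
    rw [mul_comm _ x, mul_comm _ y] at h
    simpa using h
  have h := congrArg (Polynomial.eval (-1)) key
  rw [p2_eval] at h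
  rw [mul_comm _ y]
  simpa [hso.neg_one_pow] using h

lemma qh_nonconst (d : ℕ) (β : ℝ) (F : MvPolynomial (Fin 2) ℝ)
    (hF : ∀ t x y : ℝ, 0 < t → eval2 F (t * x) (t ^ β * y) = t ^ d * eval2 F x y)
    (hFX : ∀ c : ℝ, F ≠ MvPolynomial.C c * (MvPolynomial.X 0 : MvPolynomial (Fin 2) ℝ) ^ d) :
    0 < (p2 F (Polynomial.C 1) Polynomial.X).natDegree := by
  by_contra hcon
  obtain ⟨c, hc⟩ := Polynomial.natDegree_eq_zero.mp (Nat.eq_zero_of_not_pos hcon)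
  have hc' : ∀ t, eval2 F 1 t = c := by
    intro t
    have := p2_eval F (Polynomial.C 1) Polynomial.X t
    rw [← hc] at this
    simpa using this.symm
  apply hFX c
  apply MvPolynomial.funext_set (fun _ => Set.Ioi (0 : ℝ)) (fun _ => Set.Ioi_infinite _)
  intro v hv
  have h0 : 0 < v 0 := hv 0 trivial
  have h := hF (v 0) 1 (v 1 / (v 0) ^ β) h0
  have : ![v 0, v 1] = v := by ext i; fin_cases i <;> rfl
  rw [mul_div_cancel₀ _ (Real.rpow_pos_of_pos h0 _).ne', hc', mul_one, eval2, this] at h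
  rw [h]; simp [mul_comm]

lemma key_top (P Q : Polynomial ℝ) (φ : ℝ → ℝ) (c : ℝ) (hc : 0 < c) (hP : 0 < P.natDegree)
    (h : ∀ t, c * Q.eval (φ t) = P.eval t) (hφ : Tendsto φ atTop atTop)
    (hT : φ =Θ[atTop] (fun t => t)) :
    Tendsto (fun t => φ t / t) atTop
      (𝓝 ((|P.leadingCoeff| / (c * |Q.leadingCoeff|)) ^ (1 / (P.natDegree : ℝ)))) := by
  have hP0 : P ≠ 0 := by rintro rfl; simp at hP
  have hQ0 : Q ≠ 0 := by
    rintro rfl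
    apply hP0
    apply Polynomial.funext
    intro t; rw [← h t]; simp
  have hPl : P.leadingCoeff ≠ 0 := by simpa
  have hQl : Q.leadingCoeff ≠ 0 := by simpa
  have tP : (fun t => P.eval t) =Θ[atTop] (fun t => t ^ P.natDegree) :=
    P.isEquivalent_atTop_lead.isTheta.trans
      ((Asymptotics.isTheta_const_mul_left hPl).2 (Asymptotics.isTheta_refl _ _))
  have tQ : (fun t => Q.eval t) =Θ[atTop] (fun t => t ^ Q.natDegree) :=
    Q.isEquivalent_atTop_lead.isTheta.trans
      ((Asymptotics.isTheta_const_mul_left hQl).2 (Asymptotics.isTheta_refl _ _))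
  have tQφ : (fun t => Q.eval (φ t)) =Θ[atTop] (fun t => φ t ^ Q.natDegree) :=
    ⟨tQ.1.comp_tendsto hφ, tQ.2.comp_tendsto hφ⟩
  have tPQ : (fun t => P.eval t) =Θ[atTop] (fun t => t ^ Q.natDegree) := by
    have : (fun t => P.eval t) = fun t => c * Q.eval (φ t) := by ext t; rw [h]
    rw [this]
    exact (Asymptotics.isTheta_const_mul_left hc.ne').2 (tQφ.trans (hT.pow _))
  have tpp : (fun t : ℝ => t ^ P.natDegree) =Θ[atTop] (fun t : ℝ => t ^ Q.natDegree) :=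
    tP.symm.trans tPQ
  have hne : ∀ n : ℕ, ∃ᶠ t : ℝ in atTop, t ^ n ≠ 0 := fun n =>
    ((eventually_gt_atTop (0 : ℝ)).mono fun t ht => pow_ne_zero _ ht.ne').frequently
  have hpq : P.natDegree = Q.natDegree := by
    rcases lt_trichotomy P.natDegree Q.natDegree with hlt | heq | hlt
    · exact absurd tpp.2 ((Asymptotics.isLittleO_pow_pow_atTop_of_lt hlt).not_isBigO (hne _))
    · exact heq
    · exact absurd tpp.1 ((Asymptotics.isLittleO_pow_pow_atTop_of_lt hlt).not_isBigO (hne _))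
  have lim : ∀ R : Polynomial ℝ, R ≠ 0 →
      Tendsto (fun t => R.eval t / t ^ R.natDegree) atTop (𝓝 R.leadingCoeff) := by
    intro R hR
    have := Polynomial.div_tendsto_atTop_leadingCoeff_div_of_degree_eq R
      (Polynomial.X ^ R.natDegree)
      (by rw [Polynomial.degree_X_pow, Polynomial.degree_eq_natDegree hR])
    simpa using this
  have l1 := (lim P hP0).abs
  have l2 := (((lim Q hQ0).comp hφ).abs).const_mul c
  have l3 := l1.div l2 (by positivity)
  have l4 := l3.rpow_const (p := 1 / (P.natDegree : ℝ)) (Or.inr (by positivity))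
  refine l4.congr' ?_
  have hQne : ∀ᶠ t in atTop, Q.eval t ≠ 0 := by
    have := (lim Q hQ0).eventually_ne hQl
    filter_upwards [this] with t ht h0
    simp [h0] at ht
  filter_upwards [eventually_gt_atTop 0, hφ.eventually_gt_atTop 0, hφ.eventually hQne]
    with t ht hφt hQt
  have e : |P.eval t / t ^ P.natDegree| / (c * |((fun t => Q.eval t / t ^ Q.natDegree) ∘ φ) t|)
      = (φ t / t) ^ P.natDegree := by
    have : 0 < |Q.eval (φ t)| := by positivity
    simp only [Function.comp]
    rw [← h t, ← hpq, abs_div, abs_div, abs_mul, abs_of_pos hc, abs_of_pos (pow_pos ht _),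
      abs_of_pos (pow_pos hφt _), div_pow]
    field_simp
  rw [Pi.div_apply, e, one_div, Real.pow_rpow_inv_natCast (by positivity) hP.ne']

lemma theta (φ : ℝ → ℝ) (K K' : NNReal) (hK : LipschitzWith K φ) (hK' : AntilipschitzWith K' φ)
    (hφ : Tendsto φ atTop atTop) : φ =Θ[atTop] (fun t => t) := by
  have c1 : (fun _ : ℝ => φ 0) =O[atTop] (fun t : ℝ => t) :=
    (Asymptotics.isLittleO_const_left.2 (Or.inr tendsto_norm_atTop_atTop)).isBigO
  have c2 : (fun _ : ℝ => φ 0) =O[atTop] φ :=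
    (Asymptotics.isLittleO_const_left.2 (Or.inr (tendsto_norm_atTop_atTop.comp hφ))).isBigO
  constructor
  · have : (fun t => φ t - φ 0) =O[atTop] (fun t : ℝ => t) :=
      Asymptotics.IsBigO.of_bound K (Eventually.of_forall fun t => by
        simpa [Real.dist_eq] using hK.dist_le_mul t 0)
    simpa using this.add c1
  · have : (fun t : ℝ => t) =O[atTop] (fun t => φ t - φ 0) :=
      Asymptotics.IsBigO.of_bound K' (Eventually.of_forall fun t => by
        simpa [Real.dist_eq] using hK'.le_mul_dist t 0)
    exact this.trans ((Asymptotics.isBigO_refl _ _).sub c2)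

lemma lip_neg {K : NNReal} {φ : ℝ → ℝ} (h : LipschitzWith K φ) (a b : ℝ) (ha : |a| = 1)
    (hb : |b| = 1) : LipschitzWith K (fun t => a * φ (b * t)) := by
  apply LipschitzWith.of_dist_le_mul
  intro x y
  have := h.dist_le_mul (b * x) (b * y)
  rw [Real.dist_eq, Real.dist_eq, ← mul_sub, abs_mul, hb, one_mul] at this
  rwa [Real.dist_eq, Real.dist_eq, ← mul_sub, abs_mul, ha, one_mul]

lemma anti_neg {K : NNReal} {φ : ℝ → ℝ} (h : AntilipschitzWith K φ) (a b : ℝ) (ha : |a| = 1)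
    (hb : |b| = 1) : AntilipschitzWith K (fun t => a * φ (b * t)) := by
  apply AntilipschitzWith.of_le_mul_dist
  intro x y
  have := h.le_mul_dist (b * x) (b * y)
  rw [Real.dist_eq, Real.dist_eq, ← mul_sub, abs_mul, hb, one_mul] at this
  rwa [Real.dist_eq, Real.dist_eq, ← mul_sub, abs_mul, ha, one_mul]

lemma bij_neg {φ : ℝ → ℝ} (h : Function.Bijective φ) (a b : ℝ) (ha : |a| = 1)
    (hb : |b| = 1) : Function.Bijective (fun t => a * φ (b * t)) := by
  have ha0 : a ≠ 0 := by rintro rfl; simp at ha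
  have hb0 : b ≠ 0 := by rintro rfl; simp at hb
  exact (mulLeft_bijective₀ a ha0).comp (h.comp (mulLeft_bijective₀ b hb0))

lemma limit_mono (P Q : Polynomial ℝ) (φ : ℝ → ℝ) (c : ℝ) (hc : 0 < c) (hP : 0 < P.natDegree)
    (h : ∀ t, c * Q.eval (φ t) = P.eval t) (hm : StrictMono φ) (hb : Function.Bijective φ)
    (K K' : NNReal) (hK : LipschitzWith K φ) (hK' : AntilipschitzWith K' φ) :
    ∃ L, Tendsto (fun t => φ t / t) atTop (𝓝 L) ∧ Tendsto (fun t => φ t / t) atBot (𝓝 L) := by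
  have htop : Tendsto φ atTop atTop := (hm.orderIsoOfSurjective φ hb.2).tendsto_atTop
  have hbot : Tendsto φ atBot atBot := (hm.orderIsoOfSurjective φ hb.2).tendsto_atBot
  refine ⟨_, key_top P Q φ c hc hP h htop (theta φ K K' hK hK' htop), ?_⟩
  have htop' : Tendsto (fun t => (-1) * φ ((-1) * t)) atTop atTop := by
    have := tendsto_neg_atBot_atTop.comp (hbot.comp tendsto_neg_atTop_atBot)
    simpa [Function.comp_def] using this
  have := key_top (P.comp (-Polynomial.X)) (Q.comp (-Polynomial.X)) _ c hc
    (by simpa [Polynomial.natDegree_comp] using hP) (by intro t; simp [h]) htop'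
    (theta _ K K' (lip_neg hK _ _ (by simp) (by simp)) (anti_neg hK' _ _ (by simp) (by simp)) htop')
  have h2 := this.comp tendsto_neg_atBot_atTop
  simpa [Function.comp_def, Polynomial.natDegree_comp, abs_mul] using h2

lemma limit_all (P Q : Polynomial ℝ) (φ : ℝ → ℝ) (c : ℝ) (hc : 0 < c) (hP : 0 < P.natDegree)
    (h : ∀ t, c * Q.eval (φ t) = P.eval t) (hb : Function.Bijective φ)
    (K K' : NNReal) (hK : LipschitzWith K φ) (hK' : AntilipschitzWith K' φ) :
    ∃ L, Tendsto (fun t => φ t / t) atTop (𝓝 L) ∧ Tendsto (fun t => φ t / t) atBot (𝓝 L) := by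
  rcases hK.continuous.strictMono_of_inj hb.1 with hm | hm
  · exact limit_mono P Q φ c hc hP h hm hb K K' hK hK'
  · obtain ⟨L, h1, h2⟩ := limit_mono P (Q.comp (-Polynomial.X)) (fun t => (-1) * φ (1 * t)) c hc hP
      (by intro t; simp [h]) (by intro x y hxy; simpa using hm hxy)
      (bij_neg hb _ _ (by simp) (by simp)) K K'
      (lip_neg hK _ _ (by simp) (by simp)) (anti_neg hK' _ _ (by simp) (by simp))
    refine ⟨-L, ?_, ?_⟩
    · simpa [neg_div] using h1.neg
    · simpa [neg_div] using h2.neg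

/-- If the height functions of two β-quasihomogeneous polynomials `F, G` of degree
`d ≥ 1` (neither a scalar multiple of `X^d`) are related by some proto-transition, and
`r` is even or `s` is odd, then they are related by a β-transition, i.e. one with
`|λ̃₁|^β·L̃₁ = |λ̃₂|^β·L̃₂`. -/
theorem stmt_18 (r s d : ℕ) (hrs : s < r) (hs : 0 < s) (hgcd : Nat.gcd r s = 1)
    (hd : 1 ≤ d) (β : ℝ) (hβ : β = (r : ℝ) / (s : ℝ))
    (hrso : Even r ∨ Odd s)
    (F G : MvPolynomial (Fin 2) ℝ)
    (hF : ∀ t x y : ℝ, 0 < t → eval2 F (t * x) (t ^ β * y) = t ^ d * eval2 F x y)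
    (hG : ∀ t x y : ℝ, 0 < t → eval2 G (t * x) (t ^ β * y) = t ^ d * eval2 G x y)
    (hFX : ∀ c : ℝ, F ≠ MvPolynomial.C c * (MvPolynomial.X 0 : MvPolynomial (Fin 2) ℝ) ^ d)
    (hGX : ∀ c : ℝ, G ≠ MvPolynomial.C c * (MvPolynomial.X 0 : MvPolynomial (Fin 2) ℝ) ^ d)
    (l1 l2 : ℝ) (hl1 : l1 ≠ 0) (hl2 : l2 ≠ 0) (hll : 0 < l1 * l2)
    (φ1 φ2 : ℝ → ℝ)
    (hφ1bij : Function.Bijective φ1) (hφ1lip : ∃ K : NNReal, LipschitzWith K φ1)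
    (hφ1inv : ∃ K : NNReal, LipschitzWith K (Function.invFun φ1))
    (hφ2bij : Function.Bijective φ2) (hφ2lip : ∃ K : NNReal, LipschitzWith K φ2)
    (hφ2inv : ∃ K : NNReal, LipschitzWith K (Function.invFun φ2))
    (hpos : 0 < l1 → 0 < l2 →
      (∀ t : ℝ, |l1| ^ d * eval2 G 1 (φ1 t) = eval2 F 1 t) ∧
      (∀ t : ℝ, |l2| ^ d * eval2 G (-1) (φ2 t) = eval2 F (-1) t))
    (hneg : l1 < 0 → l2 < 0 →
      (∀ t : ℝ, |l1| ^ d * eval2 G (-1) (φ1 t) = eval2 F 1 t) ∧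
      (∀ t : ℝ, |l2| ^ d * eval2 G 1 (φ2 t) = eval2 F (-1) t)) :
    ∃ (m1 m2 : ℝ) (ψ1 ψ2 : ℝ → ℝ) (M1 M2 : ℝ),
      m1 ≠ 0 ∧ m2 ≠ 0 ∧ 0 < m1 * m2 ∧
      Function.Bijective ψ1 ∧ (∃ K : NNReal, LipschitzWith K ψ1) ∧
      (∃ K : NNReal, LipschitzWith K (Function.invFun ψ1)) ∧
      Function.Bijective ψ2 ∧ (∃ K : NNReal, LipschitzWith K ψ2) ∧
      (∃ K : NNReal, LipschitzWith K (Function.invFun ψ2)) ∧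
      (0 < m1 → 0 < m2 →
        (∀ t : ℝ, |m1| ^ d * eval2 G 1 (ψ1 t) = eval2 F 1 t) ∧
        (∀ t : ℝ, |m2| ^ d * eval2 G (-1) (ψ2 t) = eval2 F (-1) t)) ∧
      (m1 < 0 → m2 < 0 →
        (∀ t : ℝ, |m1| ^ d * eval2 G (-1) (ψ1 t) = eval2 F 1 t) ∧
        (∀ t : ℝ, |m2| ^ d * eval2 G 1 (ψ2 t) = eval2 F (-1) t)) ∧
      Tendsto (fun t => ψ1 t / t) atTop (𝓝 M1) ∧
      Tendsto (fun t => ψ1 t / t) atBot (𝓝 M1) ∧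
      Tendsto (fun t => ψ2 t / t) atTop (𝓝 M2) ∧
      Tendsto (fun t => ψ2 t / t) atBot (𝓝 M2) ∧
      |m1| ^ β * M1 = |m2| ^ β * M2 := by
  have hso : Odd s := by
    rcases hrso with he | ho
    · by_contra hns
      rw [Nat.not_odd_iff_even] at hns
      have := Nat.dvd_gcd he.two_dvd hns.two_dvd
      rw [hgcd] at this
      omega
    · exact ho
  obtain ⟨ε, hε⟩ : ∃ ε : ℝ, ε = (-1) ^ r := ⟨_, rfl⟩
  have hεε : ε * ε = 1 := by rw [hε, ← mul_pow]; simp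
  have hεa : |ε| = 1 := by rw [hε]; simp
  have hdd : ((-1 : ℝ) ^ d) * (-1) ^ d = 1 := by rw [← mul_pow]; simp
  have nF : ∀ t, eval2 F (-1) t = (-1) ^ d * eval2 F 1 (ε * t) := by
    intro t
    have := qh_neg r s d hs β hβ hso F hF 1 (ε * t)
    rwa [← hε, ← mul_assoc, hεε, one_mul] at this
  have nG : ∀ t, eval2 G (-1) (ε * t) = (-1) ^ d * eval2 G 1 t := by
    intro t
    have := qh_neg r s d hs β hβ hso G hG 1 t
    rwa [← hε] at this
  have nG' : ∀ t, eval2 G 1 (ε * t) = (-1) ^ d * eval2 G (-1) t := by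
    intro t
    have := nG (ε * t)
    rw [← mul_assoc, hεε, one_mul] at this
    rw [this, ← mul_assoc, hdd, one_mul]
  obtain ⟨K, hK⟩ := hφ1lip
  obtain ⟨K', hK0⟩ := hφ1inv
  have hK' : AntilipschitzWith K' φ1 :=
    hK0.to_rightInverse (Function.leftInverse_invFun hφ1bij.1)
  have hc : 0 < |l1| ^ d := by positivity
  have hP := qh_nonconst d β F hF hFX
  have eF : ∀ t, (p2 F (Polynomial.C 1) Polynomial.X).eval t = eval2 F 1 t := by
    intro t; simp [p2_eval]
  have eG : ∀ a t, (p2 G (Polynomial.C a) Polynomial.X).eval t = eval2 G a t := by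
    intro a t; simp [p2_eval]
  have hlim : ∃ L, Tendsto (fun t => φ1 t / t) atTop (𝓝 L) ∧
      Tendsto (fun t => φ1 t / t) atBot (𝓝 L) := by
    rcases lt_or_gt_of_ne hl1 with hl | hl
    · have hl' : l2 < 0 := by nlinarith
      exact limit_all _ (p2 G (Polynomial.C (-1)) Polynomial.X) φ1 _ hc hP
        (fun t => by rw [eF, eG]; exact (hneg hl hl').1 t) hφ1bij K K' hK hK'
    · have hl' : 0 < l2 := by nlinarith
      exact limit_all _ (p2 G (Polynomial.C 1) Polynomial.X) φ1 _ hc hP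
        (fun t => by rw [eF, eG]; exact (hpos hl hl').1 t) hφ1bij K K' hK hK'
  obtain ⟨L, hL1, hL2⟩ := hlim
  have hbij := bij_neg hφ1bij ε ε hεa hεa
  have hlims : Tendsto (fun t => ε * φ1 (ε * t) / t) atTop (𝓝 L) ∧
      Tendsto (fun t => ε * φ1 (ε * t) / t) atBot (𝓝 L) := by
    rcases (abs_eq zero_le_one).1 hεa with e | e
    · rw [e]; simpa using ⟨hL1, hL2⟩
    · rw [e]
      have a1 := hL2.comp tendsto_neg_atTop_atBot
      have a2 := hL1.comp tendsto_neg_atBot_atTop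
      constructor
      · simpa [Function.comp_def, neg_div, div_neg] using a1
      · simpa [Function.comp_def, neg_div, div_neg] using a2
  refine ⟨l1, l1, φ1, fun t => ε * φ1 (ε * t), L, L, hl1, hl1, mul_self_pos.2 hl1, hφ1bij,
    ⟨K, hK⟩, ⟨K', hK0⟩, hbij, ⟨K, lip_neg hK _ _ hεa hεa⟩,
    ⟨K', (anti_neg hK' _ _ hεa hεa).to_rightInverse (Function.rightInverse_invFun hbij.2)⟩,
    ?_, ?_, hL1, hL2, hlims.1, hlims.2, rfl⟩
  · intro hl _
    have hl' : 0 < l2 := by nlinarith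
    have h1 := (hpos hl hl').1
    refine ⟨h1, fun t => ?_⟩
    rw [nG, nF, ← h1]; ring
  · intro hl _
    have hl' : l2 < 0 := by nlinarith
    have h1 := (hneg hl hl').1
    refine ⟨h1, fun t => ?_⟩
    rw [nG', nF, ← h1]; ring
end

section
/- Let β = r/s be a rational number with r > s > 0 and gcd(r, s) = 1, and let F, G ∈ ℝ[X, Y] be β-quasihomogeneous polynomials of degree d ≥ 1, neither of which is a scalar multiple of X^d, with height functions f₊, f₋ and g₊, g₋. Suppose there exist nonzero real numbers λ₁, λ₂ with λ₁λ₂ > 0 and bi-Lipschitz homeomorphisms φ₁, φ₂ : ℝ → ℝ such that: if λ₁ > 0 and λ₂ > 0 then |λ₁|^d·(g₊ ∘ φ₁) = f₊ and |λ₂|^d·(g₋ ∘ φ₂) = f₋, while if λ₁ < 0 and λ₂ < 0 then |λ₁|^d·(g₋ ∘ φ₁) = f₊ and |λ₂|^d·(g₊ ∘ φ₂) = f₋. If at least one of the following conditions holds: (a) r is even or s is odd, (b) λ₁ = λ₂, (c) X divides neither F nor G in ℝ[X, Y]; then there exist a neighborhood U of the origin in ℝ² and an injective map Φ : U → ℝ²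 with Φ(0) = 0 that is bi-Lipschitz onto its image and satisfies G(Φ(x, y)) = F(x, y) for all (x, y) ∈ U. -/
open Filter Topology

section helpers

open Polynomial Bornology


-- limit
lemma lim_lead (p : ℝ[X]) : Tendsto (fun w : ℝ => p.eval w / w ^ p.natDegree) (cobounded ℝ) (𝓝 p.leadingCoeff) := by
  have h1 : Tendsto (fun w : ℝ => p.reverse.eval (w⁻¹)) (cobounded ℝ) (𝓝 (p.reverse.eval 0)) :=
    (p.reverse.continuous.tendsto 0).comp tendsto_inv₀_cobounded
  have h2 : p.reverse.eval 0 = p.leadingCoeff := by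
    rw [← Polynomial.coeff_zero_eq_eval_zero, Polynomial.coeff_zero_reverse]
  rw [h2] at h1
  refine h1.congr' ?_
  have hne : ∀ᶠ w : ℝ in cobounded ℝ, w ≠ 0 := by
    exact eventually_ne_cobounded 0
  filter_upwards [hne] with w hw
  let _ : Invertible w := invertibleOfNonzero hw
  have := Polynomial.eval₂_reverse_mul_pow (RingHom.id ℝ) w p
  rw [Polynomial.eval₂_id, Polynomial.eval₂_id] at this
  rw [eq_div_iff (pow_ne_zero _ hw), ← this]
  simp

lemma pow_sub_lower (n : ℕ) (a b : ℝ) (hab : 0 < a * b) :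
    |a - b| * |a| ^ n ≤ |a ^ (n+1) - b ^ (n+1)| := by
  have key : ∀ a b : ℝ, 0 < a → 0 < b → |a - b| * |a| ^ n ≤ |a ^ (n+1) - b ^ (n+1)| := by
    intro a b ha hb
    rw [← geom_sum₂_mul, abs_mul, mul_comm]
    gcongr
    rw [abs_of_pos ha]
    refine le_trans ?_ (le_abs_self _)
    have := Finset.single_le_sum (f := fun i => a ^ i * b ^ (n + 1 - 1 - i)) (s := Finset.range (n+1))
      (fun i _ => by positivity) (Finset.self_mem_range_succ n)
    simpa using this
  rcases pos_and_pos_or_neg_and_neg_of_mul_pos hab with ⟨ha, hb⟩ | ⟨ha, hb⟩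
  · exact key a b ha hb
  · have := key (-a) (-b) (by linarith) (by linarith)
    rw [neg_pow a (n+1), neg_pow b (n+1), ← mul_sub, abs_mul, abs_pow (-1)] at this
    simp only [abs_neg, abs_one, one_pow, one_mul] at this
    rwa [show -a - -b = -(a-b) by ring, abs_neg] at this

lemma pow_sub_upper (k : ℕ) (a b M : ℝ) (ha : |a| ≤ M) (hb : |b| ≤ M) :
    |a ^ k - b ^ k| ≤ k * M ^ (k - 1) * |a - b| := by
  rw [← geom_sum₂_mul, abs_mul]
  gcongr
  refine (Finset.abs_sum_le_sum_abs _ _).trans ?_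
  have : ∀ i ∈ Finset.range k, |a ^ i * b ^ (k - 1 - i)| ≤ M ^ (k-1) := by
    intro i hi
    have hi' := Finset.mem_range.1 hi
    rw [abs_mul, abs_pow, abs_pow]
    have hM : 0 ≤ M := (abs_nonneg a).trans ha
    calc |a| ^ i * |b| ^ (k-1-i) ≤ M ^ i * M ^ (k-1-i) := by gcongr
      _ = M ^ (k-1) := by rw [← pow_add]; congr 1; omega
  refine (Finset.sum_le_sum this).trans ?_
  simp

-- P1
lemma P1 (p : ℝ[X]) (n : ℕ) (hn : p.natDegree = n + 1) :
    ∃ R c : ℝ, 1 ≤ R ∧ 0 < c ∧ ∀ a b : ℝ, 0 < a * b → R ≤ |a| →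
      c * |a - b| * |a| ^ n ≤ |p.eval a - p.eval b| := by
  set B := |p.leadingCoeff| with hB
  have hBpos : 0 < B := by
    rw [hB, abs_pos, Ne, Polynomial.leadingCoeff_eq_zero]
    rintro rfl; simp at hn
  set S := ∑ k ∈ Finset.range (n+1), |p.coeff k| * k with hS
  have hS0 : 0 ≤ S := Finset.sum_nonneg (fun i _ => by positivity)
  have key : ∀ a b : ℝ, 0 < a * b → 1 + 2 * S / B ≤ |a| → |b| ≤ |a| →
      B / 2 * |a - b| * |a| ^ n ≤ |p.eval a - p.eval b| := by
    intro a b hab hR hba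
    have ha1 : 1 ≤ |a| := by
      have : 0 ≤ 2 * S / B := by positivity
      linarith
    have e : p.eval a - p.eval b = ∑ k ∈ Finset.range (n+1), p.coeff k * (a^k - b^k)
        + p.leadingCoeff * (a^(n+1) - b^(n+1)) := by
      rw [Polynomial.eval_eq_sum_range, Polynomial.eval_eq_sum_range, hn, Finset.sum_range_succ,
        Finset.sum_range_succ _ (n+1), Polynomial.leadingCoeff, hn]
      simp only [mul_sub, Finset.sum_sub_distrib]
      ring
    have h1 : |∑ k ∈ Finset.range (n+1), p.coeff k * (a^k - b^k)| * |a| ≤ S * |a| ^ n * |a - b| := by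
      refine (mul_le_mul_of_nonneg_right (Finset.abs_sum_le_sum_abs _ _) (abs_nonneg a)).trans ?_
      rw [hS, Finset.sum_mul, Finset.sum_mul, Finset.sum_mul]
      refine Finset.sum_le_sum fun k hk => ?_
      have hk' := Finset.mem_range.1 hk
      rcases Nat.eq_zero_or_pos k with rfl | hkp
      · simp
      rw [abs_mul]
      have h2 := pow_sub_upper k a b |a| le_rfl hba
      calc |p.coeff k| * |a^k-b^k| * |a| ≤ |p.coeff k| * (k * |a| ^ (k - 1) * |a - b|) * |a| := by gcongr
        _ = |p.coeff k| * k * (|a|^(k-1) * |a|) * |a-b| := by ring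
        _ = |p.coeff k| * k * |a| ^ k * |a-b| := by rw [← pow_succ, Nat.sub_add_cancel hkp]
        _ ≤ _ := by
          have : |a| ^ k ≤ |a| ^ n := pow_le_pow_right₀ ha1 (by omega)
          gcongr
    have h2 : B * (|a - b| * |a| ^ n) ≤ |p.leadingCoeff * (a^(n+1) - b^(n+1))| := by
      rw [abs_mul]; gcongr; exact pow_sub_lower n a b hab
    have h3 : |∑ k ∈ Finset.range (n+1), p.coeff k * (a^k - b^k)| ≤ B / 2 * |a-b| * |a|^n := by
      have : S ≤ B / 2 * |a| := by
        have : 2 * S / B ≤ |a| := by linarith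
        rw [div_le_iff₀ hBpos] at this
        linarith
      have h4 : |∑ k ∈ Finset.range (n+1), p.coeff k * (a^k - b^k)| * |a| ≤ (B / 2 * |a-b| * |a|^n) * |a| := by
        refine h1.trans ?_
        calc S * |a|^n * |a-b| ≤ (B / 2 * |a|) * |a|^n * |a-b| := by gcongr
          _ = _ := by ring
      exact le_of_mul_le_mul_right h4 (by linarith)
    rw [e]
    have := abs_sub_abs_le_abs_sub (p.leadingCoeff * (a^(n+1) - b^(n+1))) (-∑ k ∈ Finset.range (n+1), p.coeff k * (a^k - b^k))
    rw [abs_neg, sub_neg_eq_add, add_comm (p.leadingCoeff * _)] at this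
    nlinarith
  refine ⟨1 + 2 * S / B, B / 2, ?_, by positivity, ?_⟩
  · have : 0 ≤ 2 * S / B := by positivity
    linarith
  · intro a b hab hR
    rcases le_total |b| |a| with h | h
    · exact key a b hab hR h
    · have := key b a (by linarith) (hR.trans h) h
      rw [abs_sub_comm, abs_sub_comm (p.eval b)] at this
      refine le_trans ?_ this
      gcongr

lemma P2 (p : ℝ[X]) (n : ℕ) (hn : p.natDegree = n + 1) :
    ∃ C : ℝ, 0 ≤ C ∧ ∀ w μ : ℝ, 1 ≤ μ → 1 ≤ |w| →
      |p.eval (μ * w) - μ ^ (n+1) * p.eval w| ≤ C * |μ * w| ^ n * (μ - 1) := by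
  refine ⟨∑ k ∈ Finset.range (n+1), |p.coeff k| * (n+1), Finset.sum_nonneg (fun i _ => by positivity), ?_⟩
  intro w μ hμ hw
  have e : p.eval (μ * w) - μ ^ (n+1) * p.eval w = ∑ k ∈ Finset.range (n+1), p.coeff k * w ^ k * (μ ^k - μ ^ (n+1)) := by
    rw [Polynomial.eval_eq_sum_range, Polynomial.eval_eq_sum_range, hn, Finset.sum_range_succ,
        Finset.sum_range_succ _ (n+1), mul_add, Finset.mul_sum]
    have : ∀ k, p.coeff k * w ^ k * (μ ^k - μ ^ (n+1)) = p.coeff k * (μ*w)^k - μ^(n+1) * (p.coeff k * w^k) := by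
      intro k; rw [mul_pow]; ring
    simp only [this, Finset.sum_sub_distrib]
    ring
  rw [e, Finset.sum_mul, Finset.sum_mul]
  refine (Finset.abs_sum_le_sum_abs _ _).trans (Finset.sum_le_sum fun k hk => ?_)
  have hk' := Finset.mem_range.1 hk
  have h1 : |μ ^ k - μ ^ (n+1)| ≤ (n+1) * μ ^ n * (μ - 1) := by
    have h2 : μ ^ k ≤ μ ^ (n+1) := pow_le_pow_right₀ hμ (by omega)
    have h3 : 1 ≤ μ ^ k := one_le_pow₀ hμ
    have h4 := pow_sub_upper (n+1) μ 1 μ (by rw [abs_of_nonneg (by linarith)]) (by simpa using hμ)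
    rw [abs_of_nonneg (a := μ - 1) (by linarith)] at h4
    have h5 := (le_abs_self _).trans h4
    rw [abs_of_nonpos (by linarith)]
    push_cast at h5
    simp only [one_pow] at h5
    linarith
  rw [abs_mul, abs_mul, abs_pow, abs_mul, abs_of_nonneg (a := μ) (by linarith), mul_pow]
  calc |p.coeff k| * |w| ^ k * |μ ^ k - μ ^ (n+1)| ≤ |p.coeff k| * |w| ^ n * ((n+1) * μ ^ n * (μ - 1)) := by
        have : |w| ^ k ≤ |w| ^ n := pow_le_pow_right₀ hw (by omega)
        gcongr
    _ = _ := by ring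

lemma A0 (φ : ℝ → ℝ) (ε c K : ℝ) (hε : ε = 1 ∨ ε = -1)
    (hφ : ∀ t t', t ≤ t' → c * (t' - t) ≤ ε * (φ t' - φ t) ∧ ε * (φ t' - φ t) ≤ K * (t' - t)) 
    (hc : 0 < c) (t t' : ℝ) :
    c * |t - t'| ≤ |φ t - φ t'| ∧ |φ t - φ t'| ≤ K * |t - t'| := by
  have key : ∀ t t', t ≤ t' → c * |t - t'| ≤ |φ t - φ t'| ∧ |φ t - φ t'| ≤ K * |t - t'| := by
    intro t t' h
    have h1 := hφ t t' h
    have h2 : |φ t - φ t'| = ε * (φ t' - φ t) := by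
      have : 0 ≤ ε * (φ t' - φ t) := le_trans (by have := sub_nonneg.2 h; positivity) h1.1
      rw [← abs_of_nonneg this, abs_mul, abs_sub_comm]
      rcases hε with rfl | rfl <;> simp
    rw [h2, abs_sub_comm, abs_of_nonneg (sub_nonneg.2 h)]
    exact h1
  rcases le_total t t' with h | h
  · exact key t t' h
  · rw [abs_sub_comm, abs_sub_comm (φ t)]; exact key t' t h

lemma A1 (φ : ℝ → ℝ) (ε c K : ℝ) (hε : ε = 1 ∨ ε = -1)
    (hφ : ∀ t t', t ≤ t' → c * (t' - t) ≤ ε * (φ t' - φ t) ∧ ε * (φ t' - φ t) ≤ K * (t' - t)) 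
    (hc : 0 < c) : ∃ T : ℝ, 1 ≤ T ∧ ∀ t, T ≤ |t| → 
      c / 2 * |t| ≤ |φ t| ∧ |φ t| ≤ (K + 1) * |t| ∧ 0 < ε * φ t * t := by
  refine ⟨1 + 2 * |φ 0| / c + |φ 0|, ?_, ?_⟩
  · have : 0 ≤ 2 * |φ 0| / c := by positivity
    have := abs_nonneg (φ 0)
    linarith
  intro t ht
  have h0 : 0 ≤ 2 * |φ 0| / c := by positivity
  have h0' := abs_nonneg (φ 0)
  have ht1 : 1 ≤ |t| := by linarith
  have ht2 : |φ 0| ≤ |t| := by linarith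
  have ht3 : |φ 0| ≤ c / 2 * |t| := by
    have : 2 * |φ 0| / c ≤ |t| := by linarith
    rw [div_le_iff₀ hc] at this
    linarith
  have h2 := A0 φ ε c K hε hφ hc t 0
  rw [sub_zero] at h2
  have h3 := abs_sub_abs_le_abs_sub (φ t) (φ 0)
  have h4 := abs_sub (φ t) (φ 0)
  refine ⟨by linarith, by linarith, ?_⟩
  have h5 : |ε * φ 0| = |φ 0| := by rcases hε with rfl | rfl <;> simp
  have h6 := abs_le.1 h5.le
  rcases le_total 0 t with h | h
  · rw [abs_of_nonneg h] at *
    have := (hφ 0 t h).1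
    have : 0 < ε * φ t := by nlinarith
    exact mul_pos this (by linarith)
  · rw [abs_of_nonpos h] at *
    have := (hφ t 0 h).1
    have : ε * φ t < 0 := by nlinarith
    exact mul_pos_of_neg_of_neg this (by linarith)

-- an abstract degree comparison
lemma deg_le_aux (α : Type*) (l : Filter α) [l.NeBot] (f g : α → ℝ) (m n : ℕ) (a C : ℝ) (ha : a ≠ 0)
    (hg : Tendsto g l (cobounded ℝ)) (hfg : ∀ᶠ t in l, |f t| ≤ C * |g t|)
    (h : Tendsto (fun t => f t ^ m / g t ^ n) l (𝓝 a)) : n ≤ m := by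
  by_contra! hlt
  apply ha
  refine tendsto_nhds_unique h ?_
  have h1 : Tendsto (fun t => C ^ m * ‖(g t)⁻¹‖) l (𝓝 0) := by
    have := (tendsto_inv₀_cobounded.comp hg).norm.const_mul (C ^ m)
    simpa using this
  refine squeeze_zero_norm' ?_ h1
  have h2 : ∀ᶠ t in l, 1 ≤ ‖g t‖ := hg.eventually (eventually_cobounded_le_norm 1)
  filter_upwards [hfg, h2] with t h3 h4
  simp only [Real.norm_eq_abs] at *
  rw [abs_div, abs_pow, abs_pow, abs_inv, div_le_iff₀ (by positivity)]
  have hC : 0 ≤ C := by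
    by_contra! hC
    nlinarith [abs_nonneg (f t)]
  calc |f t| ^ m ≤ (C * |g t|) ^ m := by gcongr
    _ = C ^ m * |g t| ^ m := by rw [mul_pow]
    _ ≤ C ^ m * |g t| ^ (n - 1) := by
      gcongr
      omega
    _ = C ^ m * |g t|⁻¹ * |g t| ^ n := by
      have : n = (n - 1) + 1 := by omega
      rw [this, pow_succ]
      field_simp
      simp
      
lemma keyA (p q : ℝ[X]) (hp : 1 ≤ p.natDegree) (hq : 1 ≤ q.natDegree)
    (φ : ℝ → ℝ) (ε c K : ℝ) (hε : ε = 1 ∨ ε = -1)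
    (hφ : ∀ t t', t ≤ t' → c * (t' - t) ≤ ε * (φ t' - φ t) ∧ ε * (φ t' - φ t) ≤ K * (t' - t)) 
    (hc : 0 < c) (hpq : ∀ t, p.eval (φ t) = q.eval t) :
    p.natDegree = q.natDegree ∧ ∃ L : ℝ, 0 < ε * L ∧ 
      |L| ^ p.natDegree * |p.leadingCoeff| = |q.leadingCoeff| ∧
      Tendsto (fun t => φ t / t) (cobounded ℝ) (𝓝 L) ∧
      ∃ C, ∀ t t', 0 < t * t' → |t' * φ t - t * φ t'| ≤ C * |t - t'| := by
  have a0 := A0 φ ε c K hε hφ hc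
  obtain ⟨T, hT1, hT⟩ := A1 φ ε c K hε hφ hc
  have hK : 0 ≤ K := by
    have h := hφ 0 1 (by norm_num)
    have : c ≤ K := by linarith
    linarith
  have evT : ∀ᶠ t : ℝ in cobounded ℝ, T ≤ |t| := eventually_cobounded_le_norm T
  have hφinf : Tendsto φ (cobounded ℝ) (cobounded ℝ) := by
    rw [← tendsto_norm_atTop_iff_cobounded]
    refine tendsto_atTop_mono' _ (f₁ := fun t => c / 2 * ‖t‖) ?_ ?_
    · filter_upwards [evT] with t ht using (hT t ht).1
    · exact tendsto_norm_cobounded_atTop.const_mul_atTop (by positivity)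
  have hb : p.leadingCoeff ≠ 0 := by
    rw [Ne, Polynomial.leadingCoeff_eq_zero]; rintro rfl; simp at hp
  have ha : q.leadingCoeff ≠ 0 := by
    rw [Ne, Polynomial.leadingCoeff_eq_zero]; rintro rfl; simp at hq
  have l1 := (lim_lead p).comp hφinf
  have l2 := lim_lead q
  have hbig : ∀ᶠ t : ℝ in cobounded ℝ, q.eval t ≠ 0 ∧ t ≠ 0 ∧ φ t ≠ 0 := by
    filter_upwards [l2.eventually_ne ha, evT] with t h1 h2
    refine ⟨fun h => h1 (by rw [h]; simp), fun h => ?_, fun h => ?_⟩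
    · rw [h] at h2; simp at h2; linarith
    · have := (hT t h2).2.2; rw [h] at this; simp at this
  have l3 : Tendsto (fun t => φ t ^ p.natDegree / t ^ q.natDegree) (cobounded ℝ)
      (𝓝 (q.leadingCoeff / p.leadingCoeff)) := by
    refine (l2.div l1 hb).congr' ?_
    filter_upwards [hbig] with t ⟨h1, h2, h3⟩
    simp only [Pi.div_apply, Function.comp, hpq]
    field_simp
  have l4 : Tendsto (fun t => t ^ q.natDegree / φ t ^ p.natDegree) (cobounded ℝ)
      (𝓝 (p.leadingCoeff / q.leadingCoeff)) := by
    have := l3.inv₀ (div_ne_zero ha hb)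
    simpa using this
  have hdeg : p.natDegree = q.natDegree := by
    apply le_antisymm
    · refine deg_le_aux ℝ (cobounded ℝ) (fun t => t) φ _ _ _ (2 / c) (div_ne_zero hb ha) hφinf ?_ l4
      filter_upwards [evT] with t ht
      have := (hT t ht).1
      rw [div_mul_eq_mul_div, le_div_iff₀ hc]; linarith
    · refine deg_le_aux ℝ (cobounded ℝ) φ (fun t => t) _ _ _ (K+1) (div_ne_zero ha hb) tendsto_id ?_ l3
      filter_upwards [evT] with t ht using (hT t ht).2.1
  refine ⟨hdeg, ?_⟩
  obtain ⟨n, hn⟩ : ∃ n, p.natDegree = n + 1 := ⟨p.natDegree - 1, by omega⟩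
  have hn' : q.natDegree = n + 1 := by omega
  have hεε : ε * ε = 1 := by rcases hε with rfl | rfl <;> simp
  have hεabs : |ε| = 1 := by rcases hε with rfl | rfl <;> simp
  set A := |q.leadingCoeff| / |p.leadingCoeff| with hA
  have hApos : 0 < A := by rw [hA]; positivity
  set ρ := A ^ ((p.natDegree : ℝ)⁻¹) with hρ
  have hρpos : 0 < ρ := Real.rpow_pos_of_pos hApos _
  have hρn : ρ ^ p.natDegree = A := by
    rw [hρ]; exact Real.rpow_inv_natCast_pow hApos.le (by omega)
  have l5 : Tendsto (fun t => |φ t / t|) (cobounded ℝ) (𝓝 ρ) := by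
    have h1 := l3.abs.rpow_const (p := (p.natDegree : ℝ)⁻¹) (Or.inr (by positivity))
    rw [abs_div] at h1
    refine h1.congr fun t => ?_
    rw [← hdeg, ← div_pow, abs_pow]
    exact Real.pow_rpow_inv_natCast (abs_nonneg _) (by omega)
  refine ⟨ε * ρ, ?_, ?_, ?_, ?_⟩
  · rw [← mul_assoc, hεε, one_mul]; exact hρpos
  · rw [abs_mul, hεabs, one_mul, abs_of_pos hρpos, hρn, hA]
    field_simp
  · refine (l5.const_mul ε).congr' ?_
    filter_upwards [evT] with t ht
    have := (hT t ht).2.2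
    have h2 : 0 < ε * (φ t / t) := by
      have h3 : t ≠ 0 := by rintro rfl; simp at this
      have : ε * (φ t / t) = (ε * φ t * t) / (t * t) := by field_simp
      rw [this]
      have : 0 < t * t := mul_self_pos.2 h3
      positivity
    have h3 : |φ t / t| = ε * (φ t / t) := by
      rw [← abs_of_pos h2, abs_mul, hεabs, one_mul]
    rw [h3, ← mul_assoc, hεε, one_mul]
  · obtain ⟨R, c1, hR, hc1, hP1⟩ := P1 p n hn
    obtain ⟨Cp, hCp, hP2⟩ := P2 p n hn
    obtain ⟨Cq, hCq, hQ2⟩ := P2 q n hn'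
    set T' := T + 2 * R / c with hT'
    have hTT' : T ≤ T' := by
      have : 0 ≤ 2 * R / c := by positivity
      linarith
    have hbound : ∀ t, T' ≤ |t| → R ≤ |φ t| := by
      intro t ht
      have h1 := (hT t (hTT'.trans ht)).1
      have : 2 * R / c ≤ |t| := by linarith
      rw [div_le_iff₀ hc] at this
      linarith
    set D := (Cq + Cp * (K+1)^n) / (c1 * (c/2)^n) with hD
    have hD0 : 0 ≤ D := by positivity
    have large : ∀ t μ, T' ≤ |t| → 1 ≤ μ → |φ (μ * t) - μ * φ t| ≤ D * (μ - 1) := by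
      intro t μ ht hμ
      have hμ0 : 0 < μ := by linarith
      have ht' : T' ≤ |μ * t| := by
        rw [abs_mul, abs_of_pos hμ0]; nlinarith [abs_nonneg t]
      have hs := hT t (hTT'.trans ht)
      have hs' := hT (μ * t) (hTT'.trans ht')
      have hpos : 0 < φ (μ * t) * (μ * φ t) := by
        have h1 := mul_pos hs.2.2 hs'.2.2
        have h2 : 0 < (t * t) := by
          refine mul_self_pos.2 ?_
          rintro rfl
          simp at ht; linarith
        have : ε * φ t * t * (ε * φ (μ * t) * (μ * t)) = (φ (μ * t) * (μ * φ t)) * (t * t) := by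
          linear_combination (φ (μ * t) * (μ * φ t)) * (t * t) * hεε
        rw [this] at h1
        exact pos_of_mul_pos_left h1 h2.le
      have h1 := hP1 _ _ hpos (hbound _ ht')
      have h2 := hP2 (φ t) μ hμ (hR.trans (hbound _ ht))
      have h3 := hQ2 t μ hμ (by linarith)
      rw [← hpq, ← hpq] at h3
      have h4 : |p.eval (φ (μ * t)) - p.eval (μ * φ t)| ≤ 
          Cq * |μ * t| ^ n * (μ - 1) + Cp * |μ * φ t| ^ n * (μ - 1) := by
        have := abs_sub_le (p.eval (φ (μ * t))) (μ ^ (n+1) * p.eval (φ t)) (p.eval (μ * φ t))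
        rw [abs_sub_comm (μ ^ (n+1) * p.eval (φ t))] at this
        linarith
      have h5 : |μ * φ t| ≤ (K+1) * |μ * t| := by
        rw [abs_mul, abs_mul]
        nlinarith [hs.2.1, abs_nonneg μ]
      have h6 : (c1 * (c/2)^n * |μ * t|^n) * |φ (μ * t) - μ * φ t| ≤ 
          ((Cq + Cp * (K+1)^n) * (μ - 1)) * |μ * t|^n := by
        have hμ1 : 0 ≤ μ - 1 := by linarith
        calc (c1 * (c/2)^n * |μ * t|^n) * |φ (μ * t) - μ * φ t| 
            = c1 * |φ (μ * t) - μ * φ t| * (c/2*|μ * t|)^n := by rw [mul_pow]; ring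
          _ ≤ c1 * |φ (μ * t) - μ * φ t| * |φ (μ * t)| ^ n := by
              gcongr; exact hs'.1
          _ ≤ _ := h1
          _ ≤ _ := h4
          _ ≤ Cq * |μ * t| ^ n * (μ - 1) + Cp * ((K+1) * |μ * t|) ^ n * (μ - 1) := by gcongr
          _ = _ := by rw [mul_pow]; ring
      have h7 : 0 < |μ * t|^n := by
        have : 0 < |μ * t| := by linarith
        positivity
      have h8 : |φ (μ * t) - μ * φ t| * (c1 * (c/2)^n) ≤ (Cq + Cp * (K+1)^n) * (μ - 1) := by
        refine le_of_mul_le_mul_right ?_ h7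
        linarith
      rw [hD, div_mul_eq_mul_div, le_div_iff₀ (by positivity)]
      exact h8
    set E := max D (|φ 0| + K * T' + T' * K) with hE
    have key : ∀ t t', 0 < t * t' → |t| ≤ |t'| → |t' * φ t - t * φ t'| ≤ E * |t - t'| := by
      intro t t' htt hle
      have ht0 : t ≠ 0 := by rintro rfl; simp at htt
      rcases le_total T' |t| with h | h
      · have hμ : 1 ≤ t' / t := by
          have : t' / t = |t'| / |t| := by
            rw [← abs_div, abs_of_pos]
            have : t' / t = (t * t') / (t * t) := by field_simp
            rw [this]
            have : 0 < t * t := mul_self_pos.2 ht0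
            positivity
          rw [this, le_div_iff₀ (abs_pos.2 ht0)]; linarith
        have h1 := large t (t' / t) h hμ
        rw [div_mul_cancel₀ _ ht0] at h1
        have h2 : |t' * φ t - t * φ t'| = |t| * |φ t' - t' / t * φ t| := by
          rw [← abs_mul, abs_sub_comm]; congr 1; field_simp
        have h3 : |t - t'| = |t| * (t' / t - 1) := by
          rw [← abs_of_nonneg (a := t' / t - 1) (by linarith), ← abs_mul, abs_sub_comm]
          congr 1; field_simp
        rw [h2, h3]
        calc |t| * |φ t' - t' / t * φ t| ≤ |t| * (D * (t' / t - 1)) := by gcongr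
          _ = D * (|t| * (t' / t - 1)) := by ring
          _ ≤ E * (|t| * (t' / t - 1)) := by
            have : 0 ≤ t' / t - 1 := by linarith
            gcongr; exact le_max_left _ _
      · have e : t' * φ t - t * φ t' = φ t * (t' - t) + t * (φ t - φ t') := by ring
        have h1 : |φ t| ≤ |φ 0| + K * T' := by
          have h2 := (a0 t 0).2
          rw [sub_zero] at h2
          have h3 := abs_sub_abs_le_abs_sub (φ t) (φ 0)
          nlinarith
        have hT0 : 0 ≤ T' := by linarith
        calc |t' * φ t - t * φ t'| ≤ |φ t| * |t' - t| + |t| * |φ t - φ t'| := by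
              rw [e, ← abs_mul, ← abs_mul]; exact abs_add_le _ _
          _ ≤ (|φ 0| + K * T') * |t' - t| + T' * (K * |t - t'|) := by
              gcongr; exact (a0 t t').2
          _ = (|φ 0| + K * T' + T' * K) * |t - t'| := by rw [abs_sub_comm t']; ring
          _ ≤ _ := by gcongr; exact le_max_right _ _
    refine ⟨E, fun t t' htt => ?_⟩
    rcases le_total |t| |t'| with h | h
    · exact key t t' htt h
    · have := key t' t (by linarith) h
      rw [abs_sub_comm, abs_sub_comm t]; exact this

noncomputable def Hf (φ : ℝ → ℝ) (L u y : ℝ) : ℝ := if u = 0 then L * y else u * φ (y / u)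

lemma Hf_u (φ : ℝ → ℝ) (L C : ℝ) (hL : Tendsto (fun t => φ t / t) (cobounded ℝ) (𝓝 L))
    (hC : ∀ t t', 0 < t * t' → |t' * φ t - t * φ t'| ≤ C * |t - t'|) :
    ∃ D, 0 ≤ D ∧ ∀ u v y, 0 ≤ u → 0 ≤ v → |Hf φ L u y - Hf φ L v y| ≤ D * |u - v| := by
  have hC0 : 0 ≤ C := by
    have := (abs_nonneg _).trans (hC 1 2 (by norm_num))
    norm_num at this; exact this
  have lim : ∀ t, t ≠ 0 → |φ t - t * L| ≤ C := by
    intro t ht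
    have h1 : Tendsto (fun k : ℝ => k * t) atTop (cobounded ℝ) := by
      rw [← tendsto_norm_atTop_iff_cobounded]
      simp only [norm_mul]
      exact tendsto_norm_atTop_atTop.atTop_mul_const (norm_pos_iff.2 ht)
    have h2 := ((hL.comp h1).const_mul t).const_sub (φ t) |>.abs
    refine le_of_tendsto h2 ?_
    filter_upwards [eventually_ge_atTop 1] with k hk
    have hk0 : 0 < k := by linarith
    have htt : 0 < t * t := mul_self_pos.2 ht
    have h3 := hC t (k * t) (by nlinarith)
    have h4 : |k * t * φ t - t * φ (k * t)| = k * |t| * |φ t - t * (φ (k * t) / (k * t))| := by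
      rw [← abs_of_pos hk0, ← abs_mul, ← abs_mul, abs_of_pos hk0]; congr 1; field_simp
    have h5 : |t - k * t| ≤ k * |t| := by
      rw [show t - k * t = -((k - 1) * t) by ring, abs_neg, abs_mul, abs_of_nonneg (by linarith)]
      nlinarith [abs_nonneg t]
    rw [h4] at h3
    have h6 : 0 < k * |t| := mul_pos hk0 (abs_pos.2 ht)
    refine le_of_mul_le_mul_left (h3.trans ?_) h6
    rw [mul_comm (k * |t|)]
    gcongr
  set D := max C |φ 0| with hD
  have hCD : C ≤ D := le_max_left _ _
  have h0 : ∀ v y, 0 < v → |Hf φ L 0 y - Hf φ L v y| ≤ D * |0 - v| := by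
    intro v y hv
    simp only [Hf, if_true, hv.ne', if_false]
    rw [zero_sub, abs_neg, abs_of_pos hv]
    by_cases hy : y = 0
    · subst hy
      simp only [mul_zero, zero_div, zero_sub, abs_neg, abs_mul, abs_of_pos hv]
      rw [mul_comm]; gcongr; exact le_max_right _ _
    · have h1 := lim (y / v) (div_ne_zero hy hv.ne')
      have h2 : |L * y - v * φ (y / v)| = v * |φ (y / v) - y / v * L| := by
        rw [abs_sub_comm, ← abs_of_pos hv, ← abs_mul, abs_of_pos hv]; congr 1; field_simp
      rw [h2, mul_comm]; gcongr; exact h1.trans hCD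
  refine ⟨D, hC0.trans hCD, ?_⟩
  intro u v y hu hv
  rcases hu.eq_or_lt with rfl | hu
  · rcases hv.eq_or_lt with rfl | hv
    · simp
    · exact h0 v y hv
  · rcases hv.eq_or_lt with rfl | hv
    · rw [abs_sub_comm, abs_sub_comm u]; exact h0 u y hu
    · simp only [Hf, hu.ne', hv.ne', if_false]
      by_cases hy : y = 0
      · subst hy
        simp only [zero_div]
        rw [← sub_mul, abs_mul, mul_comm]; gcongr; exact le_max_right _ _
      · have hyy : 0 < y * y := mul_self_pos.2 hy
        have h1 := hC (y / u) (y / v) (by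
          rw [div_mul_div_comm]; positivity)
        have huv : 0 < u * v := mul_pos hu hv
        have h2 : |u * φ (y / u) - v * φ (y / v)| = u * v / |y| * |y / v * φ (y / u) - y / u * φ (y / v)| := by
          rw [← abs_of_pos huv, ← abs_div, ← abs_mul]; congr 1; field_simp
        have h3 : u * v / |y| * |y / u - y / v| = |u - v| := by
          rw [← abs_of_pos huv, ← abs_div, ← abs_mul, abs_sub_comm u]; congr 1; field_simp
        have hyp : 0 < |y| := abs_pos.2 hy
        calc _ = _ := h2
          _ ≤ u * v / |y| * (C * |y / u - y / v|) := by gcongr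
          _ = C * (u * v / |y| * |y / u - y / v|) := by ring
          _ = C * |u - v| := by rw [h3]
          _ ≤ _ := by gcongr

lemma Hf_y (φ : ℝ → ℝ) (L c K : ℝ) 
    (h : ∀ t t', c * |t - t'| ≤ |φ t - φ t'| ∧ |φ t - φ t'| ≤ K * |t - t'|) (u y y' : ℝ) (hu : 0 ≤ u) :
    min c |L| * |y - y'| ≤ |Hf φ L u y - Hf φ L u y'| ∧ 
      |Hf φ L u y - Hf φ L u y'| ≤ max K |L| * |y - y'| := by
  rcases hu.eq_or_lt with rfl | hu
  · simp only [Hf, if_true, ← mul_sub, abs_mul]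
    constructor
    · gcongr; exact min_le_right _ _
    · gcongr; exact le_max_right _ _
  · simp only [Hf, hu.ne', if_false, ← mul_sub, abs_mul, abs_of_pos hu]
    have h1 := h (y / u) (y' / u)
    have h2 : |y / u - y' / u| = |y - y'| / u := by
      rw [← sub_div, abs_div, abs_of_pos hu]
    rw [h2] at h1
    have h3 : u * (|y - y'| / u) = |y - y'| := by field_simp
    constructor
    · calc min c |L| * |y - y'| ≤ c * |y - y'| := by gcongr; exact min_le_left _ _
        _ = u * (c * (|y - y'| / u)) := by rw [← h3]; ring_nf; field_simp
        _ ≤ _ := by gcongr; exact h1.1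
    · calc _ ≤ u * (K * (|y - y'| / u)) := by gcongr; exact h1.2
        _ = K * |y - y'| := by field_simp
        _ ≤ _ := by gcongr; exact le_max_left _ _

lemma rpow_lip (β : ℝ) (hβ : 1 ≤ β) (x y : ℝ) (hx : 0 ≤ x) (hx1 : x ≤ 1) (hy : 0 ≤ y) (hy1 : y ≤ 1) :
    |x ^ β - y ^ β| ≤ β * |x - y| := by
  have := Convex.norm_image_sub_le_of_norm_hasDerivWithin_le (f := fun x : ℝ => x ^ β) 
    (f' := fun x => β * x ^ (β - 1)) (s := Set.Icc (0:ℝ) 1) (C := β) (x := y) (y := x)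
    (fun z hz => (Real.hasDerivAt_rpow_const (Or.inr hβ)).hasDerivWithinAt)
    (fun z hz => by
      have h1 : z ^ (β - 1) ≤ 1 := Real.rpow_le_one hz.1 hz.2 (by linarith)
      have h2 : 0 ≤ z ^ (β - 1) := Real.rpow_nonneg hz.1 _
      rw [Real.norm_eq_abs, abs_of_nonneg (by positivity)]
      nlinarith) (convex_Icc 0 1) ⟨hy, hy1⟩ ⟨hx, hx1⟩
  simpa using this

noncomputable def Sf (φ1 φ2 : ℝ → ℝ) (L1 L2 a1 a2 β x y : ℝ) : ℝ := 
  if 0 ≤ x then a1 ^ β * Hf φ1 L1 (x ^ β) y else a2 ^ β * Hf φ2 L2 ((-x) ^ β) y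

set_option maxHeartbeats 1000000 in
lemma core_geom (F G : ℝ → ℝ → ℝ) (hFc : Continuous (fun z : ℝ × ℝ => F z.1 z.2))
    (hGc : Continuous (fun z : ℝ × ℝ => G z.1 z.2)) (d : ℕ) (β : ℝ) (hβ : 1 ≤ β)
    (hF : ∀ t x y : ℝ, 0 < t → F (t * x) (t ^ β * y) = t ^ d * F x y)
    (hG : ∀ t x y : ℝ, 0 < t → G (t * x) (t ^ β * y) = t ^ d * G x y)
    (φ1 φ2 : ℝ → ℝ) (L1 L2 a1 a2 σ c1 c2 K1 K2 C1 C2 : ℝ) (hσ : σ = 1 ∨ σ = -1) (ha1 : 0 < a1) (ha2 : 0 < a2)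
    (hL1 : L1 ≠ 0) (hL2 : L2 ≠ 0) (hLL : a1 ^ β * L1 = a2 ^ β * L2)
    (hc1 : 0 < c1) (hc2 : 0 < c2)
    (h1 : ∀ t t', c1 * |t - t'| ≤ |φ1 t - φ1 t'| ∧ |φ1 t - φ1 t'| ≤ K1 * |t - t'|)
    (h2 : ∀ t t', c2 * |t - t'| ≤ |φ2 t - φ2 t'| ∧ |φ2 t - φ2 t'| ≤ K2 * |t - t'|)
    (hl1 : Tendsto (fun t => φ1 t / t) (cobounded ℝ) (𝓝 L1))
    (hl2 : Tendsto (fun t => φ2 t / t) (cobounded ℝ) (𝓝 L2))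
    (hC1 : ∀ t t', 0 < t * t' → |t' * φ1 t - t * φ1 t'| ≤ C1 * |t - t'|)
    (hC2 : ∀ t t', 0 < t * t' → |t' * φ2 t - t * φ2 t'| ≤ C2 * |t - t'|)
    (e1 : ∀ t, a1 ^ d * G σ (φ1 t) = F 1 t)
    (e2 : ∀ t, a2 ^ d * G (-σ) (φ2 t) = F (-1) t) :
    ∃ U ∈ nhds (0 : ℝ × ℝ), ∃ Φ : ℝ × ℝ → ℝ × ℝ,
    Set.InjOn Φ U ∧ Φ 0 = 0 ∧ (∃ K : NNReal, LipschitzOnWith K Φ U) ∧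
    (∃ A : ℝ, 0 < A ∧ ∀ p ∈ U, ∀ q ∈ U, A * dist p q ≤ dist (Φ p) (Φ q)) ∧
    ∀ p ∈ U, G (Φ p).1 (Φ p).2 = F p.1 p.2 := by
  obtain ⟨D1, hD1, hu1⟩ := Hf_u φ1 L1 C1 hl1 hC1
  obtain ⟨D2, hD2, hu2⟩ := Hf_u φ2 L2 C2 hl2 hC2
  have hy1 := Hf_y φ1 L1 c1 K1 h1
  have hy2 := Hf_y φ2 L2 c2 K2 h2
  set S := Sf φ1 φ2 L1 L2 a1 a2 β with hS
  have hβ0 : β ≠ 0 := by linarith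
  have A1 : 0 < a1 ^ β := Real.rpow_pos_of_pos ha1 _
  have A2 : 0 < a2 ^ β := Real.rpow_pos_of_pos ha2 _
  have Spos : ∀ x y, 0 ≤ x → S x y = a1 ^ β * Hf φ1 L1 (x ^ β) y := by
    intro x y hx; simp [hS, Sf, hx]
  have Sneg : ∀ x y, x ≤ 0 → S x y = a2 ^ β * Hf φ2 L2 ((-x) ^ β) y := by
    intro x y hx
    rcases hx.eq_or_lt with rfl | hx
    · rw [Spos 0 y le_rfl]
      simp only [neg_zero, Real.zero_rpow hβ0, Hf, if_true]
      rw [← mul_assoc, hLL, mul_assoc]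
    · simp [hS, Sf, not_le.2 hx]
  set M := a1 ^ β * D1 * β + a2 ^ β * D2 * β with hM
  have hM1 : 0 ≤ a1 ^ β * D1 * β := by positivity
  have hM2 : 0 ≤ a2 ^ β * D2 * β := by positivity
  have hM0 : 0 ≤ M := by positivity
  -- x-Lipschitz
  have Sxp : ∀ x x' y, 0 ≤ x → x ≤ 1 → 0 ≤ x' → x' ≤ 1 → |S x y - S x' y| ≤ M * |x - x'| := by
    intro x x' y hx hx1 hx' hx1'
    rw [Spos x y hx, Spos x' y hx', ← mul_sub, abs_mul, abs_of_pos A1]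
    calc _ ≤ a1 ^ β * (D1 * (β * |x - x'|)) := by
          gcongr
          refine (hu1 _ _ _ (Real.rpow_nonneg hx _) (Real.rpow_nonneg hx' _)).trans ?_
          gcongr
          exact rpow_lip β hβ x x' hx hx1 hx' hx1'
      _ = a1 ^ β * D1 * β * |x - x'| := by ring
      _ ≤ _ := by gcongr; linarith
  have Sxn : ∀ x x' y, x ≤ 0 → -1 ≤ x → x' ≤ 0 → -1 ≤ x' → |S x y - S x' y| ≤ M * |x - x'| := by
    intro x x' y hx hx1 hx' hx1'
    rw [Sneg x y hx, Sneg x' y hx', ← mul_sub, abs_mul, abs_of_pos A2]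
    have hx : 0 ≤ -x := by linarith
    have hx' : 0 ≤ -x' := by linarith
    calc _ ≤ a2 ^ β * (D2 * (β * |(-x) - (-x')|)) := by
          gcongr
          refine (hu2 _ _ _ (Real.rpow_nonneg hx _) (Real.rpow_nonneg hx' _)).trans ?_
          gcongr
          exact rpow_lip β hβ _ _ hx (by linarith) hx' (by linarith)
      _ = a2 ^ β * D2 * β * |x - x'| := by
          rw [show -x - -x' = -(x - x') by ring, abs_neg]; ring
      _ ≤ _ := by gcongr; linarith
  have Sxm : ∀ x x' y, x ≤ 0 → -1 ≤ x → 0 ≤ x' → x' ≤ 1 → |S x y - S x' y| ≤ M * |x - x'| := by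
    intro x x' y hx hx1 hx' hx1'
    have i1 := Sxn x 0 y hx hx1 le_rfl (by norm_num)
    have i2 := Sxp 0 x' y le_rfl (by norm_num) hx' hx1'
    have i3 := abs_sub_le (S x y) (S 0 y) (S x' y)
    rw [sub_zero, abs_of_nonpos hx] at i1
    rw [zero_sub, abs_neg, abs_of_nonneg hx'] at i2
    rw [abs_of_nonpos (a := x - x') (by linarith)]
    linarith
  have Sx : ∀ x x' y, |x| ≤ 1 → |x'| ≤ 1 → |S x y - S x' y| ≤ M * |x - x'| := by
    intro x x' y hx hx'
    rw [abs_le] at hx hx'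
    rcases le_total 0 x with h | h <;> rcases le_total 0 x' with h' | h'
    · exact Sxp x x' y h hx.2 h' hx'.2
    · rw [abs_sub_comm, abs_sub_comm x]; exact Sxm x' x y h' hx'.1 h hx.2
    · exact Sxm x x' y h hx.1 h' hx'.2
    · exact Sxn x x' y h hx.1 h' hx'.1
  set m := min (a1 ^ β * min c1 |L1|) (a2 ^ β * min c2 |L2|) with hm
  have hm0 : 0 < m := by
    have := abs_pos.2 hL1
    have := abs_pos.2 hL2
    rw [hm]; positivity
  set N := max (a1 ^ β * max K1 |L1|) (a2 ^ β * max K2 |L2|) with hN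
  have hN0 : 0 ≤ N := by
    refine le_trans ?_ (le_max_left _ _)
    have : 0 ≤ max K1 |L1| := (abs_nonneg L1).trans (le_max_right _ _)
    positivity
  have Sy : ∀ x y y', m * |y - y'| ≤ |S x y - S x y'| ∧ |S x y - S x y'| ≤ N * |y - y'| := by
    intro x y y'
    rcases le_total 0 x with h | h
    · rw [Spos x y h, Spos x y' h, ← mul_sub, abs_mul, abs_of_pos A1]
      have := hy1 (x ^ β) y y' (Real.rpow_nonneg h _)
      constructor
      · calc m * |y - y'| ≤ (a1 ^ β * min c1 |L1|) * |y - y'| := by gcongr; exact min_le_left _ _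
          _ = a1 ^ β * (min c1 |L1| * |y - y'|) := by ring
          _ ≤ _ := by gcongr; exact this.1
      · calc _ ≤ a1 ^ β * (max K1 |L1| * |y - y'|) := by gcongr; exact this.2
          _ = (a1 ^ β * max K1 |L1|) * |y - y'| := by ring
          _ ≤ _ := by gcongr; exact le_max_left _ _
    · rw [Sneg x y h, Sneg x y' h, ← mul_sub, abs_mul, abs_of_pos A2]
      have := hy2 ((-x) ^ β) y y' (Real.rpow_nonneg (by linarith) _)
      constructor
      · calc m * |y - y'| ≤ (a2 ^ β * min c2 |L2|) * |y - y'| := by gcongr; exact min_le_right _ _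
          _ = a2 ^ β * (min c2 |L2| * |y - y'|) := by ring
          _ ≤ _ := by gcongr; exact this.1
      · calc _ ≤ a2 ^ β * (max K2 |L2| * |y - y'|) := by gcongr; exact this.2
          _ = (a2 ^ β * max K2 |L2|) * |y - y'| := by ring
          _ ≤ _ := by gcongr; exact le_max_right _ _
  -- first coordinate
  set f : ℝ → ℝ := fun x => if 0 ≤ x then σ * (a1 * x) else σ * (a2 * x) with hf
  have hσabs : |σ| = 1 := by rcases hσ with rfl | rfl <;> simp
  set b := min a1 a2 with hb
  set B := max a1 a2 with hB
  have hb0 : 0 < b := lt_min ha1 ha2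
  have hB0 : 0 < B := lt_max_of_lt_left ha1
  have b1 : b ≤ a1 := min_le_left _ _
  have b2 : b ≤ a2 := min_le_right _ _
  have B1 : a1 ≤ B := le_max_left _ _
  have B2 : a2 ≤ B := le_max_right _ _
  have fbd' : ∀ x x', x ≤ x' → b * |x - x'| ≤ |f x - f x'| ∧ |f x - f x'| ≤ B * |x - x'| := by
    intro x x' hxx
    rw [abs_sub_comm, abs_sub_comm (f x), abs_of_nonneg (sub_nonneg.2 hxx)]
    simp only [hf]
    split_ifs with g1 g2 g2 <;> rw [← mul_sub, abs_mul, hσabs, one_mul]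
    · rw [← mul_sub, abs_mul, abs_of_pos ha1, abs_of_nonneg (sub_nonneg.2 hxx)]
      constructor <;> nlinarith
    · rw [abs_of_nonneg (by nlinarith)]
      constructor <;> nlinarith
    · exfalso; linarith
    · rw [← mul_sub, abs_mul, abs_of_pos ha2, abs_of_nonneg (sub_nonneg.2 hxx)]
      constructor <;> nlinarith
  have fbd : ∀ x x', b * |x - x'| ≤ |f x - f x'| ∧ |f x - f x'| ≤ B * |x - x'| := by
    intro x x'
    rcases le_total x x' with h | h
    · exact fbd' x x' h
    · rw [abs_sub_comm, abs_sub_comm (f x)]; exact fbd' x' x h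
  have lower : ∃ A : ℝ, 0 < A ∧ ∀ p ∈ {p : ℝ × ℝ | |p.1| < 1}, ∀ q ∈ {p : ℝ × ℝ | |p.1| < 1}, 
      A * dist p q ≤ dist (f p.1, S p.1 p.2) (f q.1, S q.1 q.2) := by
    refine ⟨min b (m / (1 + M / b)), by positivity, ?_⟩
    intro p hp q hq
    simp only [Set.mem_ofPred_eq] at hp hq
    set E := dist (f p.1, S p.1 p.2) (f q.1, S q.1 q.2) with hE
    have i1 : |f p.1 - f q.1| ≤ E := by
      rw [hE, Prod.dist_eq, Real.dist_eq]; exact le_max_left _ _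
    have i2 : |S p.1 p.2 - S q.1 q.2| ≤ E := by
      rw [hE, Prod.dist_eq, Real.dist_eq, Real.dist_eq]; exact le_max_right _ _
    have i3 := (fbd p.1 q.1).1.trans i1
    have i4 := (Sy p.1 p.2 q.2).1
    have i5 := abs_sub_le (S p.1 p.2) (S q.1 q.2) (S p.1 q.2)
    have i6 := Sx q.1 p.1 q.2 hq.le hp.le
    rw [abs_sub_comm q.1] at i6
    have i7 : |p.1 - q.1| ≤ E / b := by rw [le_div_iff₀ hb0]; linarith
    have i8 : m * |p.2 - q.2| ≤ E * (1 + M / b) := by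
      have : M * |p.1 - q.1| ≤ M * (E / b) := by gcongr
      have e : M * (E / b) = E * (M / b) := by ring
      linarith
    rw [Prod.dist_eq, Real.dist_eq, Real.dist_eq, mul_max_of_nonneg _ _ (by positivity)]
    apply max_le
    · refine le_trans ?_ i3
      gcongr; exact min_le_left _ _
    · calc _ ≤ m / (1 + M / b) * |p.2 - q.2| := by gcongr; exact min_le_right _ _
        _ = (m * |p.2 - q.2|) / (1 + M / b) := by ring
        _ ≤ E := by rw [div_le_iff₀ (by positivity)]; exact i8
  have hGσ : ∀ x y, 0 < x → G (σ * (a1 * x)) (S x y) = F x y := by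
    intro x y hx
    have hxβ : 0 < x ^ β := Real.rpow_pos_of_pos hx _
    rw [Spos x y hx.le]
    simp only [Hf, hxβ.ne', if_false]
    have i1 := hG (a1 * x) σ (φ1 (y / x ^ β)) (by positivity)
    rw [Real.mul_rpow ha1.le hx.le] at i1
    rw [← mul_assoc (a1 ^ β), mul_comm σ, i1, mul_pow, mul_right_comm, e1]
    have i2 := hF x 1 (y / x ^ β) hx
    rw [mul_one, mul_div_cancel₀ _ hxβ.ne'] at i2
    rw [i2]; ring
  refine ⟨{p | |p.1| < 1}, ?_, fun p => (f p.1, S p.1 p.2), ?_, ?_, ?_, lower, ?_⟩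
  · apply IsOpen.mem_nhds
    · exact isOpen_lt (continuous_fst.abs) continuous_const
    · simp
  · obtain ⟨A, hA, h⟩ := lower
    intro p hp q hq hpq
    have := h p hp q hq
    simp only at hpq
    rw [hpq, dist_self] at this
    have : dist p q ≤ 0 := by
      by_contra! hh
      nlinarith [mul_pos hA hh]
    exact dist_le_zero.1 this
  · simp only [Prod.fst_zero, Prod.snd_zero, hf, Spos 0 0 le_rfl]
    simp [Hf, Real.zero_rpow hβ0]
  · refine ⟨Real.toNNReal (B + M + N), LipschitzOnWith.of_dist_le_mul ?_⟩
    intro p hp q hq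
    simp only [Set.mem_ofPred_eq] at hp hq
    rw [Real.coe_toNNReal _ (by positivity)]
    have j1 : |p.1 - q.1| ≤ dist p q := by
      rw [Prod.dist_eq, Real.dist_eq]; exact le_max_left _ _
    have j2 : |p.2 - q.2| ≤ dist p q := by
      rw [Prod.dist_eq, Real.dist_eq, Real.dist_eq]; exact le_max_right _ _
    have j0 := dist_nonneg (x := p) (y := q)
    rw [Prod.dist_eq, Real.dist_eq, Real.dist_eq]
    apply max_le
    · have := (fbd p.1 q.1).2
      have j3 : B * |p.1 - q.1| ≤ B * dist p q := by gcongr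
      have j4 := mul_nonneg hM0 j0
      have j5 := mul_nonneg hN0 j0
      have j6 : (B + M + N) * dist p q = B * dist p q + M * dist p q + N * dist p q := by ring
      simp only [Prod.dist_eq, Real.dist_eq] at *
      linarith
    · have k1 := (Sy p.1 p.2 q.2).2
      have k2 := Sx p.1 q.1 q.2 hp.le hq.le
      have k3 := abs_sub_le (S p.1 p.2) (S p.1 q.2) (S q.1 q.2)
      have j3 : M * |p.1 - q.1| ≤ M * dist p q := by gcongr
      have j4 := mul_nonneg hB0.le j0
      have j5 : N * |p.2 - q.2| ≤ N * dist p q := by gcongr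
      have j6 : (B + M + N) * dist p q = B * dist p q + M * dist p q + N * dist p q := by ring
      simp only [Prod.dist_eq, Real.dist_eq] at *
      linarith
  · rintro ⟨x, y⟩ hp
    simp only [Set.mem_ofPred_eq] at hp
    simp only [hf]
    rcases lt_trichotomy x 0 with hx | rfl | hx
    · rw [if_neg (not_le.2 hx), Sneg x y hx.le]
      have hx' : 0 < -x := by linarith
      have hxβ : 0 < (-x) ^ β := Real.rpow_pos_of_pos hx' _
      simp only [Hf, hxβ.ne', if_false]
      have i1 := hG (a2 * (-x)) (-σ) (φ2 (y / (-x) ^ β)) (by positivity)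
      rw [Real.mul_rpow ha2.le hx'.le] at i1
      rw [← mul_assoc (a2 ^ β), show σ * (a2 * x) = a2 * (-x) * (-σ) by ring, i1, mul_pow, mul_right_comm, e2]
      have i2 := hF (-x) (-1) (y / (-x) ^ β) hx'
      rw [mul_div_cancel₀ _ hxβ.ne', show -x * -1 = x by ring] at i2
      rw [i2]; ring
    · rw [if_pos le_rfl]
      -- continuity
      have t1 : Tendsto (fun x => S x y) (𝓝[>] 0) (𝓝 (S 0 y)) := by
        rw [tendsto_iff_dist_tendsto_zero]
        have t2 : Tendsto (fun x : ℝ => M * |x|) (𝓝[>] 0) (𝓝 0) := by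
          have : Continuous (fun x : ℝ => M * |x|) := by fun_prop
          have := (this.tendsto 0).mono_left (nhdsWithin_le_nhds (s := Set.Ioi 0))
          simpa using this
        refine squeeze_zero' (Eventually.of_forall fun x => dist_nonneg) ?_ t2
        have : ∀ᶠ x : ℝ in 𝓝[>] 0, x ∈ Set.Ioo (0:ℝ) 1 := Ioo_mem_nhdsGT (by norm_num)
        filter_upwards [this] with x hx
        rw [Real.dist_eq]
        have := Sx x 0 y (by rw [abs_of_pos hx.1]; exact hx.2.le) (by simp)
        simpa using this
      have t0 : Tendsto (fun x : ℝ => x) (𝓝[>] 0) (𝓝 0) := nhdsWithin_le_nhds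
      have t3 : Tendsto (fun x : ℝ => (σ * (a1 * x), S x y)) (𝓝[>] 0) (𝓝 (σ * (a1 * 0), S 0 y)) :=
        ((t0.const_mul a1).const_mul σ).prodMk_nhds t1
      have t4 : Tendsto (fun x : ℝ => (x, y)) (𝓝[>] 0) (𝓝 (0, y)) :=
        t0.prodMk_nhds tendsto_const_nhds
      have t5 := (hGc.tendsto _).comp t3
      have t6 := (hFc.tendsto _).comp t4
      refine tendsto_nhds_unique t5 (t6.congr' ?_)
      filter_upwards [self_mem_nhdsWithin] with x hx
      exact (hGσ x y hx).symm
    · rw [if_pos hx.le]; exact hGσ x y hx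

lemma eval2_eq (F : MvPolynomial (Fin 2) ℝ) (x y : ℝ) :
    eval2 F x y = ∑ e ∈ F.support, F.coeff e * (x ^ e 0 * y ^ e 1) := by
  rw [eval2, MvPolynomial.eval_eq']
  simp [Fin.prod_univ_two]

lemma supp_cond (r s d : ℕ) (hs : 0 < s) (β : ℝ) (hβ : β = (r : ℝ) / (s : ℝ))
    (F : MvPolynomial (Fin 2) ℝ)
    (hF : ∀ t x y : ℝ, 0 < t → eval2 F (t * x) (t ^ β * y) = t ^ d * eval2 F x y)
    (e : Fin 2 →₀ ℕ) (he : e ∈ F.support) : s * e 0 + r * e 1 = s * d := by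
  have hτ : ((2:ℝ) ^ s) ^ β = 2 ^ r := by
    rw [← Real.rpow_natCast, ← Real.rpow_natCast, ← Real.rpow_mul (by norm_num), hβ]
    congr 1
    field_simp
  have h : (∑ e ∈ F.support, MvPolynomial.monomial e (F.coeff e * 2 ^ (s * e 0 + r * e 1)))
      = MvPolynomial.C ((2:ℝ) ^ (s * d)) * F := by
    apply MvPolynomial.funext
    intro x
    have h1 := hF (2 ^ s) (x 0) (x 1) (by positivity)
    rw [hτ, eval2_eq, eval2_eq] at h1
    rw [map_sum, map_mul, MvPolynomial.eval_C, MvPolynomial.eval_eq' x F]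
    simp only [MvPolynomial.eval_monomial, Fin.prod_univ_two]
    rw [pow_mul, ← h1]
    refine Finset.sum_congr rfl fun e _ => ?_
    rw [Finsupp.prod_fintype _ _ (by simp), Fin.prod_univ_two]
    rw [mul_pow, mul_pow, pow_add, pow_mul, pow_mul]
    ring
  have h2 := congrArg (MvPolynomial.coeff e) h
  rw [MvPolynomial.coeff_C_mul, MvPolynomial.coeff_sum] at h2
  simp only [MvPolynomial.coeff_monomial] at h2
  rw [Finset.sum_ite_eq' F.support e, if_pos he, mul_comm] at h2
  have h3 := mul_right_cancel₀ (MvPolynomial.mem_support_iff.1 he) h2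
  exact pow_right_injective₀ (by norm_num : (0:ℝ) < 2) (by norm_num) h3

lemma struct_F (r s d : ℕ) (hr : 0 < r) (hs : 0 < s) (hgcd : Nat.gcd r s = 1) (β : ℝ) (hβ : β = (r : ℝ) / (s : ℝ))
    (F : MvPolynomial (Fin 2) ℝ)
    (hF : ∀ t x y : ℝ, 0 < t → eval2 F (t * x) (t ^ β * y) = t ^ d * eval2 F x y)
    (hFX : ∀ c : ℝ, F ≠ MvPolynomial.C c * (MvPolynomial.X 0 : MvPolynomial (Fin 2) ℝ) ^ d) :
    ∃ P : ℝ[X], 1 ≤ P.natDegree ∧ 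
      (¬ (MvPolynomial.X 0 : MvPolynomial (Fin 2) ℝ) ∣ F → d = r * P.natDegree) ∧
      ∀ ε t : ℝ, (ε = 1 ∨ ε = -1) → eval2 F ε t = ε ^ d * P.eval (ε ^ r * t ^ s) := by
  have hsupp := supp_cond r s d hs β hβ F hF
  have hdvd : ∀ e ∈ F.support, e 1 = s * (e 1 / s) ∧ d = e 0 + r * (e 1 / s) := by
    intro e he
    have h := hsupp e he
    have h1 : s ∣ r * e 1 := by
      have : s ∣ s * e 0 + r * e 1 := by rw [h]; exact Dvd.intro _ rfl
      exact (Nat.dvd_add_right (Dvd.intro _ rfl)).1 this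
    have h2 : s ∣ e 1 := (Nat.Coprime.symm hgcd).dvd_of_dvd_mul_left h1
    have h3 : e 1 = s * (e 1 / s) := (Nat.mul_div_cancel' h2).symm
    refine ⟨h3, ?_⟩
    have h4 : s * d = s * (e 0 + r * (e 1 / s)) := by
      rw [← h]; nth_rewrite 1 [h3]; ring
    exact Nat.eq_of_mul_eq_mul_left hs h4
  have hinj : ∀ e ∈ F.support, ∀ e' ∈ F.support, e 1 / s = e' 1 / s → e = e' := by
    intro e he e' he' h
    have h1 := hdvd e he
    have h2 := hdvd e' he'
    ext i
    fin_cases i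
    · simp only [Fin.zero_eta]; rw [h] at h1; omega
    · simp only [Fin.mk_one]; rw [h1.1, h2.1, h]
  set P : ℝ[X] := ∑ e ∈ F.support, Polynomial.monomial (e 1 / s) (F.coeff e) with hP
  have hcoeff : ∀ e ∈ F.support, P.coeff (e 1 / s) = F.coeff e := by
    intro e he
    rw [hP, Polynomial.finsetSum_coeff]
    rw [Finset.sum_eq_single e]
    · simp
    · intro e' he' hne
      rw [Polynomial.coeff_monomial, if_neg]
      intro h; exact hne (hinj e' he' e he h)
    · intro h; exact absurd he h
  have hle : ∀ e ∈ F.support, e 1 / s ≤ P.natDegree := by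
    intro e he
    apply Polynomial.le_natDegree_of_ne_zero
    rw [hcoeff e he]; exact MvPolynomial.mem_support_iff.1 he
  have hpos : 1 ≤ P.natDegree := by
    by_contra! hlt
    have hz : P.natDegree = 0 := by omega
    have h0 : ∀ e ∈ F.support, e = Finsupp.single 0 d := by
      intro e he
      have h1 := hle e he
      have h2 := hdvd e he
      have h3 : e 1 / s = 0 := Nat.le_zero.1 (hz ▸ h1)
      rw [h3] at h2
      ext i
      fin_cases i
      · simp; omega
      · simp; omega
    apply hFX (F.coeff (Finsupp.single 0 d))
    rw [MvPolynomial.X_pow_eq_monomial, MvPolynomial.C_mul_monomial, mul_one]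
    ext e
    rw [MvPolynomial.coeff_monomial]
    split_ifs with h
    · rw [h]
    · by_contra h2
      exact h (h0 e (MvPolynomial.mem_support_iff.2 h2)).symm
  refine ⟨P, hpos, ?_, ?_⟩
  · intro hX
    have h1 : ∃ e ∈ F.support, e 0 = 0 := by
      by_contra! hne
      apply hX
      rw [F.as_sum]
      refine Finset.dvd_sum fun e he => ?_
      rw [MvPolynomial.X_dvd_monomial]
      exact Or.inr (hne e he)
    obtain ⟨e, he, he0⟩ := h1
    have h2 := hdvd e he
    have h3 := hle e he
    have h4 : P.coeff P.natDegree ≠ 0 := by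
      rw [← Polynomial.leadingCoeff, Ne, Polynomial.leadingCoeff_eq_zero]
      intro h; rw [h] at hpos; simp at hpos
    obtain ⟨e', he', h5⟩ : ∃ e' ∈ F.support, e' 1 / s = P.natDegree := by
      by_contra! hne
      apply h4
      rw [hP, Polynomial.finsetSum_coeff, ← hP]
      refine Finset.sum_eq_zero fun e he => ?_
      rw [Polynomial.coeff_monomial, if_neg (hne e he)]
    have h6 := hdvd e' he'
    rw [h5] at h6
    have h7 : r * (e 1 / s) ≤ r * P.natDegree := Nat.mul_le_mul_left _ h3
    omega
  · intro ε t hε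
    rw [eval2_eq, hP, Polynomial.eval_finsetSum, Finset.mul_sum]
    refine Finset.sum_congr rfl fun e he => ?_
    have h1 := hdvd e he
    rw [Polynomial.eval_monomial]
    set k := e 1 / s with hk
    have hε2 : ε ^ d * ε ^ (r * k) = ε ^ e 0 := by
      rw [h1.2, pow_add, mul_assoc, ← mul_pow]
      have : ε * ε = 1 := by rcases hε with rfl | rfl <;> norm_num
      rw [this, one_pow, mul_one]
    rw [h1.1, mul_pow, ← pow_mul, ← pow_mul, ← hε2]
    ring

lemma eval2_cont (F : MvPolynomial (Fin 2) ℝ) : Continuous (fun z : ℝ × ℝ => eval2 F z.1 z.2) := by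
  simp only [eval2_eq]
  fun_prop

lemma bilip (φ : ℝ → ℝ) (hb : Function.Bijective φ) (hl : ∃ K : NNReal, LipschitzWith K φ)
    (hi : ∃ K : NNReal, LipschitzWith K (Function.invFun φ)) :
    ∃ ε c K : ℝ, (ε = 1 ∨ ε = -1) ∧ 0 < c ∧ 
      ∀ t t', t ≤ t' → c * (t' - t) ≤ ε * (φ t' - φ t) ∧ ε * (φ t' - φ t) ≤ K * (t' - t) := by
  obtain ⟨K, hK⟩ := hl
  obtain ⟨K', hK'⟩ := hi
  have h1 : ∀ t t', |φ t' - φ t| ≤ K * |t' - t| := by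
    intro t t'
    have := hK.dist_le_mul t' t
    simpa [Real.dist_eq] using this
  have h2 : ∀ t t', (K' + 1 : ℝ)⁻¹ * |t' - t| ≤ |φ t' - φ t| := by
    intro t t'
    have := hK'.dist_le_mul (φ t') (φ t)
    rw [Function.leftInverse_invFun hb.1, Function.leftInverse_invFun hb.1, Real.dist_eq, Real.dist_eq] at this
    rw [inv_mul_le_iff₀ (by positivity)]
    nlinarith [abs_nonneg (φ t' - φ t)]
  rcases hK.continuous.strictMono_of_inj hb.1 with h | h
  · refine ⟨1, (K' + 1 : ℝ)⁻¹, K, Or.inl rfl, by positivity, fun t t' htt => ?_⟩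
    have i1 := h1 t t'
    have i2 := h2 t t'
    rw [abs_of_nonneg (sub_nonneg.2 htt), abs_of_nonneg (sub_nonneg.2 (h.monotone htt))] at i1 i2
    rw [one_mul]; exact ⟨i2, i1⟩
  · refine ⟨-1, (K' + 1 : ℝ)⁻¹, K, Or.inr rfl, by positivity, fun t t' htt => ?_⟩
    have i1 := h1 t t'
    have i2 := h2 t t'
    rw [abs_of_nonneg (sub_nonneg.2 htt), abs_of_nonpos (sub_nonpos.2 (h.antitone htt))] at i1 i2
    rw [neg_one_mul]; exact ⟨i2, i1⟩

/-- height polynomial -/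
noncomputable def hpoly (P : ℝ[X]) (a : ℝ) (d r s : ℕ) (σ : ℝ) : ℝ[X] :=
  Polynomial.C (a * σ ^ d) * P.comp (Polynomial.C (σ ^ r) * Polynomial.X ^ s)

lemma hpoly_facts (P : ℝ[X]) (a : ℝ) (ha : 0 < a) (d r s : ℕ) (hs : 0 < s) (σ : ℝ) (hσ : σ = 1 ∨ σ = -1) :
    (hpoly P a d r s σ).natDegree = P.natDegree * s ∧ 
    |(hpoly P a d r s σ).leadingCoeff| = a * |P.leadingCoeff| ∧
    ∀ t, (hpoly P a d r s σ).eval t = a * (σ ^ d * P.eval (σ ^ r * t ^ s)) := by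
  have hσabs : |σ| = 1 := by rcases hσ with rfl | rfl <;> simp
  have hσ0 : σ ≠ 0 := by rcases hσ with rfl | rfl <;> norm_num
  have hn : (Polynomial.C (σ ^ r) * Polynomial.X ^ s : ℝ[X]).natDegree = s :=
    Polynomial.natDegree_C_mul_X_pow s _ (pow_ne_zero _ hσ0)
  refine ⟨?_, ?_, ?_⟩
  · rw [hpoly, Polynomial.natDegree_C_mul (by positivity), Polynomial.natDegree_comp, hn]
  · rw [hpoly, Polynomial.leadingCoeff_mul, Polynomial.leadingCoeff_C, 
      Polynomial.leadingCoeff_comp (by rw [hn]; omega), Polynomial.leadingCoeff_C_mul_X_pow]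
    simp [abs_mul, abs_pow, hσabs, abs_of_pos ha]
  · intro t
    simp [hpoly, Polynomial.eval_comp]
    ring

lemma core (r s d : ℕ) (hrs : s < r) (hs : 0 < s) (β : ℝ) (hβ : β = (r : ℝ) / (s : ℝ))
    (F G : MvPolynomial (Fin 2) ℝ)
    (hF : ∀ t x y : ℝ, 0 < t → eval2 F (t * x) (t ^ β * y) = t ^ d * eval2 F x y)
    (hG : ∀ t x y : ℝ, 0 < t → eval2 G (t * x) (t ^ β * y) = t ^ d * eval2 G x y)
    (P Q : ℝ[X]) (hP : 1 ≤ P.natDegree) (hQ : 1 ≤ Q.natDegree)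
    (hFP : ∀ ε t : ℝ, (ε = 1 ∨ ε = -1) → eval2 F ε t = ε ^ d * P.eval (ε ^ r * t ^ s))
    (hGQ : ∀ ε t : ℝ, (ε = 1 ∨ ε = -1) → eval2 G ε t = ε ^ d * Q.eval (ε ^ r * t ^ s))
    (a1 a2 σ ε c1 c2 K1 K2 : ℝ) (hσ : σ = 1 ∨ σ = -1) (hε : ε = 1 ∨ ε = -1) (ha1 : 0 < a1) (ha2 : 0 < a2)
    (hc1 : 0 < c1) (hc2 : 0 < c2) (φ1 φ2 : ℝ → ℝ)
    (h1 : ∀ t t', t ≤ t' → c1 * (t' - t) ≤ ε * (φ1 t' - φ1 t) ∧ ε * (φ1 t' - φ1 t) ≤ K1 * (t' - t))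
    (h2 : ∀ t t', t ≤ t' → c2 * (t' - t) ≤ ε * (φ2 t' - φ2 t) ∧ ε * (φ2 t' - φ2 t) ≤ K2 * (t' - t))
    (e1 : ∀ t, a1 ^ d * eval2 G σ (φ1 t) = eval2 F 1 t)
    (e2 : ∀ t, a2 ^ d * eval2 G (-σ) (φ2 t) = eval2 F (-1) t)
    (hcond : a1 = a2 ∨ d = r * Q.natDegree) :
    LocalLipEquiv (fun z => eval2 F z.1 z.2) (fun z => eval2 G z.1 z.2) := by
  have hσ' : -σ = 1 ∨ -σ = -1 := by rcases hσ with rfl | rfl <;> simp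
  obtain ⟨p1n, p1l, p1e⟩ := hpoly_facts Q (a1 ^ d) (by positivity) d r s hs σ hσ
  obtain ⟨p2n, p2l, p2e⟩ := hpoly_facts Q (a2 ^ d) (by positivity) d r s hs (-σ) hσ'
  obtain ⟨q1n, q1l, q1e⟩ := hpoly_facts P 1 one_pos d r s hs 1 (Or.inl rfl)
  obtain ⟨q2n, q2l, q2e⟩ := hpoly_facts P 1 one_pos d r s hs (-1) (Or.inr rfl)
  have hPs : 1 ≤ P.natDegree * s := Nat.mul_pos hP hs
  have hQs : 1 ≤ Q.natDegree * s := Nat.mul_pos hQ hs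
  obtain ⟨-, L1, hL1, hLL1, hlim1, C1, hC1⟩ := keyA _ _ (by rw [p1n]; exact hQs) (by rw [q1n]; exact hPs) 
    φ1 ε c1 K1 hε h1 hc1 (fun t => by rw [p1e, q1e, ← hGQ _ _ hσ, ← hFP _ _ (Or.inl rfl), e1, one_mul])
  obtain ⟨-, L2, hL2, hLL2, hlim2, C2, hC2⟩ := keyA _ _ (by rw [p2n]; exact hQs) (by rw [q2n]; exact hPs) 
    φ2 ε c2 K2 hε h2 hc2 (fun t => by rw [p2e, q2e, ← hGQ _ _ hσ', ← hFP _ _ (Or.inr rfl), e2, one_mul])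
  rw [p1n, p1l, q1l] at hLL1
  rw [p2n, p2l, q2l] at hLL2
  have hB : |Q.leadingCoeff| ≠ 0 := by
    rw [abs_ne_zero, Ne, Polynomial.leadingCoeff_eq_zero]
    rintro rfl; simp at hQ
  have hEq : |L1| ^ (Q.natDegree * s) * a1 ^ d = |L2| ^ (Q.natDegree * s) * a2 ^ d := by
    apply mul_right_cancel₀ hB
    rw [mul_assoc, hLL1, mul_assoc, hLL2]
  have hL10 : L1 ≠ 0 := by rintro rfl; simp at hL1
  have hL20 : L2 ≠ 0 := by rintro rfl; simp at hL2
  have A1 : 0 < a1 ^ β := Real.rpow_pos_of_pos ha1 _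
  have A2 : 0 < a2 ^ β := Real.rpow_pos_of_pos ha2 _
  have habs : a1 ^ β * |L1| = a2 ^ β * |L2| := by
    have hn0 : Q.natDegree * s ≠ 0 := by omega
    rcases hcond with h | h
    · subst h
      have := mul_right_cancel₀ (by positivity) hEq
      rw [(pow_left_inj₀ (abs_nonneg _) (abs_nonneg _) hn0).1 this]
    · have hpow : ∀ a : ℝ, 0 < a → (a ^ β) ^ (Q.natDegree * s) = a ^ d := by
        intro a ha
        rw [← Real.rpow_natCast, ← Real.rpow_mul ha.le, ← Real.rpow_natCast, h, hβ]
        congr 1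
        push_cast
        field_simp
      refine (pow_left_inj₀ (by positivity) (by positivity) hn0).1 ?_
      rw [mul_pow, mul_pow, hpow _ ha1, hpow _ ha2]
      linarith
  have hLabs : ∀ L, 0 < ε * L → |L| = ε * L := by
    intro L hL
    have : |ε| = 1 := by rcases hε with rfl | rfl <;> simp
    rw [← abs_of_pos hL, abs_mul, this, one_mul]
  have hLL : a1 ^ β * L1 = a2 ^ β * L2 := by
    rw [hLabs _ hL1, hLabs _ hL2] at habs
    have hε0 : ε ≠ 0 := by rcases hε with rfl | rfl <;> norm_num
    apply mul_left_cancel₀ hε0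
    linarith
  have hβ1 : 1 ≤ β := by
    rw [hβ, le_div_iff₀ (by exact_mod_cast hs)]
    rw [one_mul]; exact_mod_cast hrs.le
  exact core_geom (eval2 F) (eval2 G) (eval2_cont F) (eval2_cont G) d β hβ1 hF hG φ1 φ2 L1 L2 a1 a2 σ
    c1 c2 K1 K2 C1 C2 hσ ha1 ha2 hL10 hL20 hLL hc1 hc2 (A0 φ1 ε c1 K1 hε h1 hc1) (A0 φ2 ε c2 K2 hε h2 hc2)
    hlim1 hlim2 hC1 hC2 e1 e2


end helpers

/-- Sufficient conditions for ℛ-semialgebraic Lipschitz equivalence: if the height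
functions of `F` and `G` are related by a proto-transition and (a) `r` is even or `s`
is odd, or (b) `λ₁ = λ₂`, or (c) `X` divides neither `F` nor `G`, then `F` and `G`
are Lipschitz equivalent near the origin. -/
theorem stmt_19 (r s d : ℕ) (hrs : s < r) (hs : 0 < s) (hgcd : Nat.gcd r s = 1)
    (hd : 1 ≤ d) (β : ℝ) (hβ : β = (r : ℝ) / (s : ℝ))
    (F G : MvPolynomial (Fin 2) ℝ)
    (hF : ∀ t x y : ℝ, 0 < t → eval2 F (t * x) (t ^ β * y) = t ^ d * eval2 F x y)
    (hG : ∀ t x y : ℝ, 0 < t → eval2 G (t * x) (t ^ β * y) = t ^ d * eval2 G x y)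
    (hFX : ∀ c : ℝ, F ≠ MvPolynomial.C c * (MvPolynomial.X 0 : MvPolynomial (Fin 2) ℝ) ^ d)
    (hGX : ∀ c : ℝ, G ≠ MvPolynomial.C c * (MvPolynomial.X 0 : MvPolynomial (Fin 2) ℝ) ^ d)
    (l1 l2 : ℝ) (hl1 : l1 ≠ 0) (hl2 : l2 ≠ 0) (hll : 0 < l1 * l2)
    (φ1 φ2 : ℝ → ℝ)
    (hφ1bij : Function.Bijective φ1) (hφ1lip : ∃ K : NNReal, LipschitzWith K φ1)
    (hφ1inv : ∃ K : NNReal, LipschitzWith K (Function.invFun φ1))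
    (hφ2bij : Function.Bijective φ2) (hφ2lip : ∃ K : NNReal, LipschitzWith K φ2)
    (hφ2inv : ∃ K : NNReal, LipschitzWith K (Function.invFun φ2))
    (hpos : 0 < l1 → 0 < l2 →
      (∀ t : ℝ, |l1| ^ d * eval2 G 1 (φ1 t) = eval2 F 1 t) ∧
      (∀ t : ℝ, |l2| ^ d * eval2 G (-1) (φ2 t) = eval2 F (-1) t))
    (hneg : l1 < 0 → l2 < 0 →
      (∀ t : ℝ, |l1| ^ d * eval2 G (-1) (φ1 t) = eval2 F 1 t) ∧
      (∀ t : ℝ, |l2| ^ d * eval2 G 1 (φ2 t) = eval2 F (-1) t))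
    (hcond : (Even r ∨ Odd s) ∨ l1 = l2 ∨
      (¬ (MvPolynomial.X 0 : MvPolynomial (Fin 2) ℝ) ∣ F ∧
       ¬ (MvPolynomial.X 0 : MvPolynomial (Fin 2) ℝ) ∣ G)) :
    LocalLipEquiv (fun z => eval2 F z.1 z.2) (fun z => eval2 G z.1 z.2) := by
  have hr : 0 < r := by omega
  obtain ⟨P, hP, -, hFP⟩ := struct_F r s d hr hs hgcd β hβ F hF hFX
  obtain ⟨Q, hQ, hQX, hGQ⟩ := struct_F r s d hr hs hgcd β hβ G hG hGX
  obtain ⟨ε1, c1, K1, hε1, hc1, h1⟩ := bilip φ1 hφ1bij hφ1lip hφ1inv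
  obtain ⟨ε2, c2, K2, hε2, hc2, h2⟩ := bilip φ2 hφ2bij hφ2lip hφ2inv
  have ha1 : 0 < |l1| := abs_pos.2 hl1
  have ha2 : 0 < |l2| := abs_pos.2 hl2
  obtain ⟨σ, hσ, e1, e2⟩ : ∃ σ : ℝ, (σ = 1 ∨ σ = -1) ∧
      (∀ t, |l1| ^ d * eval2 G σ (φ1 t) = eval2 F 1 t) ∧
      (∀ t, |l2| ^ d * eval2 G (-σ) (φ2 t) = eval2 F (-1) t) := by
    rcases pos_and_pos_or_neg_and_neg_of_mul_pos hll with ⟨i1, i2⟩ | ⟨i1, i2⟩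
    · exact ⟨1, Or.inl rfl, hpos i1 i2⟩
    · refine ⟨-1, Or.inr rfl, (hneg i1 i2).1, ?_⟩
      rw [neg_neg]; exact (hneg i1 i2).2
  have hσ' : -σ = 1 ∨ -σ = -1 := by rcases hσ with rfl | rfl <;> simp
  rcases Nat.even_or_odd r with hre | hro
  · refine core r s d hrs hs β hβ F G hF hG P Q hP hQ hFP hGQ |l1| |l1| σ ε1 c1 c1 K1 K1 hσ hε1 ha1 ha1
      hc1 hc1 φ1 φ1 h1 h1 e1 ?_ (Or.inl rfl)
    intro t
    have i := e1 t
    rw [hGQ _ _ hσ, hFP _ _ (Or.inl rfl)] at i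
    rw [hGQ _ _ hσ', hFP _ _ (Or.inr rfl), hre.neg_pow, hre.neg_pow, neg_pow σ d]
    rw [one_pow, one_mul] at i
    rw [← i]; ring
  · rcases Nat.even_or_odd s with hse | hso
    · have hcond' : |l1| = |l2| ∨ d = r * Q.natDegree := by
        rcases hcond with (h | h) | h | h
        · exact absurd h (Nat.not_even_iff_odd.2 hro)
        · exact absurd hse (Nat.not_even_iff_odd.2 h)
        · left; rw [h]
        · right; exact hQX h.2
      refine core r s d hrs hs β hβ F G hF hG P Q hP hQ hFP hGQ |l1| |l2| σ ε1 c1 c2 K1 K2 hσ hε1 ha1 ha2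
        hc1 hc2 φ1 (fun t => ε1 * ε2 * φ2 t) h1 ?_ e1 ?_ hcond'
      · intro t t' htt
        have i := h2 t t' htt
        have : ε1 * (ε1 * ε2 * φ2 t' - ε1 * ε2 * φ2 t) = ε2 * (φ2 t' - φ2 t) := by
          have : ε1 * ε1 = 1 := by rcases hε1 with rfl | rfl <;> norm_num
          linear_combination ε2 * (φ2 t' - φ2 t) * this
        rw [this]; exact i
      · intro t
        rw [← e2 t, hGQ _ _ hσ', hGQ _ _ hσ', mul_pow]
        have : (ε1 * ε2) ^ s = 1 := by
          rcases hε1 with rfl | rfl <;> rcases hε2 with rfl | rfl <;> simp [hse.neg_pow]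
        rw [this, one_mul]
    · refine core r s d hrs hs β hβ F G hF hG P Q hP hQ hFP hGQ |l1| |l1| σ ε1 c1 c1 K1 K1 hσ hε1 ha1 ha1
        hc1 hc1 φ1 (fun t => -φ1 (-t)) h1 ?_ e1 ?_ (Or.inl rfl)
      · intro t t' htt
        have i := h1 (-t') (-t) (by linarith)
        constructor <;> nlinarith [i.1, i.2]
      · intro t
        have i := e1 (-t)
        rw [hGQ _ _ hσ, hFP _ _ (Or.inl rfl)] at i
        rw [hGQ _ _ hσ', hFP _ _ (Or.inr rfl), hro.neg_pow, hro.neg_pow, hso.neg_pow, neg_pow σ d]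
        rw [one_pow, one_mul, one_pow, one_mul, hso.neg_pow] at i
        rw [one_pow, neg_mul_neg, neg_one_mul, ← i]; ring
end
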